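/- For each even natural number k, Σ'_{|d| ≤ X} L(1/2, χ_d)^k ≫_k X (log X)^{k(k+1)/2}, where the sum is over fundamental discriminants d with |d| ≤ X and χ_d is the associated real primitive quadratic character. -/

import Mathlib

open Filter
open scoped Classical

/-- `d` is a fundamental discriminant: either `d ≡ 1 (mod 4)` and `d` is squarefree,
or `d = 4m` with `m` squarefree and `m ≡ 2, 3 (mod 4)`; we exclude the trivial
discriminant `d = 1`. -/
def IsFundamentalDiscriminant (d : ℤ) : Prop :=
  d ≠ 1 ∧ ((d % 4 = 1 ∧ Squarefree d) ∨
    (d % 4 = 0 ∧ Squarefree (d / 4) ∧ (d / 4 % 4 = 2 ∨ d / 4 % 4 = 3)))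

theorem IsFundamentalDiscriminant.natAbs_ne_zero {d : ℤ}
    (h : IsFundamentalDiscriminant d) : NeZero d.natAbs := by
  constructor
  intro h0
  have hd0 : d = 0 := Int.natAbs_eq_zero.mp h0
  subst hd0
  rcases h with ⟨-, ⟨h3, -⟩ | ⟨-, h4, -⟩⟩
  · norm_num at h3
  · norm_num at h4

/-!
Following Rudnick and Soundararajan, restrict to the discriminants `d = 1 + 8 j > 0`: since `k` is
even and `L(1/2, χ_d)` is real, the others contribute nonnegative terms. As the Gauss sum of `χ_d`
is `√d`, found by comparing the two degenerations of Jacobi's theta function near `0` and near the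
cusp `2 / d`, the functional equation has root number `1` and `L(1/2, χ_d)` is a positive constant
times the rapidly converging series `F(d) = ∑ (n / d) U(n)`.

Let `A(d) = ∑ (n / d) / √n` over the odd squarefree `n ≤ x`, with `x` a small power of `X`.
Hölder's inequality gives `(∑ F A^(k-1))^k ≤ ∑ F^k * (∑ A^k)^(k-1)`, so that it suffices to bound
`∑ F A^(k-1)` below by `X (log X)^(k(k-1)/2 + 1)` and `∑ A^k` above by `X (log X)^(k(k-1)/2)`. In
both moments, the terms where the product of the summation variables is not a square are negligible
by the Pólya–Vinogradov inequality; the condition that `d` be squarefree is sieved in the first and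
dropped by positivity in the second. The other terms are described by the Venn diagram of the prime
factors of the variables: in the main term each prime divides exactly two of the `k` variables,
whence the exponent `k(k-1)/2`, except that the variable of `F` in the first moment may also contain
a square; larger regions of the diagram give convergent sums.
-/

namespace SymplecticMoments

section PeriodicTheta

open Complex
open scoped ZMod Real

variable {N : ℕ} [NeZero N]

theorem hasSum_int_of_residue_classes {E : Type*} [AddCommMonoid E] [TopologicalSpace E]
    [ContinuousAdd E] {f : ℤ → E} {a : ZMod N → E}
    (h : ∀ j : ZMod N, HasSum (fun m : ℤ ↦ f (j.val + N * m)) (a j)) :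
    HasSum f (∑ j, a j) := by
  have hclass (j : ZMod N) : HasSum (fun n : ℤ ↦ if (n : ZMod N) = j then f n else 0) (a j) := by
    have hinj : Function.Injective fun m : ℤ ↦ (j.val + N * m : ℤ) := fun m m' hm ↦ by
      simpa [NeZero.ne N] using hm
    rw [← hinj.hasSum_iff]
    · simpa [Function.comp_def] using h j
    · intro n hn
      refine if_neg fun hnj ↦ hn ⟨n / N, ?_⟩
      rw [← hnj, ZMod.val_intCast]
      exact Int.emod_add_mul_ediv n N
  simpa using hasSum_sum fun j (_ : j ∈ Finset.univ) ↦ hclass j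

/-- The theta series `∑ Φ(n) exp(πi n² τ)` of an `N`-periodic coefficient function `Φ`. -/
noncomputable def periodicTheta (Φ : ZMod N → ℂ) (τ : ℂ) : ℂ :=
  ∑' n : ℤ, Φ n * cexp (π * I * n ^ 2 * τ)

theorem stdAddChar_mul_intCast (j : ZMod N) (n : ℤ) :
    ZMod.stdAddChar (-(j * (n : ZMod N))) = cexp (2 * π * I * n * (-(j.val / N))) := by
  have hj : -(j * (n : ZMod N)) = ((-(j.val * n) : ℤ) : ZMod N) := by simp
  rw [hj, ZMod.stdAddChar_coe]
  congr 1
  push_cast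
  ring

theorem hasSum_dft_mul_cexp (Φ : ZMod N → ℂ) {τ : ℂ} (hτ : 0 < τ.im) :
    HasSum (fun n : ℤ ↦ 𝓕 Φ n * cexp (π * I * n ^ 2 * τ))
      (∑ j, Φ j * jacobiTheta₂ (-(j.val / N)) τ) := by
  refine (hasSum_sum fun j _ ↦ (hasSum_jacobiTheta₂_term _ hτ).mul_left (Φ j)).congr_fun fun n ↦ ?_
  simp only [ZMod.dft_apply, smul_eq_mul, Finset.sum_mul, jacobiTheta₂_term, Complex.exp_add,
    stdAddChar_mul_intCast]
  exact Finset.sum_congr rfl fun j _ ↦ by ring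

theorem summable_mul_cexp (Φ : ZMod N → ℂ) {τ : ℂ} (hτ : 0 < τ.im) :
    Summable fun n : ℤ ↦ Φ n * cexp (π * I * n ^ 2 * τ) := by
  obtain ⟨Ψ, rfl⟩ := ZMod.dft.surjective Φ
  exact (hasSum_dft_mul_cexp Ψ hτ).summable

theorem periodicTheta_dft (Φ : ZMod N → ℂ) {τ : ℂ} (hτ : 0 < τ.im) :
    periodicTheta (𝓕 Φ) τ = ∑ j, Φ j * jacobiTheta₂ (-(j.val / N)) τ :=
  (hasSum_dft_mul_cexp Φ hτ).tsum_eq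

theorem continuousOn_periodicTheta (Φ : ZMod N → ℂ) :
    ContinuousOn (periodicTheta Φ) {τ | 0 < τ.im} := by
  obtain ⟨Ψ, rfl⟩ := ZMod.dft.surjective Φ
  refine ContinuousOn.congr (f := fun τ ↦ ∑ j, Ψ j * jacobiTheta₂ (-(j.val / N)) τ) ?_
    fun τ hτ ↦ periodicTheta_dft Ψ hτ
  exact continuousOn_finsetSum _ fun j _ τ hτ ↦ ((differentiableAt_jacobiTheta₂_snd _
    hτ).continuousAt.const_mul _).continuousWithinAt

theorem norm_cexp_pi_mul_sq (n : ℤ) (τ : ℂ) :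
    ‖cexp (π * I * n ^ 2 * τ)‖ = Real.exp (-(π * n ^ 2 * τ.im)) := by
  rw [Complex.norm_exp]
  have h : (π * I * n ^ 2 * τ : ℂ) = ((π * n ^ 2 : ℝ) : ℂ) * (I * τ) := by push_cast; ring
  rw [h, re_ofReal_mul, I_mul_re, mul_neg]

theorem tendsto_periodicTheta {α : Type*} {l : Filter α} (Φ : ZMod N → ℂ) {τ : α → ℂ}
    (hτ : Tendsto (fun t ↦ (τ t).im) l atTop) :
    Tendsto (fun t ↦ periodicTheta Φ (τ t)) l (nhds (Φ 0)) := by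
  have hterm (n : ℤ) : Tendsto (fun t ↦ Φ n * cexp (π * I * n ^ 2 * τ t)) l
      (nhds (if n = 0 then Φ 0 else 0)) := by
    split_ifs with hn
    · simp [hn, tendsto_const_nhds]
    · rw [tendsto_zero_iff_norm_tendsto_zero]
      simp only [norm_mul, norm_cexp_pi_mul_sq]
      rw [← mul_zero ‖Φ n‖]
      refine (Real.tendsto_exp_neg_atTop_nhds_zero.comp (hτ.const_mul_atTop ?_)).const_mul _
      positivity
  have hbound : ∀ᶠ t in l, ∀ n : ℤ,
      ‖Φ n * cexp (π * I * n ^ 2 * τ t)‖ ≤ ‖Φ n * cexp (π * I * n ^ 2 * I)‖ := by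
    filter_upwards [hτ.eventually_ge_atTop 1] with t ht n
    simp only [norm_mul, norm_cexp_pi_mul_sq]
    gcongr
    simpa using ht
  have hsum := summable_mul_cexp Φ (τ := I) (by simp)
  simpa [periodicTheta] using tendsto_tsum_of_dominated_convergence hsum.norm hterm hbound

theorem neg_one_div_im_pos {τ : ℂ} (hτ : 0 < τ.im) : 0 < (-1 / τ).im := by
  have hτ0 : τ ≠ 0 := by rintro rfl; simp at hτ
  rw [neg_div, neg_im, one_div, inv_im, neg_div, neg_neg]
  exact div_pos hτ (normSq_pos.mpr hτ0)

theorem periodicTheta_dft_eq (Φ : ZMod N → ℂ) {τ : ℂ} (hτ : 0 < τ.im) :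
    periodicTheta (𝓕 Φ) τ =
      1 / (-I * τ) ^ (1 / 2 : ℂ) * periodicTheta Φ (-1 / (N ^ 2 * τ)) := by
  have hN : (N : ℂ) ≠ 0 := NeZero.ne _
  have hτ0 : τ ≠ 0 := by rintro rfl; simp at hτ
  have him := neg_one_div_im_pos hτ
  have hclass (j : ZMod N) :
      HasSum (fun m : ℤ ↦ Φ ((j.val + N * m : ℤ) : ZMod N) *
          cexp (π * I * ((j.val + N * m : ℤ) : ℂ) ^ 2 * (-1 / (N ^ 2 * τ))))
        (Φ j * (cexp (-π * I * (-(j.val / N)) ^ 2 / τ) *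
          jacobiTheta₂ (-(j.val / N) / τ) (-1 / τ))) := by
    refine (((hasSum_jacobiTheta₂_term _ him).mul_left _).mul_left (Φ j)).congr_fun fun m ↦ ?_
    rw [jacobiTheta₂_term, ← Complex.exp_add]
    congr 2
    · simp
    · push_cast
      field_simp
      ring
  rw [periodicTheta_dft Φ hτ, periodicTheta, (hasSum_int_of_residue_classes
    (f := fun n : ℤ ↦ Φ n * cexp (π * I * n ^ 2 * (-1 / (N ^ 2 * τ)))) hclass).tsum_eq,
    Finset.mul_sum]
  refine Finset.sum_congr rfl fun j _ ↦ ?_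
  rw [jacobiTheta₂_functional_equation]
  ring

theorem tendsto_sqrt_mul_periodicTheta {α : Type*} {l : Filter α} (Ψ : ZMod N → ℂ) {τ : α → ℂ}
    (hpos : ∀ᶠ t in l, 0 < (τ t).im) (hτ : Tendsto (fun t ↦ (-1 / τ t).im) l atTop) :
    Tendsto (fun t ↦ (-I * τ t) ^ (1 / 2 : ℂ) * periodicTheta Ψ (τ t)) l
      (nhds ((∑ x, Ψ x) / N)) := by
  obtain ⟨Φ, rfl⟩ := ZMod.dft.surjective Ψ
  have hmean : Φ 0 = (∑ x, 𝓕 Φ x) / N := by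
    have h := ZMod.invDFT_apply (𝓕 Φ) 0
    rw [ZMod.dft.symm_apply_apply] at h
    simp [h, div_eq_inv_mul]
  have hN : (0 : ℝ) < 1 / N ^ 2 := by have := NeZero.pos N; positivity
  have him : Tendsto (fun t ↦ (-1 / (N ^ 2 * τ t)).im) l atTop := by
    refine (hτ.const_mul_atTop hN).congr fun t ↦ ?_
    rw [← im_ofReal_mul]
    congr 1
    push_cast
    ring
  rw [← hmean]
  refine (tendsto_periodicTheta Φ him).congr' ?_
  filter_upwards [hpos] with t ht
  have hne : (-I * τ t) ^ (1 / 2 : ℂ) ≠ 0 := by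
    have : τ t ≠ 0 := by rintro h; simp [h] at ht
    simp [this]
  rw [periodicTheta_dft_eq Φ ht, ← mul_assoc, mul_one_div_cancel hne, one_mul]

end PeriodicTheta

section QuadraticGaussSum

open Complex
open scoped Real

theorem periodicTheta_stdAddChar_sq (N : ℕ) [NeZero N] (τ : ℂ) :
    periodicTheta (fun x : ZMod N ↦ ZMod.stdAddChar (x ^ 2)) τ = jacobiTheta₂ 0 (2 / N + τ) := by
  refine tsum_congr fun n ↦ ?_
  beta_reduce
  rw [jacobiTheta₂_term, show (n : ZMod N) ^ 2 = ((n ^ 2 : ℤ) : ZMod N) by simp,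
    ZMod.stdAddChar_coe, ← Complex.exp_add]
  congr 1
  push_cast
  ring

theorem cexp_neg_pi_div_two_mul_sq (N : ℕ) (n : ℤ) :
    cexp (-π * I * n ^ 2 * N / 2) = if (n : ZMod 2) = 0 then 1 else (-I) ^ N := by
  have hI : (-I) ^ N = cexp (-π * I * N / 2) := by
    rw [← exp_neg_pi_div_two_mul_I, ← Complex.exp_nat_mul]
    congr 1
    ring
  split_ifs with hn
  · obtain ⟨m, rfl⟩ := ZMod.intCast_eq_zero_iff_even.mp hn
    rw [Complex.exp_eq_one_iff]
    refine ⟨-(m ^ 2 * N), ?_⟩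
    push_cast
    ring
  · obtain ⟨m, rfl⟩ := Int.not_even_iff_odd.mp (mt ZMod.intCast_eq_zero_iff_even.mpr hn)
    rw [hI, Complex.exp_eq_exp_iff_exists_int]
    refine ⟨-((m ^ 2 + m) * N), ?_⟩
    push_cast
    ring

theorem periodicTheta_two (N : ℕ) (τ : ℂ) :
    periodicTheta (fun y : ZMod 2 ↦ if y = 0 then 1 else (-I) ^ N) τ =
      jacobiTheta₂ 0 (-N / 2 + τ) := by
  refine tsum_congr fun n ↦ ?_
  beta_reduce
  rw [jacobiTheta₂_term, ← cexp_neg_pi_div_two_mul_sq, ← Complex.exp_add]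
  congr 1
  ring

theorem one_add_I_mul_ne_zero (x : ℝ) : (1 + I * x : ℂ) ≠ 0 := fun h ↦ by
  simpa using congrArg Complex.re h

theorem ofReal_mul_cpow {x : ℝ} (hx : 0 < x) {z : ℂ} (hz : z ≠ 0) (s : ℂ) :
    ((x : ℂ) * z) ^ s = (x : ℂ) ^ s * z ^ s := by
  have hx' : (x : ℂ) ≠ 0 := by exact_mod_cast hx.ne'
  rw [cpow_def_of_ne_zero (mul_ne_zero hx' hz), cpow_def_of_ne_zero hx', cpow_def_of_ne_zero hz,
    ← Complex.exp_add, log_ofReal_mul hx hz, ofReal_log hx.le, add_mul]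

theorem neg_two_I_div_cpow_half {N : ℕ} (hN : 0 < N) :
    (-I * (2 / N) : ℂ) ^ (1 / 2 : ℂ) = (1 - I) / √N := by
  have hsq : (-I * (2 / N) : ℂ) = ((1 - I) / √N) ^ 2 := by
    have hss : (√N : ℂ) ^ 2 = N := by exact_mod_cast Real.sq_sqrt N.cast_nonneg
    rw [div_pow, hss, sub_sq, I_sq]
    ring
  have hre : 0 < ((1 - I) / √N : ℂ).re := by
    rw [div_ofReal_re]
    simp [hN]
  have harg := abs_lt.mp (abs_arg_lt_pi_div_two_iff.mpr (Or.inl hre))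
  rw [hsq, one_div]
  exact_mod_cast pow_cpow_nat_inv two_ne_zero (by exact_mod_cast harg.1)
    (by exact_mod_cast harg.2.le)

/-- The point `w` of the upper half plane for which `τ ↦ -1 / τ` sends `2 / N + i ε` to
`-N / 2 + w`; it links the theta series attached to the cusps `2 / N` and `-N / 2`. -/
noncomputable def reflectedPoint (N : ℕ) (ε : ℝ) : ℂ :=
  (N ^ 2 * (I * ε) / 4) / (1 + I * (N * ε / 2 : ℝ))

theorem periodicTheta_reflectedPoint (N : ℕ) [NeZero N] (ε : ℝ) :
    periodicTheta (fun y : ZMod 2 ↦ if y = 0 then 1 else (-I) ^ N) (reflectedPoint N ε) =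
      (-I * (2 / N + I * ε)) ^ (1 / 2 : ℂ) *
        periodicTheta (fun x : ZMod N ↦ ZMod.stdAddChar (x ^ 2)) (I * ε) := by
  have hN : (N : ℂ) ≠ 0 := NeZero.ne _
  have hP := one_add_I_mul_ne_zero (N * ε / 2)
  have hτ : (2 / N + I * ε : ℂ) = (2 / N) * (1 + I * (N * ε / 2 : ℝ)) := by
    push_cast
    field_simp
  have hτ0 : (2 / N + I * ε : ℂ) ≠ 0 := hτ ▸ mul_ne_zero (div_ne_zero two_ne_zero hN) hP
  have hinv : -(N : ℂ) / 2 + reflectedPoint N ε = -1 / (2 / N + I * ε) := by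
    rw [hτ, reflectedPoint]
    field_simp
    push_cast
    ring
  rw [periodicTheta_two, periodicTheta_stdAddChar_sq, hinv, jacobiTheta₂_functional_equation 0
    (2 / N + I * ε)]
  simp [field, hτ0]

theorem neg_one_div_reflectedPoint_im (N : ℕ) [NeZero N] {ε : ℝ} (hε : 0 < ε) :
    (-1 / reflectedPoint N ε).im = 4 / N ^ 2 * ε⁻¹ := by
  have hN : (N : ℂ) ≠ 0 := NeZero.ne _
  have hεC : (ε : ℂ) ≠ 0 := by exact_mod_cast hε.ne'
  have h : -1 / reflectedPoint N ε =
      ((4 / N ^ 2 * ε⁻¹ : ℝ) : ℂ) * I + ((-2 / N : ℝ) : ℂ) := by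
    have hP := one_add_I_mul_ne_zero (N * ε / 2)
    rw [reflectedPoint]
    push_cast at hP ⊢
    field_simp
    linear_combination -8 * I_sq
  rw [h, add_im, ofReal_im, im_ofReal_mul, I_im, mul_one, add_zero]

theorem reflectedPoint_im_pos (N : ℕ) [NeZero N] {ε : ℝ} (hε : 0 < ε) :
    0 < (reflectedPoint N ε).im := by
  have h : 0 < (-1 / reflectedPoint N ε).im := by
    rw [neg_one_div_reflectedPoint_im N hε]
    have := NeZero.pos N
    positivity
  simpa using neg_one_div_im_pos h

theorem neg_I_mul_reflectedPoint_cpow_half (N : ℕ) [NeZero N] {ε : ℝ} (hε : 0 < ε) :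
    (-I * reflectedPoint N ε) ^ (1 / 2 : ℂ) =
      N / 2 * (ε : ℂ) ^ (1 / 2 : ℂ) * (1 / (1 + I * (N * ε / 2 : ℝ))) ^ (1 / 2 : ℂ) := by
  have hN : (0 : ℝ) < N := by exact_mod_cast NeZero.pos N
  have hP := one_div_ne_zero (one_add_I_mul_ne_zero (N * ε / 2))
  have h : -I * reflectedPoint N ε =
      (((N / 2) ^ 2 : ℝ) : ℂ) * ((ε : ℂ) * (1 / (1 + I * (N * ε / 2 : ℝ)))) := by
    rw [reflectedPoint]
    push_cast
    linear_combination (-(N : ℂ) ^ 2 * ε / 4 / (1 + I * (N * ε / 2))) * I_sq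
  have hsq : (((N / 2) ^ 2 : ℝ) : ℂ) ^ (1 / 2 : ℂ) = N / 2 := by
    rw [show (1 / 2 : ℂ) = ((1 / 2 : ℝ) : ℂ) by norm_num, ← ofReal_cpow (by positivity),
      ← Real.sqrt_eq_rpow, Real.sqrt_sq (by positivity)]
    push_cast
    rfl
  rw [h, ofReal_mul_cpow (by positivity) (mul_ne_zero (by exact_mod_cast hε.ne') hP), hsq,
    ofReal_mul_cpow hε hP, mul_assoc]

theorem tendsto_reflectedPoint_cpow_ratio (N : ℕ) [NeZero N] :
    Tendsto (fun ε : ℝ ↦ (-I * (2 / N + I * ε)) ^ (1 / 2 : ℂ) *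
        (1 / (1 + I * (N * ε / 2 : ℝ)) : ℂ) ^ (1 / 2 : ℂ))
      (nhds 0) (nhds ((1 - I) / √N)) := by
  have hslit : -I * (2 / N + I * (0 : ℝ)) ∈ slitPlane := by
    right
    have h : -I * (2 / N + I * (0 : ℝ)) = ((-2 / N : ℝ) : ℂ) * I := by push_cast; ring
    rw [h, im_ofReal_mul, I_im, mul_one]
    exact div_ne_zero (by norm_num) (NeZero.ne _)
  have hcont : ContinuousAt (fun ε : ℝ ↦ (-I * (2 / N + I * ε)) ^ (1 / 2 : ℂ) *
      (1 / (1 + I * (N * ε / 2 : ℝ)) : ℂ) ^ (1 / 2 : ℂ)) 0 := by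
    refine ContinuousAt.mul (ContinuousAt.cpow (by fun_prop) continuousAt_const hslit) ?_
    exact ContinuousAt.cpow (continuousAt_const.div (by fun_prop) (one_add_I_mul_ne_zero _))
      continuousAt_const (by simp)
  convert hcont.tendsto using 2
  rw [← neg_two_I_div_cpow_half (NeZero.pos N)]
  simp

theorem tendsto_sqrt_mul_periodicTheta_I_mul {N : ℕ} [NeZero N] (Ψ : ZMod N → ℂ) :
    Tendsto (fun ε : ℝ ↦ (ε : ℂ) ^ (1 / 2 : ℂ) * periodicTheta Ψ (I * ε))
      (nhdsWithin 0 (Set.Ioi 0)) (nhds ((∑ x, Ψ x) / N)) := by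
  refine (tendsto_sqrt_mul_periodicTheta (l := nhdsWithin (0 : ℝ) (Set.Ioi 0))
    (τ := fun ε : ℝ ↦ I * ε) Ψ ?_ (tendsto_inv_nhdsGT_zero.congr fun ε ↦ ?_)).congr fun ε ↦ ?_
  · filter_upwards [self_mem_nhdsWithin] with ε hε using by simpa using hε
  · rw [show -1 / (I * ε) = ((ε⁻¹ : ℝ) : ℂ) * I by
      push_cast
      rw [neg_div, one_div, mul_inv, inv_I]
      ring, im_ofReal_mul, I_im, mul_one]
  · rw [← mul_assoc, neg_mul, I_mul_I, neg_neg, one_mul]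

theorem tendsto_sqrt_mul_periodicTheta_reflectedPoint (N : ℕ) [NeZero N] (Ψ : ZMod 2 → ℂ) :
    Tendsto (fun ε : ℝ ↦ (-I * reflectedPoint N ε) ^ (1 / 2 : ℂ) *
        periodicTheta Ψ (reflectedPoint N ε))
      (nhdsWithin 0 (Set.Ioi 0)) (nhds ((∑ x, Ψ x) / 2)) := by
  have hN : (0 : ℝ) < 4 / N ^ 2 := by have := NeZero.pos N; positivity
  refine tendsto_sqrt_mul_periodicTheta Ψ ?_
    ((tendsto_inv_nhdsGT_zero.const_mul_atTop hN).congr' ?_)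
  · filter_upwards [self_mem_nhdsWithin] with ε hε using reflectedPoint_im_pos N hε
  · filter_upwards [self_mem_nhdsWithin] with ε hε using
      (neg_one_div_reflectedPoint_im N hε).symm

theorem sum_stdAddChar_sq (N : ℕ) [NeZero N] :
    ∑ x : ZMod N, (ZMod.stdAddChar (x ^ 2) : ℂ) = √N * (1 + (-I) ^ N) / (1 - I) := by
  have hN : (N : ℂ) ≠ 0 := NeZero.ne _
  have hsqrt : (√N : ℂ) ≠ 0 := by simpa using NeZero.ne N
  have hI : (1 - I : ℂ) ≠ 0 := fun h ↦ by simpa using congrArg Complex.re h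
  have hleft := (((tendsto_reflectedPoint_cpow_ratio N).mono_left nhdsWithin_le_nhds).mul
    (tendsto_sqrt_mul_periodicTheta_I_mul
      fun x : ZMod N ↦ (ZMod.stdAddChar (x ^ 2) : ℂ))).const_mul (N / 2 : ℂ)
  have hright := tendsto_sqrt_mul_periodicTheta_reflectedPoint N
    fun y ↦ if y = 0 then 1 else (-I) ^ N
  have hlim := tendsto_nhds_unique (hright.congr' ?_) hleft
  · rw [show ∑ y : ZMod 2, (if y = 0 then 1 else (-I) ^ N) = 1 + (-I) ^ N from
      Fin.sum_univ_two _] at hlim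
    field_simp at hlim ⊢
    linear_combination -hlim
  · filter_upwards [self_mem_nhdsWithin] with ε hε
    rw [periodicTheta_reflectedPoint, neg_I_mul_reflectedPoint_cpow_half N hε]
    ring

end QuadraticGaussSum

section QuadraticCharacters

/-- The Jacobi symbol `(· / r)` as a Dirichlet character modulo `r`. -/
noncomputable def jacobiChar (r : ℕ) [NeZero r] : DirichletCharacter ℂ r where
  toFun a := (jacobiSym a.val r : ℂ)
  map_one' := by
    rw [← Int.cast_one (R := ZMod r), ZMod.val_intCast, ← jacobiSym.mod_left, jacobiSym.one_left,
      Int.cast_one]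
  map_mul' a b := by
    rw [ZMod.val_mul, ← Int.cast_mul, ← jacobiSym.mul_left, ← Int.natCast_mul,
      jacobiSym.mod_left ((a.val * b.val : ℕ) : ℤ) r, Int.natCast_mod]
  map_nonunit' a ha := by
    rw [← ZMod.natCast_zmod_val a, ZMod.isUnit_iff_coprime] at ha
    rw [Int.cast_eq_zero, jacobiSym.eq_zero_iff_not_coprime, Int.gcd_natCast_natCast]
    exact ha

theorem jacobiChar_intCast (r : ℕ) [NeZero r] (n : ℤ) : jacobiChar r n = (jacobiSym n r : ℂ) := by
  change (jacobiSym (n : ZMod r).val r : ℂ) = _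
  rw [ZMod.val_intCast, ← jacobiSym.mod_left]

theorem jacobiChar_natCast (r : ℕ) [NeZero r] (n : ℕ) : jacobiChar r n = (jacobiSym n r : ℂ) := by
  simpa using jacobiChar_intCast r n

theorem jacobiChar_sq (r : ℕ) [NeZero r] : jacobiChar r ^ 2 = 1 := by
  ext u
  have hu : (u : ZMod r).val.Coprime r := by
    rw [← ZMod.isUnit_iff_coprime, ZMod.natCast_zmod_val]
    exact u.isUnit
  rw [MulChar.pow_apply_coe, MulChar.one_apply_coe, ← ZMod.natCast_zmod_val (u : ZMod r),
    jacobiChar_natCast, ← Int.cast_pow, jacobiSym.sq_one (Int.gcd_natCast_natCast .. ▸ hu),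
    Int.cast_one]

theorem isPrimitive_of_forall_prime {N : ℕ} [NeZero N] {χ : DirichletCharacter ℂ N}
    (h : ∀ p m : ℕ, p.Prime → N = p * m → ¬ χ.FactorsThrough m) : χ.IsPrimitive := by
  rw [DirichletCharacter.isPrimitive_def]
  by_contra hne
  obtain ⟨e, he⟩ := χ.conductor_dvd_level
  obtain ⟨p, hp, e', rfl⟩ := Nat.exists_prime_and_dvd (n := e) (by rintro rfl; omega)
  have hN : N = p * (χ.conductor * e') := by rw [mul_left_comm]; exact he
  exact h p _ hp hN ((DirichletCharacter.mem_conductorSet_iff_conductor_dvd _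
    (Dvd.intro_left p hN.symm)).mpr (dvd_mul_right _ _))

theorem eq_one_of_forall_prime {N : ℕ} [NeZero N] (hN : Squarefree N) {χ : DirichletCharacter ℂ N}
    (h : ∀ p m : ℕ, p.Prime → N = p * m → χ.FactorsThrough m) : χ = 1 := by
  rw [DirichletCharacter.eq_one_iff_conductor_eq_one]
  by_contra hne
  obtain ⟨p, hp, hpc⟩ := Nat.exists_prime_and_dvd hne
  obtain ⟨m, hm⟩ := hpc.trans χ.conductor_dvd_level
  have hpm : p ∣ m := hpc.trans (DirichletCharacter.conductor_dvd_of_mem_conductorSet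
    (χ := χ) (h p m hp hm))
  exact hp.not_isUnit (hN p (hm ▸ Nat.mul_dvd_mul_left p hpm))

theorem exists_modEq_one_jacobiSym_eq_neg_one {p m : ℕ} (hp : p.Prime) (hp2 : p ≠ 2) (hm : m ≠ 0)
    (hpm : p.Coprime m) : ∃ a : ℕ, a ≡ 1 [MOD m] ∧ jacobiSym a (p * m) = -1 := by
  have : Fact p.Prime := ⟨hp⟩
  obtain ⟨b, hb⟩ := quadraticChar_exists_neg_one (F := ZMod p) (by rwa [ZMod.ringChar_zmod_n])
  obtain ⟨a, hap, ham⟩ := Nat.chineseRemainder hpm b.val 1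
  have hJp : jacobiSym a p = -1 := by
    have hab : ((a : ℤ) : ZMod p) = b := by
      simpa using (ZMod.natCast_eq_natCast_iff _ _ _).mpr hap
    rw [← jacobiSym.legendreSym.to_jacobiSym, legendreSym, hab, hb]
  have hJm : jacobiSym a m = 1 := by
    rw [← jacobiSym.one_left m]
    exact jacobiSym.mod_left' (by exact_mod_cast ham)
  exact ⟨a, ham, by rw [jacobiSym.mul_right' _ hp.ne_zero hm, hJp, hJm, mul_one]⟩

theorem jacobiChar_isPrimitive {r : ℕ} [NeZero r] (hodd : Odd r) (hr : Squarefree r) :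
    (jacobiChar r).IsPrimitive := by
  refine isPrimitive_of_forall_prime fun p m hp hrpm hfac ↦ ?_
  obtain ⟨a, ham, hJ⟩ := exists_modEq_one_jacobiSym_eq_neg_one hp
    (by rintro rfl; exact absurd hodd (by simp [hrpm])) (by rintro rfl; simp_all)
    (Nat.coprime_of_squarefree_mul (hrpm ▸ hr))
  rw [← hrpm] at hJ
  have hcop : a.Coprime r := by
    by_contra hcop
    have hJ0 := jacobiSym.eq_zero_iff_not_coprime.mpr 
      (by rwa [Int.gcd_natCast_natCast])
    omega
  have hker := (DirichletCharacter.factorsThrough_iff_ker_unitsMap hfac.dvd).mp hfac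
  have hmem : ZMod.unitOfCoprime a hcop ∈ (ZMod.unitsMap hfac.dvd).ker := by
    rw [MonoidHom.mem_ker]
    ext
    rw [ZMod.unitsMap_val, ZMod.coe_unitOfCoprime, ZMod.cast_natCast hfac.dvd]
    simpa using (ZMod.natCast_eq_natCast_iff _ _ _).mpr ham
  have happly := congrArg Units.val (MonoidHom.mem_ker.mp (hker hmem))
  rw [MulChar.coe_toUnitHom, ZMod.coe_unitOfCoprime, jacobiChar_natCast, hJ] at happly
  norm_num at happly

theorem isCyclic_ker_unitsMap {N p m : ℕ} [NeZero N] (hp : p.Prime) (hN : N = p * m)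
    (hpm : p.Coprime m) : IsCyclic (ZMod.unitsMap (Dvd.intro_left p hN.symm)).ker := by
  have : Fact p.Prime := ⟨hp⟩
  have hmN : m ∣ N := Dvd.intro_left p hN.symm
  have hpN : p ∣ N := Dvd.intro m hN.symm
  refine isCyclic_of_injective ((ZMod.unitsMap hpN).comp (ZMod.unitsMap hmN).ker.subtype) ?_
  rw [injective_iff_map_eq_one]
  rintro ⟨u, hu⟩ hup
  obtain ⟨a, ha⟩ := ZMod.natCast_zmod_surjective (u : ZMod N)
  have hmod {q : ℕ} (hq : q ∣ N) (h : ZMod.unitsMap hq u = 1) : a ≡ 1 [MOD q] := by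
    have hval := congrArg Units.val h
    rw [ZMod.unitsMap_val, ← ha, ZMod.cast_natCast hq] at hval
    exact (ZMod.natCast_eq_natCast_iff _ _ _).mp (by simpa using hval)
  have haN : a ≡ 1 [MOD N] :=
    hN ▸ (Nat.modEq_and_modEq_iff_modEq_mul hpm).mp ⟨hmod hpN hup, hmod hmN hu⟩
  ext
  simpa [ha] using (ZMod.natCast_eq_natCast_iff _ _ _).mpr haN

theorem ker_unitsMap_le_ker_of_generator {N m : ℕ} {hm : m ∣ N} {χ : DirichletCharacter ℂ N}
    {g : (ZMod.unitsMap hm).ker} (hg : ∀ u, u ∈ Subgroup.zpowers g)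
    (h : χ.toUnitHom (g : (ZMod N)ˣ) = 1) : (ZMod.unitsMap hm).ker ≤ χ.toUnitHom.ker := by
  intro u hu
  obtain ⟨k, hk⟩ := hg ⟨u, hu⟩
  have huk : u = (g : (ZMod N)ˣ) ^ k := by simpa using (congrArg Subtype.val hk).symm
  rw [MonoidHom.mem_ker, huk, map_zpow, h, one_zpow]

theorem toUnitHom_generator_eq_neg_one {N m : ℕ} [NeZero N] {hm : m ∣ N} (hmN : m < N)
    {χ : DirichletCharacter ℂ N} (hχ : χ.IsPrimitive) (hχ2 : χ ^ 2 = 1)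
    {g : (ZMod.unitsMap hm).ker} (hg : ∀ u, u ∈ Subgroup.zpowers g) :
    χ.toUnitHom (g : (ZMod N)ˣ) = -1 := by
  have hsq : χ (g : (ZMod N)ˣ) ^ 2 = 1 := by
    rw [← MulChar.pow_apply_coe, hχ2, MulChar.one_apply_coe]
  rcases sq_eq_one_iff.mp hsq with h | h
  · have hker := ker_unitsMap_le_ker_of_generator (χ := χ) hg
      (by ext; rw [MulChar.coe_toUnitHom, h, Units.val_one])
    have hdvd := DirichletCharacter.conductor_dvd_of_mem_conductorSet (χ := χ)
      ((DirichletCharacter.factorsThrough_iff_ker_unitsMap hm).mpr hker)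
    rw [(DirichletCharacter.isPrimitive_def _).mp hχ] at hdvd
    exact absurd (Nat.le_of_dvd (Nat.pos_of_dvd_of_pos hm (NeZero.pos N)) hdvd) (by omega)
  · ext
    rw [MulChar.coe_toUnitHom, h, Units.val_neg, Units.val_one]

theorem eq_of_isPrimitive_of_sq_eq_one {N : ℕ} [NeZero N] (hN : Squarefree N)
    {χ ψ : DirichletCharacter ℂ N} (hχ : χ.IsPrimitive) (hψ : ψ.IsPrimitive)
    (hχ2 : χ ^ 2 = 1) (hψ2 : ψ ^ 2 = 1) : χ = ψ := by
  suffices h : χ * ψ = 1 by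
    rw [← mul_one χ, ← hψ2, sq, ← mul_assoc, h, one_mul]
  refine eq_one_of_forall_prime hN fun p m hp hNpm ↦ ?_
  have hm : m ∣ N := Dvd.intro_left p hNpm.symm
  have hmN : m < N := by
    have := Nat.pos_of_dvd_of_pos hm (NeZero.pos N)
    nlinarith [hp.two_le]
  have hcyc := isCyclic_ker_unitsMap hp hNpm (Nat.coprime_of_squarefree_mul (hNpm ▸ hN))
  obtain ⟨g, hg⟩ := hcyc.exists_generator
  refine (DirichletCharacter.factorsThrough_iff_ker_unitsMap hm).mpr
    (ker_unitsMap_le_ker_of_generator hg ?_)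
  have hχg := congrArg Units.val (toUnitHom_generator_eq_neg_one hmN hχ hχ2 hg)
  have hψg := congrArg Units.val (toUnitHom_generator_eq_neg_one hmN hψ hψ2 hg)
  ext
  rw [MulChar.coe_toUnitHom] at hχg hψg ⊢
  simp [MulChar.mul_apply, hχg, hψg]

end QuadraticCharacters

section JacobiGaussSum

theorem natCard_sq_eq_mul {m n : ℕ} (hmn : m.Coprime n) (a : ℤ) :
    Nat.card {x : ZMod (m * n) // x ^ 2 = a} =
      Nat.card {x : ZMod m // x ^ 2 = a} * Nat.card {x : ZMod n // x ^ 2 = a} := by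
  let e := ZMod.chineseRemainder hmn
  have he (x : ZMod (m * n)) : x ^ 2 = a ↔ (e x).1 ^ 2 = a ∧ (e x).2 ^ 2 = a := by
    rw [← e.injective.eq_iff, map_pow, map_intCast, Prod.ext_iff]
    rfl
  rw [← Nat.card_prod]
  exact Nat.card_congr ((e.toEquiv.subtypeEquiv he).trans
    (Equiv.subtypeProdEquivProd (p := fun x : ZMod m ↦ x ^ 2 = a)
      (q := fun x : ZMod n ↦ x ^ 2 = a)))

theorem natCard_sq_eq_prime {p : ℕ} (hp : p.Prime) (hp2 : p ≠ 2) (a : ℤ) :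
    (Nat.card {x : ZMod p // x ^ 2 = a} : ℤ) = 1 + jacobiSym a p := by
  have : Fact p.Prime := ⟨hp⟩
  rw [add_comm, ← jacobiSym.legendreSym.to_jacobiSym, ← legendreSym.card_sqrts p hp2 a,
    Set.toFinset_card, ← Nat.card_eq_fintype_card]
  rfl

theorem sum_divisors_jacobiSym_mul {m n : ℕ} (hmn : m.Coprime n) (a : ℤ) :
    ∑ r ∈ (m * n).divisors, jacobiSym a r =
      (∑ r ∈ m.divisors, jacobiSym a r) * ∑ r ∈ n.divisors, jacobiSym a r := by
  rw [Nat.divisors_mul, Finset.sum_mul_sum, ← Finset.sum_product', Finset.mul_def,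
    Finset.sum_image (Nat.Coprime.mul_injOn_divisors hmn)]
  refine Finset.sum_congr rfl fun r hr ↦ ?_
  obtain ⟨hm, hn⟩ := Finset.mem_product.mp hr
  exact jacobiSym.mul_right' a (Nat.pos_of_mem_divisors hm).ne' (Nat.pos_of_mem_divisors hn).ne'

theorem natCard_sq_eq_sum_divisors {d : ℕ} (hodd : Odd d) (hd : Squarefree d) (a : ℤ) :
    (Nat.card {x : ZMod d // x ^ 2 = a} : ℤ) = ∑ r ∈ d.divisors, jacobiSym a r := by
  induction d using induction_on_primes with
  | zero => simp at hodd
  | one =>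
    have : Nat.card {x : ZMod 1 // x ^ 2 = a} = 1 := Nat.card_eq_one_iff_unique.mpr
      ⟨⟨fun x y ↦ Subtype.ext (Subsingleton.elim _ _)⟩, ⟨⟨0, Subsingleton.elim _ _⟩⟩⟩
    rw [this, Nat.divisors_one, Finset.sum_singleton, Nat.cast_one, jacobiSym.one_right]
  | prime_mul p n hp ih =>
    have hpn : p.Coprime n := Nat.coprime_of_squarefree_mul hd
    obtain ⟨hp2, hn⟩ := Nat.odd_mul.mp hodd
    rw [natCard_sq_eq_mul hpn, Nat.cast_mul, ih hn hd.of_mul_right,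
      natCard_sq_eq_prime hp (by rintro rfl; exact absurd hp2 (by decide)),
      sum_divisors_jacobiSym_mul hpn, hp.sum_divisors, jacobiSym.one_right, add_comm 1]

theorem sum_mul_stdAddChar_eq_zero_of_periodic {N r : ℕ} [NeZero N] {f : ZMod N → ℂ}
    (hf : Function.Periodic f (r : ZMod N)) (hr : ¬ N ∣ r) :
    ∑ a, f a * ZMod.stdAddChar a = 0 := by
  have hshift : ZMod.stdAddChar (r : ZMod N) * ∑ a, f a * ZMod.stdAddChar a =
      ∑ a, f a * (ZMod.stdAddChar a : ℂ) := by
    rw [Finset.mul_sum]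
    conv_rhs => rw [← Equiv.sum_comp (Equiv.addRight (r : ZMod N))]
    refine Finset.sum_congr rfl fun a _ ↦ ?_
    rw [Equiv.coe_addRight, hf, AddChar.map_add_eq_mul]
    ring
  have hne : (ZMod.stdAddChar (r : ZMod N) : ℂ) ≠ 1 := by
    rw [← AddChar.map_zero_eq_one (ZMod.stdAddChar (N := N)), ZMod.injective_stdAddChar.ne_iff,
      Ne, ZMod.natCast_eq_zero_iff]
    exact hr
  by_contra hsum
  exact hne ((mul_eq_right₀ hsum).mp hshift)

theorem periodic_jacobiSym_val {N r : ℕ} [NeZero N] (hr : r ∣ N) :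
    Function.Periodic (fun a : ZMod N ↦ (jacobiSym a.val r : ℂ)) (r : ZMod N) := fun a ↦ by
  have h : ((a + r).val : ℤ) % r = (a.val : ℤ) % r := by
    rw [← Int.ModEq, ← ZMod.intCast_eq_intCast_iff, Int.cast_natCast, Int.cast_natCast,
      ZMod.natCast_val, ZMod.natCast_val, ZMod.cast_add hr, ZMod.cast_natCast hr,
      ZMod.natCast_self, add_zero]
  simp only [jacobiSym.mod_left' h]

theorem gaussSum_jacobiChar {d : ℕ} [NeZero d] (hd4 : d % 4 = 1) (hd : Squarefree d) :
    gaussSum (jacobiChar d) ZMod.stdAddChar = (√d : ℂ) := by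
  have hfiber (a : ZMod d) : ∑ x : ZMod d with x ^ 2 = a, (ZMod.stdAddChar (x ^ 2) : ℂ) =
      ∑ r ∈ d.divisors, (jacobiSym a.val r : ℂ) * ZMod.stdAddChar a := by
    rw [← Finset.sum_mul, Finset.sum_congr rfl (g := fun _ ↦ (ZMod.stdAddChar a : ℂ))
      (by simp +contextual), Finset.sum_const, nsmul_eq_mul, ← Int.cast_sum,
      ← natCard_sq_eq_sum_divisors (Nat.odd_iff.mpr (by omega)) hd a.val,
      Nat.card_eq_fintype_card, Fintype.card_subtype]
    simp
  calc gaussSum (jacobiChar d) ZMod.stdAddChar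
      = ∑ r ∈ d.divisors, ∑ a : ZMod d, (jacobiSym a.val r : ℂ) * ZMod.stdAddChar a := by
        rw [Finset.sum_eq_single_of_mem d (Nat.mem_divisors_self d (NeZero.ne d))]
        · rfl
        · intro r hr hrd
          have hrd' := Nat.dvd_of_mem_divisors hr
          exact sum_mul_stdAddChar_eq_zero_of_periodic (periodic_jacobiSym_val hrd')
            fun h ↦ hrd (Nat.dvd_antisymm hrd' h)
    _ = ∑ x : ZMod d, (ZMod.stdAddChar (x ^ 2) : ℂ) := by
        rw [Finset.sum_comm, ← Finset.sum_fiberwise (s := Finset.univ) (g := fun x ↦ x ^ 2)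
          (f := fun x ↦ (ZMod.stdAddChar (x ^ 2) : ℂ))]
        exact Finset.sum_congr rfl fun a _ ↦ (hfiber a).symm
    _ = √d := by
        have hI : (-Complex.I) ^ d = -Complex.I := by
          rw [← Nat.div_add_mod d 4, hd4, pow_add, pow_mul, Even.neg_pow (by decide),
            Complex.I_pow_four, one_pow, one_mul, pow_one]
        have h1I : 1 - Complex.I ≠ 0 := by simp [Complex.ext_iff]
        rw [sum_stdAddChar_sq, hI, ← sub_eq_add_neg, mul_div_cancel_right₀ _ h1I]

end JacobiGaussSum

section ThetaKernel

open Complex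
open scoped ZMod Real

variable {N : ℕ} [NeZero N] {χ : DirichletCharacter ℂ N}

/-- The theta function of a Dirichlet character `χ` modulo `N`, as the function
`∑ χ(n) exp (-π n² t / N)` of `t > 0` whose Mellin transform is a completed `L`-function. -/
noncomputable def thetaKernel (χ : DirichletCharacter ℂ N) (t : ℝ) : ℂ :=
  periodicTheta χ (I * (t / N : ℝ))

theorem im_I_mul_ofReal_pos {t : ℝ} (ht : 0 < t) : 0 < (I * t).im := by
  simpa using ht

theorem cexp_pi_mul_sq_mul_I (n : ℤ) (t : ℝ) :
    cexp (π * I * n ^ 2 * (I * t)) = (Real.exp (-(π * n ^ 2) * t : ℝ) : ℂ) := by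
  push_cast
  congr 1
  linear_combination (π : ℂ) * n ^ 2 * t * I_mul_I

theorem continuousOn_thetaKernel (χ : DirichletCharacter ℂ N) :
    ContinuousOn (thetaKernel χ) (Set.Ioi 0) := by
  have hN : (0 : ℝ) < N := by exact_mod_cast NeZero.pos N
  refine (continuousOn_periodicTheta χ).comp (by fun_prop) fun t ht ↦ ?_
  exact im_I_mul_ofReal_pos (div_pos ht hN)

omit [NeZero N] in
theorem map_zero_of_one_lt (hN : 1 < N) (χ : DirichletCharacter ℂ N) : χ 0 = 0 :=
  have : Fact (1 < N) := ⟨hN⟩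
  χ.map_zero

theorem hasSum_thetaKernel (hχ : χ.Even) (hN : 1 < N) {t : ℝ} (ht : 0 < t) :
    HasSum (fun n : ℕ ↦ 2 * χ n * (Real.exp (-(π * n ^ 2) * (t / N) : ℝ) : ℂ))
      (thetaKernel χ t) := by
  have hN' : (0 : ℝ) < N := by exact_mod_cast NeZero.pos N
  have h := (summable_mul_cexp χ (im_I_mul_ofReal_pos (div_pos ht hN'))).hasSum.nat_add_neg
  simp only [Int.cast_zero, map_zero_of_one_lt hN, zero_mul, add_zero] at h
  refine h.congr_fun fun n ↦ ?_
  rw [cexp_pi_mul_sq_mul_I, cexp_pi_mul_sq_mul_I, Int.cast_neg (R := ZMod N), hχ.eval_neg]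
  push_cast
  rw [neg_sq]
  ring

theorem norm_thetaKernel_le (hχ : χ.Even) (hN : 1 < N) :
    ∃ C : ℝ, ∀ t : ℝ, 1 ≤ t → ‖thetaKernel χ t‖ ≤ C * Real.exp (-(π / N) * t) := by
  have hN' : (0 : ℝ) < N := by exact_mod_cast NeZero.pos N
  have hsum : Summable fun n : ℕ ↦ Real.exp (-(π * n ^ 2) * (1 / N)) := by
    have h := (summable_mul_cexp (N := N) 1 (im_I_mul_ofReal_pos (one_div_pos.mpr hN'))).norm
    refine (h.comp_injective Nat.cast_injective).congr fun n ↦ ?_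
    rw [Function.comp_apply, Pi.one_apply, one_mul, cexp_pi_mul_sq_mul_I, norm_real,
      Real.norm_of_nonneg (Real.exp_nonneg _), Int.cast_natCast]
  refine ⟨2 * Real.exp (π / N) * ∑' n : ℕ, Real.exp (-(π * n ^ 2) * (1 / N)), fun t ht ↦ ?_⟩
  rw [mul_right_comm, ← tsum_mul_left, ← (hasSum_thetaKernel hχ hN (by linarith)).tsum_eq]
  refine tsum_of_norm_bounded (hsum.mul_left _).hasSum fun n ↦ ?_
  rcases n.eq_zero_or_pos with rfl | hn
  · simp only [Nat.cast_zero, map_zero_of_one_lt hN, mul_zero, zero_mul, norm_zero]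
    positivity
  have hle : -(π * n ^ 2) * (t / N) ≤ π / N + -(π / N) * t + -(π * n ^ 2) * (1 / N) := by
    have hn1 : (1 : ℝ) ≤ (n : ℝ) ^ 2 := one_le_pow₀ (by exact_mod_cast hn)
    have hprod : 0 ≤ π / N * (((n : ℝ) ^ 2 - 1) * (t - 1)) :=
      mul_nonneg (by positivity) (mul_nonneg (by linarith) (by linarith))
    linear_combination hprod
  calc ‖2 * χ n * (Real.exp (-(π * n ^ 2) * (t / N) : ℝ) : ℂ)‖
      ≤ 2 * 1 * Real.exp (-(π * n ^ 2) * (t / N)) := by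
        rw [norm_mul, norm_mul, norm_real, Real.norm_of_nonneg (Real.exp_nonneg _), norm_ofNat]
        gcongr
        exact χ.norm_le_one _
    _ ≤ 2 * 1 * Real.exp (π / N + -(π / N) * t + -(π * n ^ 2) * (1 / N)) := by gcongr
    _ = _ := by rw [Real.exp_add, Real.exp_add]; ring

omit [NeZero N] in
theorem even_inv (hχ : χ.Even) : χ⁻¹.Even := by
  rw [DirichletCharacter.Even, MulChar.inv_apply_eq_inv, hχ, Ring.inverse_one]

theorem isBigO_thetaKernel (hχ : χ.Even) (hN : 1 < N) (r : ℝ) :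
    thetaKernel χ =O[atTop] fun t ↦ t ^ r := by
  obtain ⟨C, hC⟩ := norm_thetaKernel_le hχ hN
  refine (Asymptotics.IsBigO.of_bound C ?_).trans
    (isLittleO_exp_neg_mul_rpow_atTop (a := π / N)
      (div_pos Real.pi_pos (by exact_mod_cast NeZero.pos N)) r).isBigO
  filter_upwards [eventually_ge_atTop 1] with t ht
  rw [Real.norm_of_nonneg (Real.exp_nonneg _)]
  exact hC t ht

theorem norm_gaussSum_sq (hχ : χ.IsPrimitive) : ‖gaussSum χ ZMod.stdAddChar‖ ^ 2 = N := by
  have hN : (N : ℂ) ≠ 0 := NeZero.ne _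
  have hstar : star (gaussSum χ ZMod.stdAddChar) * gaussSum χ ZMod.stdAddChar = N := by
    calc star (gaussSum χ ZMod.stdAddChar) * gaussSum χ ZMod.stdAddChar
        = ∑ y : ZMod N, ZMod.stdAddChar (-y) * (χ⁻¹ y * gaussSum χ ZMod.stdAddChar) := by
          rw [star_gaussSum_eq, gaussSum, Finset.sum_mul]
          refine Finset.sum_congr rfl fun y _ ↦ ?_
          rw [AddChar.inv_apply]
          ring
      _ = ∑ y : ZMod N, ZMod.stdAddChar y * 𝓕 χ y := by
          refine Fintype.sum_equiv (Equiv.neg _) _ _ fun y ↦ ?_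
          rw [Equiv.neg_apply, hχ.fourierTransform_eq_inv_mul_gaussSum, neg_neg]
      _ = N * 𝓕⁻ (𝓕 χ) 1 := by
          rw [ZMod.invDFT_apply, smul_eq_mul, mul_inv_cancel_left₀ hN]
          simp only [mul_one, smul_eq_mul]
      _ = N := by rw [LinearEquiv.symm_apply_apply, map_one, mul_one]
  rw [mul_comm, ← starRingEnd_apply, mul_conj, normSq_eq_norm_sq] at hstar
  exact_mod_cast hstar

theorem gaussSum_stdAddChar_ne_zero (hχ : χ.IsPrimitive) :
    gaussSum χ ZMod.stdAddChar ≠ 0 := fun h ↦ by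
  have hsq := norm_gaussSum_sq hχ
  rw [h, norm_zero, zero_pow two_ne_zero] at hsq
  exact NeZero.ne (N : ℝ) hsq.symm

theorem thetaKernel_one_div (hχ : χ.IsPrimitive) (heven : χ.Even) {t : ℝ} (ht : 0 < t) :
    thetaKernel χ (1 / t) =
      gaussSum χ ZMod.stdAddChar / (√N : ℝ) * ((t ^ (1 / 2 : ℝ) : ℝ) : ℂ) * thetaKernel χ⁻¹ t := by
  have hN : (0 : ℝ) < N := by exact_mod_cast NeZero.pos N
  have hdft (k : ZMod N) : 𝓕 χ k = gaussSum χ ZMod.stdAddChar * χ⁻¹ k := by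
    rw [hχ.fourierTransform_eq_inv_mul_gaussSum, (even_inv heven).eval_neg, mul_comm]
  have hτ : -1 / (N ^ 2 * (I * (t / N : ℝ))) = I * (1 / t / N : ℝ) := by
    have : (N : ℂ) ≠ 0 := by exact_mod_cast hN.ne'
    have : (t : ℂ) ≠ 0 := by exact_mod_cast ht.ne'
    push_cast
    field_simp
    rw [I_sq]
  have hpow : (-I * (I * (t / N : ℝ))) ^ (1 / 2 : ℂ) = (t ^ (1 / 2 : ℝ) : ℝ) / (√N : ℝ) := by
    rw [← mul_assoc, neg_mul, I_mul_I, neg_neg, one_mul, Real.sqrt_eq_rpow, ← ofReal_div,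
      ← Real.div_rpow ht.le hN.le, ofReal_cpow (by positivity)]
    norm_num
  have hfeq := periodicTheta_dft_eq χ (im_I_mul_ofReal_pos (div_pos ht hN))
  have hsmul : periodicTheta (𝓕 χ) (I * (t / N : ℝ)) =
      gaussSum χ ZMod.stdAddChar * thetaKernel χ⁻¹ t := by
    simp only [thetaKernel, periodicTheta, hdft, mul_assoc, tsum_mul_left]
  have hsqrt : ((√N : ℝ) : ℂ) ≠ 0 := ofReal_ne_zero.mpr (Real.sqrt_ne_zero'.mpr hN)
  have hpow0 : ((t ^ (1 / 2 : ℝ) : ℝ) : ℂ) ≠ 0 :=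
    ofReal_ne_zero.mpr (Real.rpow_pos_of_pos ht _).ne'
  rw [hτ, hpow, hsmul, ← thetaKernel] at hfeq
  field_simp at hfeq ⊢
  linear_combination -hfeq

/-- The functional equation of `thetaKernel`, in the form from which the Mellin transform derives
its analytic continuation. -/
noncomputable def thetaFEPair (hχ : χ.IsPrimitive) (heven : χ.Even) (hN : 1 < N) :
    WeakFEPair ℂ where
  f := thetaKernel χ
  g := thetaKernel χ⁻¹
  k := 1 / 2
  ε := gaussSum χ ZMod.stdAddChar / (√N : ℝ)
  f₀ := 0
  g₀ := 0
  hf_int := (continuousOn_thetaKernel χ).locallyIntegrableOn measurableSet_Ioi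
  hg_int := (continuousOn_thetaKernel χ⁻¹).locallyIntegrableOn measurableSet_Ioi
  hk := by norm_num
  hε := div_ne_zero (gaussSum_stdAddChar_ne_zero hχ)
    (ofReal_ne_zero.mpr (Real.sqrt_ne_zero'.mpr (by positivity)))
  h_feq t ht := thetaKernel_one_div hχ heven ht
  hf_top r := by simpa using isBigO_thetaKernel heven hN r
  hg_top r := by simpa using isBigO_thetaKernel (even_inv heven) hN r

theorem differentiable_mellin_thetaKernel (hχ : χ.IsPrimitive) (heven : χ.Even) (hN : 1 < N) :
    Differentiable ℂ (mellin (thetaKernel χ)) := by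
  have hstrong : IsStrongFEPair (thetaFEPair hχ heven hN) := ⟨rfl, rfl⟩
  exact hstrong.Λ_eq ▸ hstrong.differentiable_Λ

theorem mellin_thetaKernel_of_one_lt_re (heven : χ.Even) (hN : 1 < N) {s : ℂ} (hs : 1 < s.re) :
    mellin (thetaKernel χ) (s / 2) = 2 * Gammaℝ s * (√N : ℝ) ^ s * χ.LFunction s := by
  have hsqrt : 0 < √(N : ℝ) := Real.sqrt_pos.mpr (by positivity)
  have hzero : χ 0 = 0 := map_zero_of_one_lt hN χ
  have hterm (t : ℝ) (ht : 0 < t) : HasSum (fun n : ℕ ↦ if (n / √N : ℝ) = 0 then 0 else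
      2 * χ n * (Real.exp (-π * (n / √N) ^ 2 * t) : ℂ)) (thetaKernel χ t) := by
    refine (hasSum_thetaKernel heven hN ht).congr_fun fun n ↦ ?_
    rcases n.eq_zero_or_pos with rfl | hn
    · simp [hzero]
    · rw [if_neg (by positivity), div_pow, Real.sq_sqrt (by positivity)]
      congr 3
      ring
  have hsummable : Summable fun n : ℕ ↦ ‖2 * χ n‖ / |(n / √N : ℝ)| ^ s.re := by
    refine .of_nonneg_of_le (fun n ↦ by positivity) (fun n ↦ ?_)
      ((Real.summable_one_div_nat_rpow.mpr hs).mul_left (2 * √(N : ℝ) ^ s.re))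
    rw [abs_of_nonneg (by positivity), Real.div_rpow (by positivity) hsqrt.le, norm_mul,
      norm_ofNat, div_div_eq_mul_div, mul_one_div]
    gcongr
    exact mul_le_of_le_one_right zero_le_two (χ.norm_le_one _)
  rw [DirichletCharacter.LFunction_eq_LSeries _ hs, LSeries, ← tsum_mul_left,
    ← (hasSum_mellin_pi_mul_sq (by linarith) hterm hsummable).tsum_eq]
  refine tsum_congr fun n ↦ ?_
  rcases n.eq_zero_or_pos with rfl | hn
  · simp [hzero]
  · have hdiv := div_cpow_ofReal_nonneg (Nat.cast_nonneg (α := ℝ) n) hsqrt.le s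
    rw [LSeries.term_of_ne_zero hn.ne', abs_of_nonneg (by positivity)]
    push_cast at hdiv ⊢
    rw [hdiv]
    field_simp

theorem ne_one_of_isPrimitive (hχ : χ.IsPrimitive) (hN : 1 < N) : χ ≠ 1 := by
  rintro rfl
  rw [DirichletCharacter.isPrimitive_def, DirichletCharacter.conductor_one] at hχ
  exact hN.ne hχ

theorem mellin_thetaKernel (hχ : χ.IsPrimitive) (heven : χ.Even) (hN : 1 < N) {s : ℂ}
    (hs : 0 < s.re) :
    mellin (thetaKernel χ) (s / 2) = 2 * Gammaℝ s * (√N : ℝ) ^ s * χ.LFunction s := by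
  have hsqrt : ((√N : ℝ) : ℂ) ≠ 0 :=
    ofReal_ne_zero.mpr (Real.sqrt_ne_zero'.mpr (by positivity))
  have hF : Differentiable ℂ fun s ↦ mellin (thetaKernel χ) (s / 2) * (Gammaℝ s)⁻¹ :=
    ((differentiable_mellin_thetaKernel hχ heven hN).comp (differentiable_id.div_const 2)).mul
      differentiable_Gammaℝ_inv
  have hG : Differentiable ℂ fun s ↦ 2 * ((√N : ℝ) : ℂ) ^ s * χ.LFunction s :=
    .mul (.const_mul (fun s ↦ differentiableAt_id.const_cpow (.inl hsqrt)) _)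
      (DirichletCharacter.differentiable_LFunction (ne_one_of_isPrimitive hχ hN))
  have hnhds : {s : ℂ | 1 < s.re} ∈ nhds (2 : ℂ) :=
    (isOpen_lt continuous_const continuous_re).mem_nhds (by simp)
  have hFG := AnalyticOnNhd.eq_of_eventuallyEq (z₀ := 2) (fun z _ ↦ hF.analyticAt z)
    (fun z _ ↦ hG.analyticAt z) (by
      filter_upwards [hnhds] with s hs
      have hΓ : Gammaℝ s ≠ 0 := Gammaℝ_ne_zero_of_re_pos (zero_lt_one.trans hs)
      rw [mellin_thetaKernel_of_one_lt_re heven hN hs]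
      field_simp)
  have hΓ : Gammaℝ s ≠ 0 := Gammaℝ_ne_zero_of_re_pos hs
  have h := congrFun hFG s
  field_simp at h
  rw [h]

theorem mellin_indicator_Ioi {E : Type*} [NormedAddCommGroup E] [NormedSpace ℂ E] (f : ℝ → E)
    (s : ℂ) {a : ℝ} (ha : 0 ≤ a) :
    mellin ((Set.Ioi a).indicator f) s = ∫ t in Set.Ioi a, (t : ℂ) ^ (s - 1) • f t := by
  simp_rw [mellin, ← Set.indicator_smul_apply (Set.Ioi a) (fun t : ℝ ↦ (t : ℂ) ^ (s - 1)) f]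
  rw [MeasureTheory.setIntegral_indicator measurableSet_Ioi,
    Set.inter_eq_right.mpr (Set.Ioi_subset_Ioi ha)]

theorem mellin_eq_integral_Ioi_add {E : Type*} [NormedAddCommGroup E] [NormedSpace ℂ E]
    {f : ℝ → E} {s : ℂ} (hf : MellinConvergent f s) :
    mellin f s = (∫ t in Set.Ioi (1 : ℝ), (t : ℂ) ^ (s - 1) • f t) +
      ∫ t in Set.Ioi (1 : ℝ), (t : ℂ) ^ (-s - 1) • f t⁻¹ := by
  have hsplit : ∫ t in Set.Ioo (0 : ℝ) 1, (t : ℂ) ^ (s - 1) • f t =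
      ∫ t in Set.Ioi (1 : ℝ), (t : ℂ) ^ (-s - 1) • f t⁻¹ := by
    rw [← mellin_indicator_Ioi _ _ zero_le_one, ← mellin_comp_inv, mellin, ← Set.Ioi_inter_Iio,
      ← MeasureTheory.setIntegral_indicator measurableSet_Iio]
    refine MeasureTheory.setIntegral_congr_fun measurableSet_Ioi fun t ht ↦ ?_
    have hiff : t⁻¹ ∈ Set.Ioi 1 ↔ t ∈ Set.Iio 1 := one_lt_inv₀ (Set.mem_Ioi.mp ht)
    by_cases h : t ∈ Set.Iio 1 <;> simp [h, hiff]
  rw [mellin, ← Set.Ioc_union_Ioi_eq_Ioi zero_le_one,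
    MeasureTheory.setIntegral_union (Set.Ioc_disjoint_Ioi le_rfl) measurableSet_Ioi
      (hf.mono_set Set.Ioc_subset_Ioi_self) (hf.mono_set (Set.Ioi_subset_Ioi zero_le_one)),
    MeasureTheory.integral_Ioc_eq_integral_Ioo, hsplit, add_comm]

end ThetaKernel

section CentralWeight

open scoped Real

/-- The weight `∫_{1/Y}^∞ u^{-3/4} exp (-π x² u) du` of the approximate functional equation at the
central point: of order `x^{-1/2}` while `x² ≤ Y`, and decaying rapidly beyond. -/
noncomputable def centralWeight (Y x : ℝ) : ℝ :=
  ∫ u in Set.Ioi (1 / Y), u ^ (-(3 / 4) : ℝ) * Real.exp (-(π * x ^ 2) * u)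

theorem integrableOn_rpow_mul_exp {s : ℝ} (hs : -1 < s) {x : ℝ} (hx : 0 < x) :
    MeasureTheory.IntegrableOn (fun u : ℝ ↦ u ^ s * Real.exp (-(π * x ^ 2) * u))
      (Set.Ioi 0) := by
  simpa using integrableOn_rpow_mul_exp_neg_mul_rpow (p := 1) (s := s) (b := π * x ^ 2) hs one_pos
    (by positivity)

theorem integrableOn_centralWeight {Y : ℝ} (hY : 0 < Y) {x : ℝ} (hx : 0 < x) :
    MeasureTheory.IntegrableOn (fun u : ℝ ↦ u ^ (-(3 / 4) : ℝ) * Real.exp (-(π * x ^ 2) * u))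
      (Set.Ioi (1 / Y)) :=
  (integrableOn_rpow_mul_exp (by norm_num) hx).mono_set (Set.Ioi_subset_Ioi (by positivity))

theorem centralWeight_nonneg {Y : ℝ} (hY : 0 < Y) (x : ℝ) : 0 ≤ centralWeight Y x := by
  refine MeasureTheory.setIntegral_nonneg measurableSet_Ioi fun u hu ↦ ?_
  have : 0 < u := (one_div_pos.mpr hY).trans hu
  positivity

theorem setIntegral_rpow_mul_exp_mono {a : ℝ} {S T : Set ℝ} {x : ℝ} (hS : S ⊆ T)
    (hT : T ⊆ Set.Ioi 0) (hTm : MeasurableSet T) (ha : -1 < a) (hx : 0 < x) :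
    ∫ u in S, u ^ a * Real.exp (-(π * x ^ 2) * u) ≤
      ∫ u in T, u ^ a * Real.exp (-(π * x ^ 2) * u) := by
  refine MeasureTheory.setIntegral_mono_set ((integrableOn_rpow_mul_exp ha hx).mono_set hT) ?_
    hS.eventuallyLE
  filter_upwards [MeasureTheory.ae_restrict_mem hTm] with u hu
  have : 0 < u := hT hu
  rw [Pi.zero_apply]
  positivity

theorem centralWeight_le_centralWeight {Y Y' : ℝ} (hY : 0 < Y) (h : Y ≤ Y') {x : ℝ} (hx : 0 < x) :
    centralWeight Y x ≤ centralWeight Y' x :=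
  setIntegral_rpow_mul_exp_mono (Set.Ioi_subset_Ioi (one_div_le_one_div_of_le hY h))
    (Set.Ioi_subset_Ioi (one_div_pos.mpr (hY.trans_le h)).le) measurableSet_Ioi (by norm_num) hx

theorem integral_rpow_mul_exp_pi_le {a : ℝ} (ha : 0 < a) {x : ℝ} (hx : 0 < x) :
    ∫ u in Set.Ioi (0 : ℝ), u ^ (a - 1) * Real.exp (-(π * x ^ 2) * u) ≤
      Real.Gamma a * x ^ (-(2 * a)) := by
  have hint := Real.integral_rpow_mul_exp_neg_mul_Ioi ha (r := π * x ^ 2) (by positivity)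
  have hpow : x ^ (-(2 * a)) = (1 / x ^ 2) ^ a := by
    rw [one_div, Real.inv_rpow (by positivity), ← Real.rpow_natCast, ← Real.rpow_mul hx.le,
      ← Real.rpow_neg hx.le, Nat.cast_ofNat]
  simp only [neg_mul, hint, hpow, mul_comm (Real.Gamma a)]
  gcongr
  nlinarith [Real.pi_gt_three, sq_nonneg x]

theorem centralWeight_le {s : ℝ} (hs : 0 ≤ s) {Y : ℝ} (hY : 0 < Y) {x : ℝ} (hx : 0 < x) :
    centralWeight Y x ≤ Real.Gamma (1 / 4 + s) * Y ^ s * x ^ (-(1 / 2 + 2 * s)) := by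
  have hexp : -1 < 1 / 4 + s - 1 := by linarith
  have hsub : Set.Ioi (1 / Y) ⊆ Set.Ioi 0 := Set.Ioi_subset_Ioi (one_div_pos.mpr hY).le
  calc centralWeight Y x
      ≤ ∫ u in Set.Ioi (1 / Y), Y ^ s * (u ^ (1 / 4 + s - 1) * Real.exp (-(π * x ^ 2) * u)) := by
        refine MeasureTheory.setIntegral_mono_on (integrableOn_centralWeight hY hx)
          (((integrableOn_rpow_mul_exp hexp hx).mono_set hsub).const_mul _) measurableSet_Ioi
          fun u hu ↦ ?_
        have hu0 : 0 < u := hsub hu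
        have hYu : 1 ≤ Y * u := by
          rw [Set.mem_Ioi, div_lt_iff₀ hY] at hu
          linarith
        rw [← mul_assoc, show 1 / 4 + s - 1 = s + -(3 / 4) by ring, Real.rpow_add hu0,
          ← mul_assoc, ← Real.mul_rpow hY.le hu0.le]
        gcongr
        exact le_mul_of_one_le_left (by positivity) (Real.one_le_rpow hYu hs)
    _ ≤ Y ^ s * (Real.Gamma (1 / 4 + s) * x ^ (-(2 * (1 / 4 + s)))) := by
        rw [MeasureTheory.integral_const_mul]
        gcongr
        exact (setIntegral_rpow_mul_exp_mono hsub subset_rfl measurableSet_Ioi hexp hx).trans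
          (integral_rpow_mul_exp_pi_le (by linarith) hx)
    _ = _ := by ring_nf

theorem le_centralWeight : ∃ c : ℝ, 0 < c ∧ ∀ Y x : ℝ, 0 < x → x ^ 2 ≤ Y →
    c * x ^ (-(1 / 2) : ℝ) ≤ centralWeight Y x := by
  refine ⟨2 ^ (-(3 / 4) : ℝ) * Real.exp (-(2 * π)), by positivity, fun Y x hx hY ↦ ?_⟩
  have hY0 : 0 < Y := (by positivity : 0 < x ^ 2).trans_le hY
  have hsub : Set.Ioc (1 / x ^ 2) (2 / x ^ 2) ⊆ Set.Ioi (1 / Y) := fun u hu ↦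
    (one_div_le_one_div_of_le (by positivity) hY).trans_lt hu.1
  have hvol : MeasureTheory.volume.real (Set.Ioc (1 / x ^ 2) (2 / x ^ 2)) = 1 / x ^ 2 := by
    rw [Real.volume_real_Ioc_of_le (by gcongr; norm_num)]
    ring
  have hpow : x ^ (-(1 / 2) : ℝ) = 1 / x ^ 2 * (x ^ 2) ^ (3 / 4 : ℝ) := by
    rw [one_div (x ^ 2), ← Real.rpow_natCast, ← Real.rpow_mul hx.le, ← Real.rpow_neg hx.le,
      ← Real.rpow_add hx]
    norm_num
  calc 2 ^ (-(3 / 4) : ℝ) * Real.exp (-(2 * π)) * x ^ (-(1 / 2) : ℝ)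
      = ∫ _ in Set.Ioc (1 / x ^ 2) (2 / x ^ 2),
          (2 / x ^ 2) ^ (-(3 / 4) : ℝ) * Real.exp (-(2 * π)) := by
        rw [MeasureTheory.setIntegral_const, hvol, smul_eq_mul, hpow,
          Real.div_rpow zero_le_two (by positivity), Real.rpow_neg (by positivity : 0 ≤ x ^ 2),
          div_inv_eq_mul]
        ring
    _ ≤ ∫ u in Set.Ioc (1 / x ^ 2) (2 / x ^ 2),
          u ^ (-(3 / 4) : ℝ) * Real.exp (-(π * x ^ 2) * u) := by
        refine MeasureTheory.setIntegral_mono_on (MeasureTheory.integrableOn_const (by simp))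
          ((integrableOn_centralWeight hY0 hx).mono_set hsub) measurableSet_Ioc fun u hu ↦ ?_
        have hu0 : 0 < u := (by positivity : 0 < 1 / x ^ 2).trans hu.1
        have hux : u * x ^ 2 ≤ 2 := (le_div_iff₀ (by positivity)).mp hu.2
        refine mul_le_mul (Real.rpow_le_rpow_of_nonpos hu0 hu.2 (by norm_num))
          (Real.exp_le_exp.mpr ?_) (Real.exp_nonneg _) (by positivity)
        nlinarith [Real.pi_pos]
    _ ≤ centralWeight Y x :=
        setIntegral_rpow_mul_exp_mono hsub (Set.Ioi_subset_Ioi (one_div_pos.mpr hY0).le)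
          measurableSet_Ioi (by norm_num) hx

theorem summable_centralWeight {Y : ℝ} (hY : 0 < Y) :
    Summable fun n : ℕ ↦ centralWeight Y n := by
  have hmajorant : Summable fun n : ℕ ↦ Real.Gamma (1 / 4 + 1 / 2) * Y ^ (1 / 2 : ℝ) *
      (n : ℝ) ^ (-(1 / 2 + 2 * (1 / 2)) : ℝ) :=
    (Real.summable_nat_rpow.mpr (by norm_num)).mul_left _
  rw [← summable_nat_add_iff 1] at hmajorant ⊢
  exact .of_nonneg_of_le (fun n ↦ centralWeight_nonneg hY _)
    (fun n ↦ centralWeight_le (by norm_num) hY (by positivity)) hmajorant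

theorem integral_Ioi_one_rpow_mul_exp_div {N : ℝ} (hN : 0 < N) (x : ℝ) :
    ∫ t in Set.Ioi (1 : ℝ), t ^ (-(3 / 4) : ℝ) * Real.exp (-(π * x ^ 2) * (t / N)) =
      N ^ (1 / 4 : ℝ) * centralWeight N x := by
  have hscale := MeasureTheory.integral_comp_mul_left_Ioi
    (fun u : ℝ ↦ u ^ (-(3 / 4) : ℝ) * Real.exp (-(π * x ^ 2) * u)) 1 (one_div_pos.mpr hN)
  rw [mul_one, ← centralWeight] at hscale
  have hpoint : ∀ t ∈ Set.Ioi (1 : ℝ), t ^ (-(3 / 4) : ℝ) * Real.exp (-(π * x ^ 2) * (t / N)) =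
      N ^ (-(3 / 4) : ℝ) *
        ((1 / N * t) ^ (-(3 / 4) : ℝ) * Real.exp (-(π * x ^ 2) * (1 / N * t))) := fun t ht ↦ by
    have ht : 0 < t := one_pos.trans ht
    rw [← mul_assoc, ← Real.mul_rpow hN.le (by positivity), one_div_mul_eq_div,
      mul_div_cancel₀ _ hN.ne']
  rw [MeasureTheory.setIntegral_congr_fun measurableSet_Ioi hpoint,
    MeasureTheory.integral_const_mul, hscale, smul_eq_mul, ← mul_assoc, one_div, inv_inv,
    ← Real.rpow_add_one hN.ne']
  norm_num

end CentralWeight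

section ApproximateFunctionalEquation

open Complex
open scoped Real

variable {N : ℕ} [NeZero N] {χ : DirichletCharacter ℂ N}

theorem hasSum_integral_thetaKernel (heven : χ.Even) (hN : 1 < N) :
    HasSum (fun n : ℕ ↦ 2 * χ n * (((N : ℝ) ^ (1 / 4 : ℝ) * centralWeight N n : ℝ) : ℂ))
      (∫ t in Set.Ioi (1 : ℝ), (t : ℂ) ^ (-(3 / 4) : ℂ) * thetaKernel χ t) := by
  have hN' : (0 : ℝ) < N := by positivity
  let w (n : ℕ) (t : ℝ) : ℝ := t ^ (-(3 / 4) : ℝ) * Real.exp (-(π * n ^ 2) * (t / N))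
  have hw (n : ℕ) : ∫ t in Set.Ioi (1 : ℝ), w n t = (N : ℝ) ^ (1 / 4 : ℝ) * centralWeight N n :=
    integral_Ioi_one_rpow_mul_exp_div hN' n
  have hnorm (n : ℕ) : ∫ t in Set.Ioi (1 : ℝ), ‖2 * χ n * (w n t : ℂ)‖ =
      2 * ‖χ n‖ * ((N : ℝ) ^ (1 / 4 : ℝ) * centralWeight N n) := by
    rw [← hw, ← MeasureTheory.integral_const_mul]
    refine MeasureTheory.setIntegral_congr_fun measurableSet_Ioi fun t ht ↦ ?_
    have ht : 0 < t := one_pos.trans ht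
    rw [norm_mul, norm_mul, norm_ofNat, norm_real, Real.norm_of_nonneg (by positivity)]
  have hint (n : ℕ) : MeasureTheory.IntegrableOn (fun t ↦ 2 * χ n * (w n t : ℂ))
      (Set.Ioi 1) := by
    rcases n.eq_zero_or_pos with rfl | hn
    · simp [map_zero_of_one_lt hN]
    have hdecay := integrableOn_rpow_mul_exp (s := -(3 / 4)) (x := n / √N) (by norm_num)
      (by positivity)
    refine ((hdecay.mono_set (Set.Ioi_subset_Ioi zero_le_one)).congr_fun (fun t _ ↦ ?_)
      measurableSet_Ioi).ofReal.const_mul (2 * χ n)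
    rw [div_pow, Real.sq_sqrt hN'.le, show -(π * (n ^ 2 / N)) * t = -(π * n ^ 2) * (t / N) by ring]
    rfl
  have hsummable : Summable fun n : ℕ ↦ ∫ t in Set.Ioi (1 : ℝ), ‖2 * χ n * (w n t : ℂ)‖ := by
    simp_rw [hnorm, mul_assoc, mul_left_comm ‖_‖]
    refine ((Summable.of_nonneg_of_le (fun n ↦ ?_) (fun n ↦ ?_)
      (summable_centralWeight hN')).mul_left _).mul_left 2
    · exact mul_nonneg (norm_nonneg _) (centralWeight_nonneg hN' _)
    · exact mul_le_of_le_one_left (centralWeight_nonneg hN' _) (χ.norm_le_one _)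
  have hsum := MeasureTheory.hasSum_integral_of_summable_integral_norm hint hsummable
  simp only [MeasureTheory.integral_const_mul, integral_complex_ofReal, hw] at hsum
  have hintegral : ∫ t in Set.Ioi (1 : ℝ), (t : ℂ) ^ (-(3 / 4) : ℂ) * thetaKernel χ t =
      ∫ t in Set.Ioi (1 : ℝ), ∑' n : ℕ, 2 * χ n * (w n t : ℂ) := by
    refine MeasureTheory.setIntegral_congr_fun measurableSet_Ioi fun t ht ↦ ?_
    have ht : 0 < t := one_pos.trans ht
    rw [← (hasSum_thetaKernel heven hN ht).tsum_eq, ← tsum_mul_left]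
    refine tsum_congr fun n ↦ ?_
    rw [show (-(3 / 4) : ℂ) = ((-(3 / 4) : ℝ) : ℂ) by push_cast; rfl, ← ofReal_cpow ht.le]
    push_cast [w]
    ring
  rwa [hintegral]

theorem mellin_thetaKernel_one_fourth (hχ : χ.IsPrimitive) (heven : χ.Even) (hN : 1 < N) :
    mellin (thetaKernel χ) (1 / 4) =
      (∫ t in Set.Ioi (1 : ℝ), (t : ℂ) ^ (-(3 / 4) : ℂ) * thetaKernel χ t) +
        gaussSum χ ZMod.stdAddChar / (√N : ℝ) *
          ∫ t in Set.Ioi (1 : ℝ), (t : ℂ) ^ (-(3 / 4) : ℂ) * thetaKernel χ⁻¹ t := by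
  have hstrong : IsStrongFEPair (thetaFEPair hχ heven hN) := ⟨rfl, rfl⟩
  have hconv : MellinConvergent (thetaKernel χ) (1 / 4) := (hstrong.hasMellin (1 / 4)).1
  rw [mellin_eq_integral_Ioi_add hconv, ← MeasureTheory.integral_const_mul]
  congr 1
  · norm_num
  · refine MeasureTheory.setIntegral_congr_fun measurableSet_Ioi fun t ht ↦ ?_
    have ht : 0 < t := one_pos.trans ht
    have hpow : (t : ℂ) ^ (-(3 / 4) : ℂ) = (t : ℂ) ^ (-(1 / 4) - 1 : ℂ) * t ^ (1 / 2 : ℂ) := by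
      rw [← cpow_add _ _ (ofReal_ne_zero.mpr ht.ne')]
      norm_num
    have hfeq := thetaKernel_one_div hχ heven ht
    rw [one_div, ofReal_cpow ht.le] at hfeq
    simp only [hfeq, hpow, smul_eq_mul]
    push_cast
    ring

theorem hasSum_LFunction_one_half (hχ : χ.IsPrimitive) (heven : χ.Even) (hN : 1 < N) :
    HasSum (fun n : ℕ ↦ (χ n + gaussSum χ ZMod.stdAddChar / (√N : ℝ) * χ⁻¹ n) *
        (centralWeight N n : ℂ)) (Gammaℝ (1 / 2) * χ.LFunction (1 / 2)) := by
  have hpow : ((√N : ℝ) : ℂ) ^ (1 / 2 : ℂ) = (((N : ℝ) ^ (1 / 4 : ℝ) : ℝ) : ℂ) := by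
    rw [show (1 / 2 : ℂ) = ((1 / 2 : ℝ) : ℂ) by push_cast; rfl,
      ← ofReal_cpow (Real.sqrt_nonneg _), Real.sqrt_eq_rpow, ← Real.rpow_mul (by positivity)]
    norm_num
  have hpow0 : (((N : ℝ) ^ (1 / 4 : ℝ) : ℝ) : ℂ) ≠ 0 :=
    ofReal_ne_zero.mpr (Real.rpow_pos_of_pos (by positivity) _).ne'
  have hmellin := mellin_thetaKernel hχ heven hN (s := 1 / 2) (by norm_num)
  rw [show (1 / 2 / 2 : ℂ) = 1 / 4 by norm_num, mellin_thetaKernel_one_fourth hχ heven hN,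
    hpow] at hmellin
  have hsum := (hasSum_integral_thetaKernel heven hN).add
    ((hasSum_integral_thetaKernel (even_inv heven) hN).mul_left
      (gaussSum χ ZMod.stdAddChar / (√N : ℝ)))
  rw [hmellin] at hsum
  have hdiv := hsum.div_const (2 * (((N : ℝ) ^ (1 / 4 : ℝ) : ℝ) : ℂ))
  simp only [ofReal_mul] at hdiv
  generalize (((N : ℝ) ^ (1 / 4 : ℝ) : ℝ) : ℂ) = Q at *
  rw [show 2 * Gammaℝ (1 / 2) * Q * χ.LFunction (1 / 2) / (2 * Q) =
    Gammaℝ (1 / 2) * χ.LFunction (1 / 2) by field_simp] at hdiv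
  refine hdiv.congr_fun fun n ↦ ?_
  rw [eq_div_iff (mul_ne_zero two_ne_zero hpow0)]
  ring

theorem jacobiChar_even {d : ℕ} [NeZero d] (hd : d % 4 = 1) : (jacobiChar d).Even := by
  rw [DirichletCharacter.Even, ← Int.cast_one (R := ZMod d), ← Int.cast_neg, jacobiChar_intCast,
    jacobiSym.at_neg_one (Nat.odd_iff.mpr (by omega)), ZMod.χ₄_nat_one_mod_four hd, Int.cast_one]

theorem LFunction_jacobiChar_one_half {d : ℕ} [NeZero d] (hd4 : d % 4 = 1) (hd : Squarefree d)
    (hd1 : 1 < d) : (jacobiChar d).LFunction (1 / 2) =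
      ((2 / (π ^ (-(1 / 4) : ℝ) * Real.Gamma (1 / 4)) *
        ∑' n : ℕ, (jacobiSym n d : ℝ) * centralWeight d n : ℝ) : ℂ) := by
  have hinv : (jacobiChar d)⁻¹ = jacobiChar d := by
    rw [inv_eq_iff_mul_eq_one, ← sq, jacobiChar_sq]
  have hsqrt : ((√d : ℝ) : ℂ) ≠ 0 := ofReal_ne_zero.mpr (Real.sqrt_ne_zero'.mpr (by positivity))
  have hΓ : Gammaℝ (1 / 2) = ((π ^ (-(1 / 4) : ℝ) * Real.Gamma (1 / 4) : ℝ) : ℂ) := by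
    rw [Gammaℝ_def, ofReal_mul, ofReal_cpow Real.pi_pos.le, ← Gamma_ofReal]
    push_cast
    norm_num
  have hΓ0 := Gammaℝ_ne_zero_of_re_pos (s := 1 / 2) (by norm_num)
  have hsum := (hasSum_LFunction_one_half (jacobiChar_isPrimitive (Nat.odd_iff.mpr (by omega)) hd)
    (jacobiChar_even hd4) hd1).tsum_eq
  simp only [gaussSum_jacobiChar hd4 hd, hinv, div_self hsqrt, one_mul, ← two_mul, mul_assoc,
    tsum_mul_left, jacobiChar_natCast] at hsum
  rw [ofReal_mul, ofReal_div, ← hΓ]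
  push_cast
  field_simp
  rw [mul_comm, hsum]

end ApproximateFunctionalEquation

section PolyaVinogradov

open Complex
open scoped Real ZMod

variable {N : ℕ} [NeZero N] {χ : DirichletCharacter ℂ N}

theorem two_mul_mul_one_sub_le_sin {x : ℝ} (h0 : 0 ≤ x) (h1 : x ≤ 1) :
    2 * x * (1 - x) ≤ Real.sin (π * x) := by
  wlog hx : x ≤ 1 / 2 generalizing x
  · have := this (x := 1 - x) (by linarith) (by linarith) (by linarith)
    rw [show π * (1 - x) = π - π * x by ring, Real.sin_pi_sub] at this
    linarith
  have hsin := Real.mul_le_sin (x := π * x) (by positivity) (by nlinarith [Real.pi_pos])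
  rw [← mul_assoc, div_mul_cancel₀ _ Real.pi_ne_zero] at hsin
  nlinarith

theorem norm_geom_sum_cexp_le {x : ℝ} (h0 : 0 < x) (h1 : x < 1) (n : ℕ) :
    ‖∑ i ∈ Finset.range n, cexp (2 * π * I * x) ^ i‖ ≤ 1 / 2 * (1 / x + 1 / (1 - x)) := by
  have h1' : 0 < 1 - x := sub_pos.mpr h1
  have hz : cexp (2 * π * I * x) = cexp (I * (2 * π * x : ℝ)) := by
    push_cast
    ring_nf
  set z := cexp (2 * π * I * x)
  have hnorm : ‖z‖ = 1 := by rw [hz, mul_comm, norm_exp_ofReal_mul_I]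
  have hden : 4 * (x * (1 - x)) ≤ ‖z - 1‖ := by
    rw [hz, norm_exp_I_mul_ofReal_sub_one, show 2 * π * x / 2 = π * x by ring]
    refine le_trans ?_ (Real.le_norm_self _)
    linarith [two_mul_mul_one_sub_le_sin h0.le h1.le]
  have hpos : 0 < 4 * (x * (1 - x)) := by positivity
  have hz1 : z ≠ 1 := fun h ↦ by
    rw [h, sub_self, norm_zero] at hden
    exact hden.not_gt hpos
  have hnum : ‖z ^ n - 1‖ ≤ 2 := by
    refine (norm_sub_le _ _).trans ?_
    rw [norm_pow, hnorm, one_pow, norm_one]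
    norm_num
  calc ‖∑ i ∈ Finset.range n, z ^ i‖ = ‖z ^ n - 1‖ / ‖z - 1‖ := by rw [geom_sum_eq hz1, norm_div]
    _ ≤ 2 / (4 * (x * (1 - x))) := div_le_div₀ zero_le_two hnum hpos hden
    _ = 1 / 2 * (1 / x + 1 / (1 - x)) := by field_simp; ring

theorem norm_sum_stdAddChar_pow_le {h : ZMod N} (hh : h ≠ 0) (n : ℕ) :
    ‖∑ i ∈ Finset.range n, ZMod.stdAddChar h ^ i‖ ≤
      N / 2 * (1 / (h.val : ℝ) + 1 / ((N - h.val : ℕ) : ℝ)) := by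
  have hN : (0 : ℝ) < N := by exact_mod_cast NeZero.pos N
  have hpos : (0 : ℝ) < h.val := by exact_mod_cast ZMod.val_pos.mpr hh
  have hlt : (h.val : ℝ) < N := by exact_mod_cast h.val_lt
  have hchar : ZMod.stdAddChar h = cexp (2 * π * I * (h.val / N : ℝ)) := by
    rw [← ZMod.natCast_zmod_val h, ← Int.cast_natCast, ZMod.stdAddChar_coe]
    push_cast
    rw [ZMod.natCast_zmod_val, mul_div_assoc]
  rw [hchar, Nat.cast_sub h.val_lt.le]
  refine (norm_geom_sum_cexp_le (by positivity) ((div_lt_one hN).mpr hlt) n).trans_eq ?_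
  have := sub_pos.mpr hlt
  field_simp

theorem sum_erase_zero_val_eq_sum_Ico {M : Type*} [AddCommMonoid M] (f : ℕ → M) :
    ∑ h ∈ Finset.univ.erase (0 : ZMod N), f h.val = ∑ h ∈ Finset.Ico 1 N, f h := by
  refine Finset.sum_nbij' ZMod.val (fun h ↦ (h : ZMod N)) (fun h hh ↦ ?_) (fun h hh ↦ ?_)
    (fun h _ ↦ ZMod.natCast_zmod_val h) (fun h hh ↦ ?_) fun _ _ ↦ rfl
  · exact Finset.mem_Ico.mpr ⟨ZMod.val_pos.mpr (Finset.ne_of_mem_erase hh), h.val_lt⟩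
  · rw [Finset.mem_Ico] at hh
    refine Finset.mem_erase.mpr ⟨fun h0 ↦ ?_, Finset.mem_univ _⟩
    exact Nat.not_dvd_of_pos_of_lt hh.1 hh.2 ((ZMod.natCast_eq_zero_iff _ _).mp h0)
  · exact ZMod.val_natCast_of_lt (Finset.mem_Ico.mp hh).2

omit [NeZero N] in
theorem sum_Ico_inv_add_inv_le (N : ℕ) :
    ∑ h ∈ Finset.Ico 1 N, (1 / (h : ℝ) + 1 / ((N - h : ℕ) : ℝ)) ≤ 2 * (1 + Real.log N) := by
  have hreflect : ∑ h ∈ Finset.Ico 1 N, 1 / ((N - h : ℕ) : ℝ) = ∑ h ∈ Finset.Ico 1 N, 1 / (h : ℝ) :=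
    Finset.sum_nbij' (N - ·) (N - ·) (by simp; omega) (by simp; omega) (by simp; omega)
      (by simp; omega) fun _ _ ↦ rfl
  have hharmonic : ∑ h ∈ Finset.Ico 1 N, 1 / (h : ℝ) ≤ harmonic N := by
    rw [harmonic_eq_sum_Icc, Rat.cast_sum]
    push_cast
    simp only [one_div]
    exact Finset.sum_le_sum_of_subset_of_nonneg Finset.Ico_subset_Icc_self fun _ _ _ ↦ by positivity
  rw [Finset.sum_add_distrib, hreflect]
  linarith [harmonic_le_one_add_log N]

omit [NeZero N] in
theorem isPrimitive_inv (hχ : χ.IsPrimitive) : χ⁻¹.IsPrimitive := by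
  rwa [DirichletCharacter.isPrimitive_def, DirichletCharacter.conductor_inv]

theorem sum_mul_gaussSum (hχ : χ.IsPrimitive) (a : ZMod N) (n : ℕ) :
    (∑ i ∈ Finset.range n, χ (a + i)) * gaussSum χ⁻¹ ZMod.stdAddChar =
      ∑ h, χ⁻¹ h * ZMod.stdAddChar (a * h) * ∑ i ∈ Finset.range n, ZMod.stdAddChar h ^ i := by
  have hshift :=
    gaussSum_mulShift_of_isPrimitive (e := ZMod.stdAddChar (N := N)) (isPrimitive_inv hχ)
  rw [inv_inv] at hshift
  simp_rw [Finset.sum_mul, ← hshift, gaussSum, Finset.mul_sum]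
  rw [Finset.sum_comm]
  refine Finset.sum_congr rfl fun h _ ↦ Finset.sum_congr rfl fun i _ ↦ ?_
  rw [AddChar.mulShift_apply, add_mul, AddChar.map_add_eq_mul, ← AddChar.map_nsmul_eq_pow,
    nsmul_eq_mul, mul_assoc]

theorem norm_sum_range_le (hχ : χ.IsPrimitive) (hN : 1 < N) (a : ZMod N) (n : ℕ) :
    ‖∑ i ∈ Finset.range n, χ (a + i)‖ ≤ √N * (1 + Real.log N) := by
  have hsqrt : 0 < √(N : ℝ) := Real.sqrt_pos.mpr (by positivity)
  have hgauss : ‖gaussSum χ⁻¹ ZMod.stdAddChar‖ = √N := by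
    rw [← norm_gaussSum_sq (isPrimitive_inv hχ), Real.sqrt_sq (norm_nonneg _)]
  have hterm (h : ZMod N) : ‖χ⁻¹ h * ZMod.stdAddChar (a * h)‖ ≤ 1 := by
    rw [norm_mul, AddChar.norm_apply, mul_one]
    exact χ⁻¹.norm_le_one h
  have hbound : ‖∑ i ∈ Finset.range n, χ (a + i)‖ * √N ≤ N * (1 + Real.log N) := by
    rw [← hgauss, ← norm_mul, sum_mul_gaussSum hχ, ← Finset.add_sum_erase _ _ (Finset.mem_univ 0),
      map_zero_of_one_lt hN, zero_mul, zero_mul, zero_add]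
    calc _ ≤ ∑ h ∈ Finset.univ.erase (0 : ZMod N),
            N / 2 * (1 / (h.val : ℝ) + 1 / ((N - h.val : ℕ) : ℝ)) := by
          refine norm_sum_le_of_le _ fun h hh ↦ ?_
          rw [norm_mul]
          exact (mul_le_of_le_one_left (norm_nonneg _) (hterm h)).trans
            (norm_sum_stdAddChar_pow_le (Finset.ne_of_mem_erase hh) n)
      _ ≤ N / 2 * (2 * (1 + Real.log N)) := by
          rw [sum_erase_zero_val_eq_sum_Ico
            fun h ↦ (N : ℝ) / 2 * (1 / (h : ℝ) + 1 / ((N - h : ℕ) : ℝ)), ← Finset.mul_sum]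
          gcongr
          exact sum_Ico_inv_add_inv_le N
      _ = N * (1 + Real.log N) := by ring
  rwa [← mul_le_mul_iff_left₀ hsqrt, mul_right_comm, Real.mul_self_sqrt N.cast_nonneg]

theorem norm_sum_arith_progression_le (hχ : χ.IsPrimitive) (hN : 1 < N) {u v : ℕ}
    (hv : v.Coprime N) (n : ℕ) :
    ‖∑ i ∈ Finset.range n, χ (u + v * i : ℕ)‖ ≤ √N * (1 + Real.log N) := by
  let w : (ZMod N)ˣ := ZMod.unitOfCoprime v hv
  have hshift (i : ℕ) : χ (u + v * i : ℕ) = χ w * χ (↑w⁻¹ * u + i) := by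
    rw [← map_mul, mul_add, w.mul_inv_cancel_left, ZMod.coe_unitOfCoprime]
    push_cast
    rfl
  simp_rw [hshift, ← Finset.mul_sum, norm_mul]
  exact (mul_le_of_le_one_left (norm_nonneg _) (χ.norm_le_one _)).trans
    (norm_sum_range_le hχ hN _ n)

theorem sum_filter_mod_eq {M : Type*} [AddCommMonoid M] (f : ℕ → M) {e b : ℕ} (hb : b < e)
    (n : ℕ) : ∑ i ∈ Finset.range n with i % e = b, f i =
      ∑ t ∈ Finset.range ((n + (e - 1) - b) / e), f (b + e * t) := by
  have he : 0 < e := by omega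
  refine Finset.sum_nbij' (· / e) (b + e * ·) (fun i hi ↦ ?_) (fun t ht ↦ ?_) (fun i hi ↦ ?_)
    (fun t _ ↦ ?_) (fun i hi ↦ ?_)
  · rw [Finset.mem_filter, Finset.mem_range] at hi
    have := Nat.div_add_mod i e
    rw [Finset.mem_range, ← Nat.succ_le_iff, Nat.le_div_iff_mul_le he, Nat.succ_mul, mul_comm]
    omega
  · rw [Finset.mem_range, ← Nat.succ_le_iff, Nat.le_div_iff_mul_le he, Nat.succ_mul,
      mul_comm] at ht
    rw [Finset.mem_filter, Finset.mem_range, Nat.add_mul_mod_self_left, Nat.mod_eq_of_lt hb]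
    omega
  · rw [← (Finset.mem_filter.mp hi).2, Nat.mod_add_div]
  · rw [Nat.add_mul_div_left _ _ he, Nat.div_eq_of_lt hb, zero_add]
  · rw [← (Finset.mem_filter.mp hi).2, Nat.mod_add_div]

omit [NeZero N] in
theorem norm_sum_filter_dvd_le {E : Type*} [SeminormedAddCommGroup E] {f : ℕ → E} {B : ℝ}
    (hf : ∀ x, ¬x.Coprime N → f x = 0)
    (hB : ∀ u v n : ℕ, v.Coprime N → ‖∑ i ∈ Finset.range n, f (u + v * i)‖ ≤ B)
    {u v e : ℕ} (hv : v.Coprime N) (he : 0 < e) (hev : e.Coprime v) (n : ℕ) :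
    ‖∑ i ∈ Finset.range n with e ∣ u + v * i, f (u + v * i)‖ ≤ B := by
  have hzero : ‖(0 : E)‖ ≤ B := by simpa using hB 0 1 0 N.coprime_one_left
  by_cases hN : e.Coprime N
  swap
  · rwa [Finset.sum_eq_zero fun i hi ↦ hf _ fun hx ↦
      hN (hx.coprime_dvd_left (Finset.mem_filter.mp hi).2)]
  by_cases hex : ∃ i₀, e ∣ u + v * i₀
  swap
  · rwa [Finset.filter_false_of_mem fun i _ h ↦ hex ⟨i, h⟩]
  obtain ⟨i₀, hi₀⟩ := hex
  have hiff (i : ℕ) : e ∣ u + v * i ↔ i % e = i₀ % e := by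
    have hcongr : e ∣ u + v * i ↔ u + v * i ≡ u + v * i₀ [MOD e] := by
      rw [Nat.ModEq, Nat.mod_eq_zero_of_dvd hi₀, Nat.dvd_iff_mod_eq_zero]
    rw [hcongr]
    exact ⟨fun h ↦ (Nat.ModEq.add_left_cancel' u h).cancel_left_of_coprime hev,
      fun h ↦ Nat.ModEq.add_left u (Nat.ModEq.mul_left v h)⟩
  have hsub (t : ℕ) : u + v * (i₀ % e + e * t) = u + v * (i₀ % e) + v * e * t := by ring
  simp_rw [hiff, sum_filter_mod_eq (fun i ↦ f (u + v * i)) (Nat.mod_lt i₀ he), hsub]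
  exact hB _ _ _ (hv.mul_left hN)

omit [NeZero N] in
theorem sum_divisors_filter_dvd_moebius (x : ℕ) {s : ℕ} (hs : s ≠ 0) :
    ∑ e ∈ s.divisors with e ∣ x, ArithmeticFunction.moebius e = if x.Coprime s then 1 else 0 := by
  have hgcd : {e ∈ s.divisors | e ∣ x} = (x.gcd s).divisors := by
    ext e
    simp only [Finset.mem_filter, Nat.mem_divisors, Nat.dvd_gcd_iff, ne_eq, Nat.gcd_eq_zero_iff]
    tauto
  rw [hgcd, ← ArithmeticFunction.coe_zeta_mul_apply, ArithmeticFunction.coe_zeta_mul_moebius,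
    ArithmeticFunction.one_apply]

omit [NeZero N] in
theorem jacobiSym_sq_mul {s r : ℕ} (hs : s ≠ 0) (hr : r ≠ 0) (x : ℕ) :
    jacobiSym x (s ^ 2 * r) =
      (∑ e ∈ s.divisors with e ∣ x, ArithmeticFunction.moebius e) * jacobiSym x r := by
  have : NeZero s := ⟨hs⟩
  have : NeZero r := ⟨hr⟩
  rw [sum_divisors_filter_dvd_moebius x hs, jacobiSym.mul_right, jacobiSym.pow_right]
  split_ifs with hx
  · rw [jacobiSym.sq_one (by rwa [Int.gcd_natCast_natCast])]
  · rw [jacobiSym.eq_zero_iff_not_coprime.mpr (by rwa [Int.gcd_natCast_natCast]),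
      zero_pow two_ne_zero]

omit [NeZero N] in
theorem sum_jacobiSym_sq_mul {s r : ℕ} (hs : s ≠ 0) [NeZero r] (u v n : ℕ) :
    ((∑ i ∈ Finset.range n, (jacobiSym (u + v * i : ℕ) (s ^ 2 * r) : ℝ) : ℝ) : ℂ) =
      ∑ e ∈ s.divisors, (ArithmeticFunction.moebius e : ℂ) *
        ∑ i ∈ Finset.range n with e ∣ u + v * i, jacobiChar r (u + v * i : ℕ) := by
  simp_rw [jacobiSym_sq_mul hs (NeZero.ne r), Finset.mul_sum, Finset.sum_filter]
  rw [Finset.sum_comm]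
  rw [ofReal_sum]
  refine Finset.sum_congr rfl fun i _ ↦ ?_
  rw [Finset.sum_mul, Int.cast_sum, ofReal_sum]
  refine Finset.sum_congr rfl fun e _ ↦ ?_
  rw [jacobiChar_natCast]
  split_ifs <;> simp

omit [NeZero N] in
theorem abs_sum_jacobiSym_le (hodd : Odd N) (hsq : ¬IsSquare N) {u v : ℕ} (hv : v.Coprime N)
    (n : ℕ) : |∑ i ∈ Finset.range n, (jacobiSym (u + v * i : ℕ) N : ℝ)| ≤
      √N * (1 + Real.log N) := by
  obtain ⟨r, s, hr0, hs0, rfl, hr⟩ := Nat.sq_mul_squarefree_of_pos hodd.pos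
  have : NeZero r := ⟨hr0.ne'⟩
  have hr1 : 1 < r := by
    refine lt_of_le_of_ne hr0 fun h ↦ hsq ?_
    rw [← h, mul_one]
    exact IsSquare.sq s
  have hprim := jacobiChar_isPrimitive (hodd.of_dvd_nat (Dvd.intro_left _ rfl)) hr
  have hvs : v.Coprime s := hv.coprime_dvd_right ((dvd_pow_self s two_ne_zero).mul_right r)
  calc |∑ i ∈ Finset.range n, (jacobiSym (u + v * i : ℕ) (s ^ 2 * r) : ℝ)|
      ≤ ∑ e ∈ s.divisors, √r * (1 + Real.log r) := by
        rw [← Real.norm_eq_abs, ← norm_real, sum_jacobiSym_sq_mul hs0.ne']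
        refine norm_sum_le_of_le _ fun e he ↦ ?_
        have hmoebius : ‖(ArithmeticFunction.moebius e : ℂ)‖ ≤ 1 := by
          rw [norm_intCast]
          exact_mod_cast ArithmeticFunction.abs_moebius_le_one
        rw [norm_mul]
        exact (mul_le_of_le_one_left (norm_nonneg _) hmoebius).trans
          (norm_sum_filter_dvd_le (fun x hx ↦ (jacobiChar r).map_nonunit fun hunit ↦
            hx ((ZMod.isUnit_iff_coprime _ _).mp hunit)) (f := fun x ↦ jacobiChar r (x : ℕ))
            (fun u v n hv ↦ norm_sum_arith_progression_le hprim hr1 hv n)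
            (hv.coprime_dvd_right (Dvd.intro_left _ rfl)) (Nat.pos_of_mem_divisors he)
            (hvs.symm.coprime_dvd_left (Nat.dvd_of_mem_divisors he)) n)
    _ = s.divisors.card * (√r * (1 + Real.log r)) := by rw [Finset.sum_const, nsmul_eq_mul]
    _ ≤ s * (√r * (1 + Real.log (s ^ 2 * r : ℕ))) := by
        gcongr
        · exact_mod_cast Nat.card_divisors_le_self s
        · exact Nat.le_mul_of_pos_left _ (by positivity)
    _ = √(s ^ 2 * r : ℕ) * (1 + Real.log (s ^ 2 * r : ℕ)) := by
        rw [← mul_assoc, Nat.cast_mul, Nat.cast_pow, Real.sqrt_mul (by positivity),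
          Real.sqrt_sq s.cast_nonneg]

end PolyaVinogradov

section SquarefreeSieve

theorem sq_dvd_sq_mul_iff {a b r : ℕ} (hb : b ≠ 0) (hr : Squarefree r) :
    a ^ 2 ∣ b ^ 2 * r ↔ a ∣ b := by
  refine ⟨fun h ↦ ?_, fun h ↦ (pow_dvd_pow_of_dvd h 2).mul_right r⟩
  obtain ⟨g, a', b', hg, hcop, rfl, rfl⟩ :=
    Nat.exists_coprime' (m := a) (n := b) (Nat.gcd_pos_of_pos_right _ (Nat.pos_of_ne_zero hb))
  have ha' : a' ^ 2 ∣ b' ^ 2 * r := by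
    refine Nat.dvd_of_mul_dvd_mul_left (pow_pos hg 2) ?_
    rwa [← mul_pow, ← mul_assoc, ← mul_pow, mul_comm g, mul_comm g]
  have ha'r : a' * a' ∣ r := sq a' ▸ (hcop.pow 2 2).dvd_of_dvd_mul_left ha'
  rw [Nat.isUnit_iff.mp (hr a' ha'r), one_mul]
  exact dvd_mul_left g b'

theorem sum_moebius_sq_dvd {d M : ℕ} (hd : 0 < d) (hM : d ≤ M) :
    ∑ a ∈ Finset.Icc 1 M with a ^ 2 ∣ d, ArithmeticFunction.moebius a =
      if Squarefree d then 1 else 0 := by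
  obtain ⟨r, b, -, hb, rfl, hr⟩ := Nat.sq_mul_squarefree_of_pos hd
  have hfilter : {a ∈ Finset.Icc 1 M | a ^ 2 ∣ b ^ 2 * r} = b.divisors := by
    ext a
    rw [Finset.mem_filter, Nat.mem_divisors, Finset.mem_Icc, sq_dvd_sq_mul_iff hb.ne' hr]
    refine ⟨fun h ↦ ⟨h.2, hb.ne'⟩, fun ⟨h, _⟩ ↦ ⟨⟨Nat.pos_of_dvd_of_pos h hb, ?_⟩, h⟩⟩
    exact (Nat.le_of_dvd hd (h.trans ((Dvd.intro_left b (sq b).symm).mul_right r))).trans hM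
  have hsq : Squarefree (b ^ 2 * r) ↔ b = 1 :=
    ⟨fun h ↦ Nat.isUnit_iff.mp (h b ⟨r, by ring⟩), by rintro rfl; simpa using hr⟩
  rw [hfilter, ← ArithmeticFunction.coe_zeta_mul_apply, ArithmeticFunction.coe_zeta_mul_moebius,
    ArithmeticFunction.one_apply]
  simp only [hsq]

/-- The `j < J` for which `1 + 8 * j` is squarefree: they index the discriminants `d ≡ 1 (mod 8)`
over which the moments are bounded below. -/
noncomputable def squarefreeIndices (J : ℕ) : Finset ℕ :=
  {j ∈ Finset.range J | Squarefree (1 + 8 * j)}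

theorem sum_squarefreeIndices_eq (f : ℕ → ℝ) (J : ℕ) :
    ∑ j ∈ squarefreeIndices J, f j = ∑ a ∈ Finset.Icc 1 (8 * J),
      (ArithmeticFunction.moebius a : ℝ) * ∑ j ∈ Finset.range J with a ^ 2 ∣ 1 + 8 * j, f j := by
  simp_rw [squarefreeIndices, Finset.mul_sum, Finset.sum_filter]
  rw [Finset.sum_comm]
  refine Finset.sum_congr rfl fun j hj ↦ ?_
  have hmoebius := sum_moebius_sq_dvd (d := 1 + 8 * j) (M := 8 * J) (by omega)
    (by have := Finset.mem_range.mp hj; omega)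
  rw [← Finset.sum_filter, ← Finset.sum_mul, ← Int.cast_sum, hmoebius]
  split_ifs <;> simp

theorem card_sq_dvd_le (J : ℕ) {a : ℕ} (ha : 0 < a) :
    ({j ∈ Finset.range J | a ^ 2 ∣ 1 + 8 * j}.card : ℝ) ≤ 8 * J / (a : ℝ) ^ 2 := by
  have hcard : {j ∈ Finset.range J | a ^ 2 ∣ 1 + 8 * j}.card ≤
      (Finset.Icc 1 (8 * J / a ^ 2)).card := by
    refine Finset.card_le_card_of_injOn (fun j ↦ (1 + 8 * j) / a ^ 2) (fun j hj ↦ ?_) ?_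
    · simp only [Finset.coe_filter, Finset.mem_range, Set.mem_ofPred_eq] at hj
      rw [Finset.coe_Icc, Set.mem_Icc]
      exact ⟨Nat.div_pos (Nat.le_of_dvd (by omega) hj.2) (by positivity),
        Nat.div_le_div_right (by omega)⟩
    · intro i hi j hj hij
      simp only [Finset.coe_filter, Set.mem_ofPred_eq] at hi hj hij
      have := (Nat.div_left_inj hi.2 hj.2).mp hij
      omega
  rw [Nat.card_Icc, Nat.add_sub_cancel] at hcard
  exact (Nat.cast_le.mpr hcard).trans (Nat.cast_div_le.trans_eq (by push_cast; rfl))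

theorem abs_jacobiSym_le_one (a : ℤ) (b : ℕ) : |(jacobiSym a b : ℝ)| ≤ 1 := by
  rcases jacobiSym.trichotomy a b with h | h | h <;> rw [h] <;> norm_num

theorem sqrt_mul_one_add_log_le {x : ℝ} (hx : 1 ≤ x) :
    √x * (1 + Real.log x) ≤ 9 * x ^ (5 / 8 : ℝ) := by
  have hlog : Real.log x ≤ x ^ (1 / 8 : ℝ) / (1 / 8) :=
    Real.log_le_rpow_div (by positivity) (by norm_num)
  have hone : 1 ≤ x ^ (1 / 8 : ℝ) := Real.one_le_rpow hx (by norm_num)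
  calc √x * (1 + Real.log x) ≤ √x * (9 * x ^ (1 / 8 : ℝ)) := by gcongr; linarith
    _ = 9 * x ^ (5 / 8 : ℝ) := by
      rw [Real.sqrt_eq_rpow, mul_left_comm, ← Real.rpow_add (by positivity)]
      norm_num

theorem coprime_eight_of_odd {N : ℕ} (hN : Odd N) : Nat.Coprime 8 N :=
  (Nat.coprime_two_left.mpr hN).pow_left 3

theorem abs_sum_jacobiSym_sq_dvd_le {N : ℕ} (hodd : Odd N) (hsq : ¬IsSquare N) {a : ℕ}
    (ha : 0 < a) (J : ℕ) :
    |∑ j ∈ Finset.range J with a ^ 2 ∣ 1 + 8 * j, (jacobiSym (1 + 8 * j : ℕ) N : ℝ)| ≤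
      9 * (N : ℝ) ^ (5 / 8 : ℝ) := by
  have hN : NeZero N := ⟨hodd.pos.ne'⟩
  rcases Nat.even_or_odd a with heven | haodd
  · rw [Finset.filter_false_of_mem fun j _ h ↦ ?_, Finset.sum_empty, abs_zero]
    · positivity
    · have := (heven.two_dvd.trans (Dvd.intro _ (sq a).symm)).trans h
      omega
  · refine norm_sum_filter_dvd_le (f := fun x ↦ (jacobiSym (x : ℕ) N : ℝ)) (N := N)
      (fun x hx ↦ ?_) (fun u v n hv ↦ ?_) (coprime_eight_of_odd hodd) (by positivity)
      (coprime_eight_of_odd haodd.pow).symm J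
    · rw [jacobiSym.eq_zero_iff_not_coprime.mpr (by rwa [Int.gcd_natCast_natCast]), Int.cast_zero]
    · exact (abs_sum_jacobiSym_le hodd hsq hv n).trans
        (sqrt_mul_one_add_log_le (by exact_mod_cast hodd.pos))

theorem le_rpow_mul_rpow {x B Y s t : ℝ} (hs : 0 ≤ s) (ht : 0 ≤ t) (hst : s + t = 1) (hx : 0 ≤ x)
    (hB : x ≤ B) (hY : x ≤ Y) : x ≤ B ^ s * Y ^ t := by
  have hB0 : 0 ≤ B := hx.trans hB
  calc x = x ^ s * x ^ t := by rw [← Real.rpow_add_of_nonneg hx hs ht, hst, Real.rpow_one]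
    _ ≤ B ^ s * Y ^ t := by gcongr

theorem abs_sum_jacobiSym_squarefreeIndices_le : ∃ C : ℝ, 0 < C ∧
    ∀ N : ℕ, Odd N → ¬IsSquare N → ∀ J : ℕ,
      |∑ j ∈ squarefreeIndices J, (jacobiSym (1 + 8 * j : ℕ) N : ℝ)| ≤
        C * (J : ℝ) ^ (3 / 5 : ℝ) * (N : ℝ) ^ (1 / 4 : ℝ) := by
  have hsum : Summable fun a : ℕ ↦ (a : ℝ) ^ (-(6 / 5) : ℝ) :=
    Real.summable_nat_rpow.mpr (by norm_num)
  set Z := ∑' a : ℕ, (a : ℝ) ^ (-(6 / 5) : ℝ)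
  have hZ : 0 < Z := hsum.tsum_pos (fun _ ↦ by positivity) 1 (by simp)
  refine ⟨9 ^ (2 / 5 : ℝ) * 8 ^ (3 / 5 : ℝ) * Z, by positivity, fun N hodd hsq J ↦ ?_⟩
  set T : ℝ := 9 ^ (2 / 5 : ℝ) * 8 ^ (3 / 5 : ℝ) * (J : ℝ) ^ (3 / 5 : ℝ) * (N : ℝ) ^ (1 / 4 : ℝ)
  have hterm (a : ℕ) (ha : a ∈ Finset.Icc 1 (8 * J)) :
      |(ArithmeticFunction.moebius a : ℝ) *
        ∑ j ∈ Finset.range J with a ^ 2 ∣ 1 + 8 * j, (jacobiSym (1 + 8 * j : ℕ) N : ℝ)| ≤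
        T * (a : ℝ) ^ (-(6 / 5) : ℝ) := by
    have ha1 := (Finset.mem_Icc.mp ha).1
    have ha0 : (0 : ℝ) < a := by exact_mod_cast ha1
    have hmoebius : |(ArithmeticFunction.moebius a : ℝ)| ≤ 1 := by
      exact_mod_cast ArithmeticFunction.abs_moebius_le_one (n := a)
    have htrivial : |∑ j ∈ Finset.range J with a ^ 2 ∣ 1 + 8 * j,
        (jacobiSym (1 + 8 * j : ℕ) N : ℝ)| ≤ 8 * J / (a : ℝ) ^ 2 := by
      refine ((Finset.abs_sum_le_sum_abs _ _).trans
        (Finset.sum_le_card_nsmul _ _ 1 fun j _ ↦ abs_jacobiSym_le_one _ _)).trans ?_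
      simpa using card_sq_dvd_le J ha1
    rw [abs_mul]
    refine (mul_le_of_le_one_left (abs_nonneg _) hmoebius).trans ?_
    refine (le_rpow_mul_rpow (s := 2 / 5) (t := 3 / 5) (by norm_num) (by norm_num) (by norm_num)
      (abs_nonneg _) (abs_sum_jacobiSym_sq_dvd_le hodd hsq ha1 J) htrivial).trans_eq ?_
    rw [Real.mul_rpow (by positivity) (by positivity),
      Real.div_rpow (by positivity) (by positivity),
      Real.mul_rpow (by positivity) (by positivity), ← Real.rpow_mul (by positivity),
      ← Real.rpow_natCast (a : ℝ) 2, ← Real.rpow_mul ha0.le, div_eq_mul_inv (_ * _),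
      ← Real.rpow_neg ha0.le]
    norm_num [T]
    ring
  rw [sum_squarefreeIndices_eq]
  calc _ ≤ ∑ a ∈ Finset.Icc 1 (8 * J), T * (a : ℝ) ^ (-(6 / 5) : ℝ) :=
        (Finset.abs_sum_le_sum_abs _ _).trans (Finset.sum_le_sum hterm)
    _ ≤ T * Z := by
        rw [← Finset.mul_sum]
        exact mul_le_mul_of_nonneg_left (hsum.sum_le_tsum _ fun _ _ ↦ by positivity)
          (by positivity)
    _ = _ := by ring

end SquarefreeSieve

section TwistedSums

theorem abs_sum_mul_le_of_monotone {f w : ℕ → ℝ} (hw : Monotone w) (hw0 : 0 ≤ w 0) {J : ℕ} {E : ℝ}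
    (hE : ∀ i ≤ J, |∑ j ∈ Finset.range i, f j| ≤ E) :
    |∑ j ∈ Finset.range J, f j * w j| ≤ 2 * E * w J := by
  have hparts (n : ℕ) : ∑ j ∈ Finset.range n, f j * w j = (∑ j ∈ Finset.range n, f j) * w n -
      ∑ j ∈ Finset.range n, (∑ i ∈ Finset.range (j + 1), f i) * (w (j + 1) - w j) := by
    induction n with
    | zero => simp
    | succ n ih => simp only [Finset.sum_range_succ, ih]; ring
  have hE0 : 0 ≤ E := (abs_nonneg _).trans (hE 0 J.zero_le)
  have hboundary : |(∑ j ∈ Finset.range J, f j) * w J| ≤ E * w J := by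
    have hwJ : 0 ≤ w J := hw0.trans (hw J.zero_le)
    rw [abs_mul, abs_of_nonneg hwJ]
    exact mul_le_mul_of_nonneg_right (hE J le_rfl) hwJ
  have hsum : |∑ j ∈ Finset.range J, (∑ i ∈ Finset.range (j + 1), f i) * (w (j + 1) - w j)| ≤
      E * (w J - w 0) := by
    rw [← Finset.sum_range_sub w, Finset.mul_sum]
    refine (Finset.abs_sum_le_sum_abs _ _).trans (Finset.sum_le_sum fun j hj ↦ ?_)
    have hstep : 0 ≤ w (j + 1) - w j := sub_nonneg.mpr (hw j.le_succ)
    rw [abs_mul, abs_of_nonneg hstep]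
    exact mul_le_mul_of_nonneg_right (hE _ (Finset.mem_range.mp hj)) hstep
  rw [hparts]
  linarith [abs_sub ((∑ j ∈ Finset.range J, f j) * w J)
    (∑ j ∈ Finset.range J, (∑ i ∈ Finset.range (j + 1), f i) * (w (j + 1) - w j)),
    mul_nonneg hE0 hw0]

theorem odd_ordCompl_two {n : ℕ} (hn : n ≠ 0) : Odd (ordCompl[2] n) :=
  Nat.not_even_iff_odd.mp fun h ↦ Nat.not_dvd_ordCompl Nat.prime_two hn h.two_dvd

theorem jacobiSym_eq_jacobiSym_ordCompl {n d : ℕ} (hn : n ≠ 0) (hd : d % 8 = 1) :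
    jacobiSym n d = jacobiSym d (ordCompl[2] n) := by
  have htwo : jacobiSym 2 d = 1 := by
    rw [jacobiSym.at_two (Nat.odd_iff.mpr (by omega)), ZMod.χ₈_nat_eq_if_mod_eight,
      if_neg (by omega), if_pos (by omega)]
  conv_lhs => rw [← Nat.ordProj_mul_ordCompl_eq_self n 2, Nat.cast_mul, Nat.cast_pow,
    jacobiSym.mul_left, jacobiSym.pow_left, Nat.cast_two, htwo, one_pow, one_mul]
  exact (jacobiSym.quadratic_reciprocity_one_mod_four (by omega) (odd_ordCompl_two hn)).symm

/-- The `n`-th term of `∑ L(1/2, χ_d) χ_d(m)`, after summation over the discriminants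
`d = 1 + 8 * j` with `j < J`. -/
noncomputable def twistedSum (J n m : ℕ) : ℝ :=
  ∑ j ∈ squarefreeIndices J,
    (jacobiSym (n * m : ℕ) (1 + 8 * j) : ℝ) * centralWeight ((1 + 8 * j : ℕ) : ℝ) n

theorem abs_twistedSum_le : ∃ C : ℝ, 0 < C ∧ ∀ n m J : ℕ, 0 < n → 0 < m → 0 < J →
    ¬IsSquare (ordCompl[2] (n * m)) → |twistedSum J n m| ≤
      C * (J : ℝ) ^ (99 / 100 : ℝ) * (m : ℝ) ^ (1 / 4 : ℝ) * (n : ℝ) ^ (-(103 / 100) : ℝ) := by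
  obtain ⟨C, hC, hsieve⟩ := abs_sum_jacobiSym_squarefreeIndices_le
  have : 0 < Real.Gamma (1 / 4 + 39 / 100) := Real.Gamma_pos_of_pos (by norm_num)
  refine ⟨2 * C * (Real.Gamma (1 / 4 + 39 / 100) * 9 ^ (39 / 100 : ℝ)), by positivity,
    fun n m J hn hm hJ hsq ↦ ?_⟩
  have hnm : n * m ≠ 0 := by positivity
  have hn0 : (0 : ℝ) < n := by exact_mod_cast hn
  have hJ0 : (0 : ℝ) < J := by exact_mod_cast hJ
  set N := ordCompl[2] (n * m)
  have hNle : (N : ℝ) ≤ n * m := by exact_mod_cast Nat.div_le_self (n * m) _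
  have hflip : twistedSum J n m = ∑ j ∈ Finset.range J,
      (if Squarefree (1 + 8 * j) then (jacobiSym (1 + 8 * j : ℕ) N : ℝ) else 0) *
        centralWeight ((1 + 8 * j : ℕ) : ℝ) n := by
    rw [twistedSum, squarefreeIndices, Finset.sum_filter]
    refine Finset.sum_congr rfl fun j _ ↦ ?_
    rw [jacobiSym_eq_jacobiSym_ordCompl hnm (by omega), ite_mul, zero_mul]
  have hweight : centralWeight ((1 + 8 * J : ℕ) : ℝ) n ≤ Real.Gamma (1 / 4 + 39 / 100) *
      (9 * J) ^ (39 / 100 : ℝ) * (n : ℝ) ^ (-(1 / 2 + 2 * (39 / 100)) : ℝ) := by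
    have hJ9 : ((1 + 8 * J : ℕ) : ℝ) ≤ 9 * J := by exact_mod_cast (by omega : 1 + 8 * J ≤ 9 * J)
    exact (centralWeight_le (s := 39 / 100) (by norm_num) (by positivity) hn0).trans (by gcongr)
  have hweight0 := centralWeight_nonneg (Y := ((1 + 8 * J : ℕ) : ℝ)) (by positivity) n
  rw [hflip]
  refine (abs_sum_mul_le_of_monotone (w := fun j ↦ centralWeight ((1 + 8 * j : ℕ) : ℝ) n)
    (fun i j hij ↦ centralWeight_le_centralWeight (by positivity) (by gcongr) hn0)
    (centralWeight_nonneg (by norm_num) _)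
    (E := C * (J : ℝ) ^ (3 / 5 : ℝ) * (N : ℝ) ^ (1 / 4 : ℝ)) fun i hi ↦ ?_).trans ?_
  · rw [← Finset.sum_filter]
    exact (hsieve N (odd_ordCompl_two hnm) hsq i).trans (by gcongr)
  calc _ ≤ 2 * (C * (J : ℝ) ^ (3 / 5 : ℝ) * ((n : ℝ) * m) ^ (1 / 4 : ℝ)) *
        (Real.Gamma (1 / 4 + 39 / 100) * (9 * J) ^ (39 / 100 : ℝ) *
          (n : ℝ) ^ (-(1 / 2 + 2 * (39 / 100)) : ℝ)) := by gcongr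
    _ = 2 * C * (Real.Gamma (1 / 4 + 39 / 100) * 9 ^ (39 / 100 : ℝ)) *
        ((J : ℝ) ^ (3 / 5 : ℝ) * (J : ℝ) ^ (39 / 100 : ℝ)) * (m : ℝ) ^ (1 / 4 : ℝ) *
        ((n : ℝ) ^ (1 / 4 : ℝ) * (n : ℝ) ^ (-(1 / 2 + 2 * (39 / 100)) : ℝ)) := by
      rw [Real.mul_rpow hn0.le (by positivity), Real.mul_rpow (by norm_num) hJ0.le]
      ring
    _ = _ := by
      rw [← Real.rpow_add hJ0, ← Real.rpow_add hn0]
      norm_num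

end TwistedSums

section CoprimeIntegers

/-- The integers of `[1, y]` prime to `M`. The reciprocals of its multiples of `q` carry at most a
proportion `1 / q` of the total mass, which makes it a convenient source of random integers. -/
def coprimeUpTo (M y : ℕ) : Finset ℕ :=
  {a ∈ Finset.Icc 1 y | a.Coprime M}

variable {M P y a q : ℕ}

theorem mem_coprimeUpTo : a ∈ coprimeUpTo M y ↔ (1 ≤ a ∧ a ≤ y) ∧ a.Coprime M := by
  simp [coprimeUpTo]

theorem lt_of_dvd_of_mem_coprimeUpTo_factorial (ha : a ∈ coprimeUpTo P.factorial y) (hq : 1 < q)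
    (hqa : q ∣ a) : P < q := by
  by_contra! hqP
  exact hq.ne' (((mem_coprimeUpTo.mp ha).2.coprime_dvd_left hqa).eq_one_of_dvd
    (Nat.dvd_factorial (by lia) hqP))

theorem sum_coprimeUpTo_inv_nonneg (M y : ℕ) : 0 ≤ ∑ a ∈ coprimeUpTo M y, (a : ℝ)⁻¹ :=
  Finset.sum_nonneg fun _ _ ↦ by positivity

theorem sum_coprimeUpTo_inv_dvd_le (M y q : ℕ) :
    ∑ a ∈ coprimeUpTo M y with q ∣ a, (a : ℝ)⁻¹ ≤ (∑ a ∈ coprimeUpTo M y, (a : ℝ)⁻¹) / q := by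
  have hsub : {a ∈ coprimeUpTo M y | q ∣ a} ⊆ (coprimeUpTo M y).image (q * ·) := by
    intro a ha
    obtain ⟨ha, b, rfl⟩ := Finset.mem_filter.mp ha
    obtain ⟨⟨hpos, hle⟩, hcop⟩ := mem_coprimeUpTo.mp ha
    have hb : 0 < b := Nat.pos_of_mul_pos_left hpos
    exact Finset.mem_image_of_mem _ (mem_coprimeUpTo.mpr
      ⟨⟨hb, (Nat.le_mul_of_pos_left b (Nat.pos_of_mul_pos_right hpos)).trans hle⟩,
        hcop.coprime_mul_left⟩)
  calc _ ≤ ∑ a ∈ (coprimeUpTo M y).image (q * ·), (a : ℝ)⁻¹ :=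
        Finset.sum_le_sum_of_subset_of_nonneg hsub fun _ _ _ ↦ by positivity
    _ ≤ ∑ b ∈ coprimeUpTo M y, ((q * b : ℕ) : ℝ)⁻¹ :=
        Finset.sum_image_le_of_nonneg fun _ _ ↦ by positivity
    _ = _ := by
        rw [Finset.sum_div]
        refine Finset.sum_congr rfl fun b _ ↦ ?_
        rw [Nat.cast_mul, mul_inv, mul_comm, div_eq_mul_inv]

theorem log_le_two_mul_log_div_add_two (hM : 0 < M) (hy : M ^ 2 ≤ y) :
    Real.log y ≤ 2 * Real.log ((y - 1) / M + 1 + 1 : ℕ) := by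
  set w := (y - 1) / M + 1 + 1
  have hyw : y ≤ M * w := by
    have := Nat.lt_mul_div_succ (y - 1) hM
    have : M * ((y - 1) / M + 1) ≤ M * w := Nat.mul_le_mul_left _ (Nat.le_succ _)
    lia
  have hy0 : 0 < y := (pow_pos hM 2).trans_le hy
  have hsq : y ≤ w ^ 2 := by nlinarith
  rw [← Nat.cast_two (R := ℝ), ← Real.log_pow]
  exact Real.log_le_log (by exact_mod_cast hy0) (by exact_mod_cast hsq)

theorem log_div_le_sum_coprimeUpTo_inv (hM : 0 < M) (hy : M ^ 2 ≤ y) :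
    Real.log y / (2 * M) ≤ ∑ a ∈ coprimeUpTo M y, (a : ℝ)⁻¹ := by
  set n := (y - 1) / M + 1
  have hM1 : (1 : ℝ) ≤ M := by exact_mod_cast hM
  have hy0 : 0 < y := (pow_pos hM 2).trans_le hy
  have hsub : (Finset.range n).image (fun t ↦ 1 + M * t) ⊆ coprimeUpTo M y := by
    refine Finset.image_subset_iff.mpr fun t ht ↦ mem_coprimeUpTo.mpr ⟨⟨by lia, ?_⟩, by simp⟩
    have : M * t ≤ M * ((y - 1) / M) := Nat.mul_le_mul_left _ (by grind)
    have := Nat.mul_div_le (y - 1) M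
    lia
  have hinj : Set.InjOn (fun t ↦ 1 + M * t) (Finset.range n) := fun s _ t _ hst ↦
    Nat.eq_of_mul_eq_mul_left hM (by simpa using hst)
  calc Real.log y / (2 * M) ≤ Real.log (n + 1 : ℕ) / M := by
        rw [div_le_div_iff₀ (by positivity) (by positivity)]
        nlinarith [log_le_two_mul_log_div_add_two hM hy]
    _ ≤ (harmonic n : ℝ) / M := by gcongr; exact log_add_one_le_harmonic n
    _ = ∑ t ∈ Finset.range n, (M * (t + 1) : ℝ)⁻¹ := by
        simp only [harmonic, Rat.cast_sum, Finset.sum_div]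
        refine Finset.sum_congr rfl fun t _ ↦ ?_
        push_cast
        rw [mul_inv, mul_comm, div_eq_mul_inv]
    _ ≤ ∑ t ∈ Finset.range n, ((1 + M * t : ℕ) : ℝ)⁻¹ := by
        gcongr with t
        push_cast
        linarith
    _ = ∑ a ∈ (Finset.range n).image (fun t ↦ 1 + M * t), (a : ℝ)⁻¹ :=
        (Finset.sum_image (f := fun a : ℕ ↦ (a : ℝ)⁻¹) hinj).symm
    _ ≤ _ := Finset.sum_le_sum_of_subset_of_nonneg hsub fun _ _ _ ↦ by positivity

end CoprimeIntegers

section RandomTuples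

variable {ι : Type*} [Fintype ι] {P y : ℕ} {Y : ι → ℕ} {z : ι → ℕ}

/-- Tuples of positive integers whose entries are squarefree and pairwise coprime, and whose
product has no abundance of small prime factors. -/
structure IsGoodTuple (z : ι → ℕ) : Prop where
  squarefree (i : ι) : Squarefree (z i)
  coprime : Pairwise (Function.onFun Nat.Coprime z)
  sum_inv_le : ∑ p ∈ (∏ i, z i).primeFactors, (p : ℝ)⁻¹ ≤ 1 / 4

/-- A count of the pairs of entries which `q` obstructs from being squarefree and coprime, plus
four times the contribution of `q` to the sum of reciprocals in `IsGoodTuple`. -/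
noncomputable def localDefect (q : ℕ) (z : ι → ℕ) : ℝ :=
  (Finset.card {p : ι × ι | Pi.mulSingle p.1 q * Pi.mulSingle p.2 q ∣ z} : ℝ) +
    4 / q * (Finset.card {i | Pi.mulSingle i q ∣ z} : ℝ)

/-- The total obstruction to `IsGoodTuple`: it is at least `1` at a tuple with entries in
`coprimeUpTo P! y` which is not good, and it is small on average. -/
noncomputable def tupleDefect (P y : ℕ) (z : ι → ℕ) : ℝ :=
  ∑ q ∈ Finset.Ioc P y, localDefect q z

theorem localDefect_nonneg (q : ℕ) (z : ι → ℕ) : 0 ≤ localDefect q z := by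
  unfold localDefect
  positivity

theorem tupleDefect_nonneg (P y : ℕ) (z : ι → ℕ) : 0 ≤ tupleDefect P y z :=
  Finset.sum_nonneg fun q _ ↦ localDefect_nonneg q z

omit [Fintype ι] in
theorem mulSingle_dvd_iff {i : ι} {q : ℕ} : Pi.mulSingle i q ∣ z ↔ q ∣ z i := by
  refine pi_dvd_iff.trans ⟨fun h ↦ by simpa using h i, fun h j ↦ ?_⟩
  rcases eq_or_ne j i with rfl | hj
  · simpa
  · simp [hj]

omit [Fintype ι] in
theorem mulSingle_mul_mulSingle_dvd {i j : ι} {q : ℕ} (hij : i ≠ j) (hi : q ∣ z i) (hj : q ∣ z j) :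
    Pi.mulSingle i q * Pi.mulSingle j q ∣ z := by
  refine pi_dvd_iff.mpr fun l ↦ ?_
  rcases eq_or_ne l i with rfl | hli
  · simpa [hij]
  · simpa [hli] using pi_dvd_iff.mp (mulSingle_dvd_iff.mpr hj) l

theorem not_dvd_of_tupleDefect_lt_one (h : tupleDefect P y z < 1) {q : ℕ}
    (hq : q ∈ Finset.Ioc P y) (i j : ι) : ¬Pi.mulSingle i q * Pi.mulSingle j q ∣ z := by
  intro hdvd
  have hpair : 0 < Finset.card {p : ι × ι | Pi.mulSingle p.1 q * Pi.mulSingle p.2 q ∣ z} :=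
    Finset.card_pos.mpr ⟨(i, j), by simpa using hdvd⟩
  refine h.not_ge ?_
  calc (1 : ℝ) ≤ Finset.card {p : ι × ι | Pi.mulSingle p.1 q * Pi.mulSingle p.2 q ∣ z} := by
        exact_mod_cast hpair
    _ ≤ localDefect q z := by
        unfold localDefect
        exact le_add_of_nonneg_right (by positivity)
    _ ≤ tupleDefect P y z :=
        Finset.single_le_sum (f := (localDefect · z)) (fun q _ ↦ localDefect_nonneg q z) hq

theorem sum_primeFactors_inv_le_tupleDefect
    (hbig : ∀ i q, 1 < q → q ∣ z i → q ∈ Finset.Ioc P y) :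
    4 * ∑ p ∈ (∏ i, z i).primeFactors, (p : ℝ)⁻¹ ≤ tupleDefect P y z := by
  have hsub : (∏ i, z i).primeFactors ⊆ Finset.Ioc P y := fun p hp ↦ by
    obtain ⟨hp, hdvd, -⟩ := Nat.mem_primeFactors.mp hp
    obtain ⟨i, -, hi⟩ := (hp.prime.dvd_finsetProd_iff z).mp hdvd
    exact hbig i p hp.one_lt hi
  rw [Finset.mul_sum, tupleDefect]
  refine (Finset.sum_le_sum fun p hp ↦ le_add_of_nonneg_of_le (by positivity) ?_).trans
    (Finset.sum_le_sum_of_subset_of_nonneg hsub fun q _ _ ↦ localDefect_nonneg q z)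
  obtain ⟨hp, hdvd, -⟩ := Nat.mem_primeFactors.mp hp
  obtain ⟨i, -, hi⟩ := (hp.prime.dvd_finsetProd_iff z).mp hdvd
  have hcard : 0 < Finset.card {i | Pi.mulSingle i p ∣ z} :=
    Finset.card_pos.mpr ⟨i, by simpa using mulSingle_dvd_iff.mpr hi⟩
  rw [← div_eq_mul_inv]
  exact le_mul_of_one_le_right (by positivity) (by exact_mod_cast hcard)

theorem isGoodTuple_of_tupleDefect_lt_one
    (hz : z ∈ Fintype.piFinset fun i ↦ coprimeUpTo P.factorial (Y i)) (hY : ∀ i, Y i ≤ y)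
    (h : tupleDefect P y z < 1) : IsGoodTuple z := by
  have hmem (i : ι) : z i ∈ coprimeUpTo P.factorial (Y i) := Fintype.mem_piFinset.mp hz i
  have hpos (i : ι) : z i ≠ 0 := Nat.ne_of_gt (mem_coprimeUpTo.mp (hmem i)).1.1
  have hbig (i : ι) (q : ℕ) (hq : 1 < q) (hqi : q ∣ z i) : q ∈ Finset.Ioc P y :=
    Finset.mem_Ioc.mpr ⟨lt_of_dvd_of_mem_coprimeUpTo_factorial (hmem i) hq hqi,
      (Nat.le_of_dvd (Nat.pos_of_ne_zero (hpos i)) hqi).trans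
        ((mem_coprimeUpTo.mp (hmem i)).1.2.trans (hY i))⟩
  refine ⟨fun i ↦ Nat.squarefree_iff_prime_squarefree.mpr fun p hp hpi ↦ ?_, fun i j hij ↦ ?_, ?_⟩
  · refine not_dvd_of_tupleDefect_lt_one h (hbig i p hp.one_lt (dvd_of_mul_left_dvd hpi)) i i ?_
    rwa [← Pi.mulSingle_mul, mulSingle_dvd_iff]
  · refine Nat.coprime_of_dvd fun p hp hpi hpj ↦ ?_
    exact not_dvd_of_tupleDefect_lt_one h (hbig i p hp.one_lt hpi) i j
      (mulSingle_mul_mulSingle_dvd hij hpi hpj)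
  · linarith [sum_primeFactors_inv_le_tupleDefect hbig]

theorem sum_prod_inv_dvd_le (M : ℕ) (Y e : ι → ℕ) :
    ∑ z ∈ Fintype.piFinset fun i ↦ coprimeUpTo M (Y i), (if e ∣ z then ∏ i, (z i : ℝ)⁻¹ else 0) ≤
      (∏ i, ∑ a ∈ coprimeUpTo M (Y i), (a : ℝ)⁻¹) / ∏ i, (e i : ℝ) := by
  calc _ = ∏ i, ∑ a ∈ coprimeUpTo M (Y i) with e i ∣ a, (a : ℝ)⁻¹ := by
        rw [Finset.prod_univ_sum, ← Finset.sum_filter]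
        refine Finset.sum_congr (Finset.ext fun z ↦ ?_) fun _ _ ↦ rfl
        simp [pi_dvd_iff, forall_and]
    _ ≤ ∏ i, (∑ a ∈ coprimeUpTo M (Y i), (a : ℝ)⁻¹) / e i :=
        Finset.prod_le_prod (fun _ _ ↦ Finset.sum_nonneg fun _ _ ↦ by positivity)
          fun i _ ↦ sum_coprimeUpTo_inv_dvd_le M (Y i) (e i)
    _ = _ := Finset.prod_div_distrib _ _

theorem sum_Ioc_inv_sq_le_inv (hP : P ≠ 0) (y : ℕ) :
    ∑ q ∈ Finset.Ioc P y, ((q : ℝ) ^ 2)⁻¹ ≤ (P : ℝ)⁻¹ := by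
  rcases le_total P y with h | h
  · exact (sum_Ioc_inv_sq_le_sub hP h).trans (sub_le_self _ (by positivity))
  · simp [Finset.Ioc_eq_empty_of_le h]

theorem sum_mul_tupleDefect (S : Finset (ι → ℕ)) (w : (ι → ℕ) → ℝ) (P y : ℕ) :
    ∑ z ∈ S, w z * tupleDefect P y z = ∑ q ∈ Finset.Ioc P y,
      ((∑ p : ι × ι, ∑ z ∈ S, if Pi.mulSingle p.1 q * Pi.mulSingle p.2 q ∣ z then w z else 0) +
        4 / q * ∑ i, ∑ z ∈ S, if Pi.mulSingle i q ∣ z then w z else 0) := by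
  simp only [tupleDefect, localDefect, Finset.natCast_card_filter, Finset.mul_sum, mul_add]
  rw [Finset.sum_comm]
  refine Finset.sum_congr rfl fun q _ ↦ ?_
  rw [Finset.sum_add_distrib, Finset.sum_comm]
  congr 1
  · simp only [mul_ite, mul_one, mul_zero]
  · rw [Finset.sum_comm]
    refine Finset.sum_congr rfl fun i _ ↦ Finset.sum_congr rfl fun z _ ↦ ?_
    rw [mul_left_comm, mul_ite, mul_one, mul_zero]

theorem sum_prod_inv_mul_tupleDefect_le (M y : ℕ) (hP : P ≠ 0) (Y : ι → ℕ) :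
    ∑ z ∈ Fintype.piFinset fun i ↦ coprimeUpTo M (Y i),
        (∏ i, (z i : ℝ)⁻¹) * tupleDefect P y z ≤
      ((Fintype.card ι : ℝ) ^ 2 + 4 * Fintype.card ι) / P *
        ∏ i, ∑ a ∈ coprimeUpTo M (Y i), (a : ℝ)⁻¹ := by
  set H := ∏ i, ∑ a ∈ coprimeUpTo M (Y i), (a : ℝ)⁻¹
  set S := Fintype.piFinset fun i ↦ coprimeUpTo M (Y i)
  have : 0 ≤ H := Finset.prod_nonneg fun i _ ↦ sum_coprimeUpTo_inv_nonneg M (Y i)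
  have hpair (q : ℕ) (p : ι × ι) : ∑ z ∈ S, (if Pi.mulSingle p.1 q * Pi.mulSingle p.2 q ∣ z then
      ∏ i, (z i : ℝ)⁻¹ else 0) ≤ H * ((q : ℝ) ^ 2)⁻¹ := by
    refine (sum_prod_inv_dvd_le M Y _).trans_eq ?_
    rw [← Nat.cast_prod]
    simp [Finset.prod_mul_distrib, sq, H, div_eq_mul_inv]
  have hsingle (q : ℕ) (i : ι) : ∑ z ∈ S, (if Pi.mulSingle i q ∣ z then
      ∏ i, (z i : ℝ)⁻¹ else 0) ≤ H * (q : ℝ)⁻¹ := by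
    refine (sum_prod_inv_dvd_le M Y _).trans_eq ?_
    rw [← Nat.cast_prod]
    simp [H, div_eq_mul_inv]
  rw [sum_mul_tupleDefect]
  calc _ ≤ ∑ q ∈ Finset.Ioc P y, ((∑ _p : ι × ι, H * ((q : ℝ) ^ 2)⁻¹) +
        4 / q * ∑ _i : ι, H * (q : ℝ)⁻¹) := by
        gcongr
        · exact hpair _ _
        · exact hsingle _ _
    _ = ((Fintype.card ι : ℝ) ^ 2 + 4 * Fintype.card ι) * H *
        ∑ q ∈ Finset.Ioc P y, ((q : ℝ) ^ 2)⁻¹ := by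
        rw [Finset.mul_sum]
        refine Finset.sum_congr rfl fun q _ ↦ ?_
        simp only [Finset.sum_const, Finset.card_univ, Fintype.card_prod, nsmul_eq_mul,
          Nat.cast_mul]
        ring
    _ ≤ ((Fintype.card ι : ℝ) ^ 2 + 4 * Fintype.card ι) * H * (P : ℝ)⁻¹ := by
        gcongr
        exact sum_Ioc_inv_sq_le_inv hP y
    _ = _ := by ring

theorem le_sum_isGoodTuple_prod_inv (hP : P ≠ 0) (hY : ∀ i, Y i ≤ y) :
    (1 - ((Fintype.card ι : ℝ) ^ 2 + 4 * Fintype.card ι) / P) *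
        ∏ i, ∑ a ∈ coprimeUpTo P.factorial (Y i), (a : ℝ)⁻¹ ≤
      ∑ z ∈ Fintype.piFinset fun i ↦ coprimeUpTo P.factorial (Y i) with IsGoodTuple z,
        ∏ i, (z i : ℝ)⁻¹ := by
  have hmean := sum_prod_inv_mul_tupleDefect_le P.factorial y hP Y
  rw [one_sub_mul, Finset.prod_univ_sum, Finset.sum_filter]
  rw [Finset.prod_univ_sum] at hmean
  refine (sub_le_sub_left hmean _).trans ?_
  rw [← Finset.sum_sub_distrib]
  refine Finset.sum_le_sum fun z hz ↦ ?_
  have hweight : 0 ≤ ∏ i, (z i : ℝ)⁻¹ := by positivity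
  split_ifs with hgood
  · exact sub_le_self _ (mul_nonneg hweight (tupleDefect_nonneg P y z))
  · have hdefect : 1 ≤ tupleDefect P y z := by
      by_contra! h
      exact hgood (isGoodTuple_of_tupleDefect_lt_one hz hY h)
    exact sub_nonpos.mpr (le_mul_of_one_le_right hweight hdefect)

end RandomTuples

section VennDecomposition

variable {ι : Type*} [Fintype ι] {z : Finset ι → ℕ} {ν : ι → ℕ} {T : Finset ι} {p : ℕ}

/-- Assembles a family of integers indexed by `ι` from the regions of its Venn diagram: `z T` is the
contribution of the primes dividing exactly the members of the family with index in `T`. -/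
noncomputable def vennProduct (z : Finset ι → ℕ) (i : ι) : ℕ :=
  ∏ T with i ∈ T, z T

/-- The regions of the Venn diagram of the prime factors of a family of integers; for squarefree
families, an inverse of `vennProduct`. -/
noncomputable def vennPart (ν : ι → ℕ) (T : Finset ι) : ℕ :=
  ∏ p ∈ (∏ i, ν i).primeFactors with Finset.univ.filter (p ∣ ν ·) = T, p

theorem prod_vennProduct (z : Finset ι → ℕ) : ∏ i, vennProduct z i = ∏ T, z T ^ T.card := by
  simp only [vennProduct]
  rw [Finset.prod_comm' (t' := Finset.univ) (s' := id) (by simp)]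
  simp

theorem dvd_vennProduct_of_dvd (hp : p ∣ z T) {i : ι} (hi : i ∈ T) : p ∣ vennProduct z i :=
  hp.trans (Finset.dvd_prod_of_mem z (by simpa using hi))

theorem exists_dvd_of_dvd_vennProduct (hp : p.Prime) {i : ι} (h : p ∣ vennProduct z i) :
    ∃ T, i ∈ T ∧ p ∣ z T := by
  obtain ⟨T, hT, hpT⟩ := (hp.prime.dvd_finsetProd_iff z).mp h
  exact ⟨T, by simpa using hT, hpT⟩

theorem vennProduct_vennPart (hν : ∀ i, Squarefree (ν i)) : vennProduct (vennPart ν) = ν := by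
  funext i
  have hprod : (∏ i, ν i) ≠ 0 := Finset.prod_ne_zero_iff.mpr fun i _ ↦ (hν i).ne_zero
  have hpf : (ν i).primeFactors = {p ∈ (∏ i, ν i).primeFactors |
      Finset.univ.filter (p ∣ ν ·) ∈ Finset.univ.filter (i ∈ ·)} := by
    ext p
    simp only [Nat.mem_primeFactors, Finset.mem_filter, Finset.mem_univ, true_and]
    exact ⟨fun h ↦ ⟨⟨h.1, h.2.1.trans (Finset.dvd_prod_of_mem ν (Finset.mem_univ i)), hprod⟩,
      h.2.1⟩, fun h ↦ ⟨h.1.1, h.2, (hν i).ne_zero⟩⟩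
  rw [← Nat.prod_primeFactors_of_squarefree (hν i), hpf]
  exact Finset.prod_fiberwise_eq_prod_filter _ _ _ _

theorem filter_dvd_vennProduct_eq (hz : Pairwise (Function.onFun Nat.Coprime z)) (hp : p.Prime)
    (h : p ∣ z T) : Finset.univ.filter (p ∣ vennProduct z ·) = T := by
  ext i
  simp only [Finset.mem_filter, Finset.mem_univ, true_and]
  refine ⟨fun hi ↦ ?_, dvd_vennProduct_of_dvd h⟩
  obtain ⟨T', hi, hpT'⟩ := exists_dvd_of_dvd_vennProduct hp hi
  by_contra hiT
  exact Nat.not_coprime_of_dvd_of_dvd hp.one_lt h hpT' (hz fun h ↦ hiT (h ▸ hi))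

theorem vennPart_vennProduct (hsq : ∀ T, Squarefree (z T))
    (hz : Pairwise (Function.onFun Nat.Coprime z)) (hT : T.Nonempty) :
    vennPart (vennProduct z) T = z T := by
  rw [vennPart, ← Nat.prod_primeFactors_of_squarefree (hsq T)]
  refine Finset.prod_congr (Finset.ext fun p ↦ ?_) fun _ _ ↦ rfl
  simp only [Finset.mem_filter, Nat.mem_primeFactors]
  constructor
  · rintro ⟨⟨hp, -, -⟩, rfl⟩
    obtain ⟨i, hi⟩ := hT
    obtain ⟨T', -, hpT'⟩ := exists_dvd_of_dvd_vennProduct hp (by simpa using hi)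
    exact ⟨hp, (filter_dvd_vennProduct_eq hz hp hpT').symm ▸ hpT', (hsq _).ne_zero⟩
  · rintro ⟨hp, hpT, -⟩
    obtain ⟨i, hi⟩ := hT
    refine ⟨⟨hp, (dvd_vennProduct_of_dvd hpT hi).trans
      (Finset.dvd_prod_of_mem _ (Finset.mem_univ i)), ?_⟩, filter_dvd_vennProduct_eq hz hp hpT⟩
    rw [prod_vennProduct]
    exact Finset.prod_ne_zero_iff.mpr fun T _ ↦ pow_ne_zero _ (hsq T).ne_zero

theorem vennPart_pos (ν : ι → ℕ) (T : Finset ι) : 0 < vennPart ν T :=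
  Finset.prod_pos fun _ hp ↦ Nat.pos_of_mem_primeFactors (Finset.mem_of_mem_filter _ hp)

theorem vennPart_le_of_mem (hν : ∀ i, Squarefree (ν i)) {i : ι} (hi : i ∈ T) :
    vennPart ν T ≤ ν i := by
  refine Nat.le_of_dvd (Nat.pos_of_ne_zero (hν i).ne_zero) ?_
  conv_rhs => rw [← vennProduct_vennPart hν]
  exact Finset.dvd_prod_of_mem _ (by simpa using hi)

theorem factorization_prod_eq_card (hν : ∀ i, Squarefree (ν i)) (hp : p.Prime) :
    (∏ i, ν i).factorization p = (Finset.univ.filter (p ∣ ν ·)).card := by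
  rw [Nat.factorization_prod fun i _ ↦ (hν i).ne_zero, Finsupp.finsetSum_apply, Finset.card_filter]
  refine Finset.sum_congr rfl fun i _ ↦ ?_
  split_ifs with h
  · exact le_antisymm ((hν i).natFactorization_le_one p)
      (hp.factorization_pos_of_dvd (hν i).ne_zero h)
  · exact Nat.factorization_eq_zero_of_not_dvd h

theorem vennPart_eq_one_of_isSquare (hν : ∀ i, Squarefree (ν i)) (hsq : IsSquare (∏ i, ν i))
    (hT : ¬(T.Nonempty ∧ Even T.card)) : vennPart ν T = 1 := by
  rw [vennPart, Finset.filter_false_of_mem, Finset.prod_empty]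
  rintro p hp rfl
  obtain ⟨hp, hdvd, hne⟩ := Nat.mem_primeFactors.mp hp
  refine hT ⟨?_, ?_⟩
  · obtain ⟨i, -, hi⟩ := (hp.prime.dvd_finsetProd_iff ν).mp hdvd
    exact ⟨i, by simpa using hi⟩
  · obtain ⟨r, hr⟩ := hsq
    have hr0 : r ≠ 0 := by rintro rfl; exact hne (by simpa using hr)
    rw [← factorization_prod_eq_card hν hp, hr, Nat.factorization_mul hr0 hr0, Finsupp.add_apply]
    exact ⟨_, rfl⟩

/-- A complement of `∏ i, vennProduct z i` to a square, to which the region `∅` contributes a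
square; the regions with three or more elements, where the truncated subtraction returns `0`, are
meant to be trivial. -/
def vennCofactor (z : Finset ι → ℕ) : ℕ :=
  ∏ T, z T ^ (2 - T.card)

theorem vennCofactor_mul_prod_vennProduct (hz : ∀ T, 2 < T.card → z T = 1) :
    vennCofactor z * ∏ i, vennProduct z i = (∏ T, z T) ^ 2 := by
  rw [vennCofactor, prod_vennProduct, ← Finset.prod_mul_distrib, ← Finset.prod_pow]
  refine Finset.prod_congr rfl fun T _ ↦ ?_
  rcases le_or_gt T.card 2 with h | h
  · rw [← pow_add, Nat.sub_add_cancel h]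
  · simp [hz T h]

theorem eq_of_vennCofactor_eq_of_vennProduct_eq {z' : Finset ι → ℕ} (hz : IsGoodTuple z)
    (hz' : IsGoodTuple z') (hcofactor : vennCofactor z = vennCofactor z')
    (hproduct : vennProduct z = vennProduct z') : z = z' := by
  have hne (T : Finset ι) (hT : T.Nonempty) : z T = z' T := by
    rw [← vennPart_vennProduct hz.squarefree hz.coprime hT, hproduct,
      vennPart_vennProduct hz'.squarefree hz'.coprime hT]
  funext T
  rcases T.eq_empty_or_nonempty with rfl | hT
  · simp only [vennCofactor] at hcofactor
    rw [← Finset.mul_prod_erase _ _ (Finset.mem_univ ∅),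
      ← Finset.mul_prod_erase _ _ (Finset.mem_univ ∅)] at hcofactor
    rw [Finset.prod_congr rfl fun T hT ↦ by
      rw [hne T (Finset.nonempty_iff_ne_empty.mpr (Finset.ne_of_mem_erase hT))]] at hcofactor
    have hpos : 0 < ∏ T ∈ Finset.univ.erase (∅ : Finset ι), z' T ^ (2 - T.card) :=
      Finset.prod_pos fun T _ ↦ pow_pos (Nat.pos_of_ne_zero (hz'.squarefree T).ne_zero) _
    exact Nat.pow_left_injective two_ne_zero (Nat.eq_of_mul_eq_mul_right hpos hcofactor)
  · exact hne T hT

theorem vennProduct_le {y : ℕ} (hy : 0 < y) (hz : ∀ T, z T ≤ y) (i : ι) :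
    vennProduct z i ≤ y ^ 2 ^ Fintype.card ι := by
  refine (Finset.prod_le_pow_card _ _ y fun T _ ↦ hz T).trans (Nat.pow_le_pow_right hy ?_)
  exact (Finset.card_le_univ _).trans_eq Fintype.card_finset

theorem vennCofactor_le {y : ℕ} (hy : 0 < y) (hz : ∀ T, z T ≤ y) :
    vennCofactor z ≤ (y ^ 2 ^ Fintype.card ι) ^ 2 := by
  rw [← pow_mul, mul_comm, pow_mul]
  refine (Finset.prod_le_pow_card _ _ (y ^ 2) fun T _ ↦ ?_).trans_eq (by simp)
  exact (Nat.pow_le_pow_left (hz T) _).trans (Nat.pow_le_pow_right hy (Nat.sub_le _ _))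

theorem squarefree_vennProduct (hz : IsGoodTuple z) (i : ι) : Squarefree (vennProduct z i) :=
  Finset.squarefree_prod_of_pairwise_isCoprime
    (fun _ _ _ _ h ↦ Nat.coprime_iff_isRelPrime.mp (hz.coprime h)) fun T _ ↦ hz.squarefree T

end VennDecomposition

section TruncatedSums

/-- The odd squarefree integers up to `x`. -/
def oddSquarefree (x : ℕ) : Finset ℕ :=
  {n ∈ Finset.Icc 1 x | Odd n ∧ Squarefree n}

/-- The `k`-tuples of odd squarefree integers up to `x`. -/
def oddSquarefreeTuples (k x : ℕ) : Finset (Fin k → ℕ) :=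
  Fintype.piFinset fun _ ↦ oddSquarefree x

/-- A truncation of the divergent Dirichlet series of `L(1/2, χ_d)`. -/
noncomputable def truncatedSum (x d : ℕ) : ℝ :=
  ∑ n ∈ oddSquarefree x, (n : ℝ) ^ (-(1 / 2) : ℝ) * jacobiSym n d

variable {k x J : ℕ} {ν : Fin k → ℕ}

theorem jacobiSym_prod_left {ι : Type*} (s : Finset ι) (a : ι → ℤ) (b : ℕ) :
    jacobiSym (∏ i ∈ s, a i) b = ∏ i ∈ s, jacobiSym (a i) b := by
  induction s using Finset.induction with
  | empty => simp
  | insert i s hi ih => rw [Finset.prod_insert hi, Finset.prod_insert hi, jacobiSym.mul_left, ih]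

theorem truncatedSum_pow (k x d : ℕ) : truncatedSum x d ^ k = ∑ ν ∈ oddSquarefreeTuples k x,
    ((∏ i, ν i : ℕ) : ℝ) ^ (-(1 / 2) : ℝ) * jacobiSym (∏ i, ν i : ℕ) d := by
  rw [truncatedSum, ← Fin.prod_const, Finset.prod_univ_sum]
  refine Finset.sum_congr rfl fun ν _ ↦ ?_
  rw [Finset.prod_mul_distrib, Real.finsetProd_rpow _ _ fun i _ ↦ by positivity]
  push_cast
  congr 1
  exact_mod_cast (jacobiSym_prod_left Finset.univ (fun i ↦ (ν i : ℤ)) d).symm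

theorem mem_oddSquarefree {n : ℕ} :
    n ∈ oddSquarefree x ↔ (1 ≤ n ∧ n ≤ x) ∧ Odd n ∧ Squarefree n := by
  simp [oddSquarefree]

theorem prod_pos_of_mem_oddSquarefreeTuples (hν : ν ∈ oddSquarefreeTuples k x) : 0 < ∏ i, ν i :=
  Finset.prod_pos fun i _ ↦ (mem_oddSquarefree.mp (Fintype.mem_piFinset.mp hν i)).1.1

theorem prod_le_pow_of_mem_oddSquarefreeTuples (hν : ν ∈ oddSquarefreeTuples k x) :
    ∏ i, ν i ≤ x ^ k := by
  simpa using Finset.prod_le_pow_card Finset.univ ν x fun i _ ↦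
    (mem_oddSquarefree.mp (Fintype.mem_piFinset.mp hν i)).1.2

theorem odd_prod_of_mem_oddSquarefreeTuples (hν : ν ∈ oddSquarefreeTuples k x) :
    Odd (∏ i, ν i) :=
  Finset.prod_induction _ Odd (fun _ _ ↦ Odd.mul) odd_one fun i _ ↦
    (mem_oddSquarefree.mp (Fintype.mem_piFinset.mp hν i)).2.1

theorem prod_rpow_le_one_of_mem_oddSquarefreeTuples (hν : ν ∈ oddSquarefreeTuples k x) :
    ((∏ i, ν i : ℕ) : ℝ) ^ (-(1 / 2) : ℝ) ≤ 1 :=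
  Real.rpow_le_one_of_one_le_of_nonpos
    (by exact_mod_cast prod_pos_of_mem_oddSquarefreeTuples hν) (by norm_num)

theorem card_oddSquarefreeTuples_le (k x : ℕ) : (oddSquarefreeTuples k x).card ≤ x ^ k := by
  rw [oddSquarefreeTuples, Fintype.card_piFinset_const]
  exact Nat.pow_le_pow_left ((Finset.card_filter_le _ _).trans_eq (by simp)) k

/-- The values taken by the region `T` of a tuple whose product is a square. -/
def squareRegion (x : ℕ) {k : ℕ} (T : Finset (Fin k)) : Finset ℕ :=
  if T.Nonempty ∧ Even T.card then Finset.Icc 1 x else {1}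

theorem vennPart_mem_piFinset_squareRegion (hν : ν ∈ oddSquarefreeTuples k x)
    (hsq : IsSquare (∏ i, ν i)) : vennPart ν ∈ Fintype.piFinset (squareRegion x) := by
  have hmem (i : Fin k) := mem_oddSquarefree.mp (Fintype.mem_piFinset.mp hν i)
  refine Fintype.mem_piFinset.mpr fun T ↦ ?_
  unfold squareRegion
  split_ifs with hT
  · obtain ⟨i, hi⟩ := hT.1
    exact Finset.mem_Icc.mpr ⟨vennPart_pos ν T,
      (vennPart_le_of_mem (fun i ↦ (hmem i).2.2) hi).trans (hmem i).1.2⟩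
  · exact Finset.mem_singleton.mpr
      (vennPart_eq_one_of_isSquare (fun i ↦ (hmem i).2.2) hsq hT)

theorem sum_Icc_inv_sq_le_two (x : ℕ) : ∑ a ∈ Finset.Icc 1 x, ((a : ℝ) ^ 2)⁻¹ ≤ 2 := by
  rcases x.eq_zero_or_pos with rfl | hx
  · simp
  · rw [← Finset.add_sum_Ioc_eq_sum_Icc hx]
    have := sum_Ioc_inv_sq_le_inv one_ne_zero x
    norm_num at this ⊢
    linarith

theorem sum_squareRegion_le (x : ℕ) (T : Finset (Fin k)) :
    ∑ a ∈ squareRegion x T, ((a : ℝ) ^ T.card) ^ (-(1 / 2) : ℝ) ≤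
      2 * if T.card = 2 then 1 + Real.log x else 1 := by
  have hlog : 0 ≤ Real.log x := Real.log_natCast_nonneg x
  unfold squareRegion
  split_ifs with hT hcard hcard
  · have : (harmonic x : ℝ) = ∑ a ∈ Finset.Icc 1 x, ((a : ℝ) ^ T.card) ^ (-(1 / 2) : ℝ) := by
      rw [harmonic_eq_sum_Icc]
      push_cast
      refine Finset.sum_congr rfl fun a _ ↦ ?_
      rw [hcard, ← Real.rpow_natCast, ← Real.rpow_mul (by positivity)]
      norm_num [Real.rpow_neg_one]
    linarith [harmonic_le_one_add_log x]
  · have hcard4 : 4 ≤ T.card := by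
      obtain ⟨r, hr⟩ := hT.2
      have := hT.1.card_pos
      lia
    rw [mul_one]
    refine (Finset.sum_le_sum fun a ha ↦ ?_).trans (sum_Icc_inv_sq_le_two x)
    have ha1 : (1 : ℝ) ≤ a := by exact_mod_cast (Finset.mem_Icc.mp ha).1
    rw [← Real.rpow_natCast, ← Real.rpow_mul (by positivity), ← Real.rpow_natCast,
      ← Real.rpow_neg (by positivity)]
    refine Real.rpow_le_rpow_of_exponent_le ha1 ?_
    have : (4 : ℝ) ≤ T.card := by exact_mod_cast hcard4
    push_cast
    linarith
  · norm_num
    linarith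
  · norm_num

theorem prod_rpow_eq_prod_vennPart_rpow (hν : ∀ i, Squarefree (ν i)) :
    ((∏ i, ν i : ℕ) : ℝ) ^ (-(1 / 2) : ℝ) =
      ∏ T, ((vennPart ν T : ℝ) ^ T.card) ^ (-(1 / 2) : ℝ) := by
  rw [Real.finsetProd_rpow _ _ fun T _ ↦ by positivity]
  congr 1
  calc ((∏ i, ν i : ℕ) : ℝ) = (∏ i, vennProduct (vennPart ν) i : ℕ) := by
        rw [vennProduct_vennPart hν]
    _ = _ := by rw [prod_vennProduct]; push_cast; rfl

theorem prod_sum_squareRegion_le (k x : ℕ) :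
    ∏ T : Finset (Fin k), ∑ a ∈ squareRegion x T, ((a : ℝ) ^ T.card) ^ (-(1 / 2) : ℝ) ≤
      2 ^ 2 ^ k * (1 + Real.log x) ^ k.choose 2 := by
  have hcard : (Finset.univ.filter fun T : Finset (Fin k) ↦ T.card = 2).card = k.choose 2 := by
    rw [← Fintype.card_subtype, Fintype.card_finset_len, Fintype.card_fin]
  refine (Finset.prod_le_prod (fun T _ ↦ Finset.sum_nonneg fun _ _ ↦ by positivity)
    fun T _ ↦ sum_squareRegion_le x T).trans_eq ?_
  rw [Finset.prod_mul_distrib, ← Finset.prod_filter, Finset.prod_const, Finset.prod_const, hcard]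
  simp

theorem sum_oddSquarefreeTuples_isSquare_le (k x : ℕ) :
    ∑ ν ∈ oddSquarefreeTuples k x with IsSquare (∏ i, ν i),
        ((∏ i, ν i : ℕ) : ℝ) ^ (-(1 / 2) : ℝ) ≤
      2 ^ 2 ^ k * (1 + Real.log x) ^ k.choose 2 := by
  set f : (Finset (Fin k) → ℕ) → ℝ := fun z ↦ ∏ T, ((z T : ℝ) ^ T.card) ^ (-(1 / 2) : ℝ)
  have hsf {ν : Fin k → ℕ} (hν : ν ∈ oddSquarefreeTuples k x) (i : Fin k) : Squarefree (ν i) :=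
    (mem_oddSquarefree.mp (Fintype.mem_piFinset.mp hν i)).2.2
  have hinj : Set.InjOn vennPart (oddSquarefreeTuples k x : Set (Fin k → ℕ)) :=
    fun ν hν ν' hν' h ↦ by
      rw [← vennProduct_vennPart (hsf hν), h, vennProduct_vennPart (hsf hν')]
  calc _ = ∑ ν ∈ oddSquarefreeTuples k x with IsSquare (∏ i, ν i), f (vennPart ν) :=
        Finset.sum_congr rfl fun ν hν ↦
          prod_rpow_eq_prod_vennPart_rpow (hsf (Finset.mem_of_mem_filter _ hν))
    _ = ∑ z ∈ {ν ∈ oddSquarefreeTuples k x | IsSquare (∏ i, ν i)}.image vennPart, f z :=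
        (Finset.sum_image (hinj.mono (Finset.coe_subset.mpr (Finset.filter_subset _ _)))).symm
    _ ≤ ∑ z ∈ Fintype.piFinset (squareRegion x), f z := by
        refine Finset.sum_le_sum_of_subset_of_nonneg (Finset.image_subset_iff.mpr fun ν hν ↦ ?_)
          fun z _ _ ↦ Finset.prod_nonneg fun T _ ↦ by positivity
        exact vennPart_mem_piFinset_squareRegion (Finset.mem_filter.mp hν).1
          (Finset.mem_filter.mp hν).2
    _ = ∏ T, ∑ a ∈ squareRegion x T, ((a : ℝ) ^ T.card) ^ (-(1 / 2) : ℝ) := by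
        rw [Finset.prod_univ_sum]
    _ ≤ _ := prod_sum_squareRegion_le k x

theorem sum_jacobiSym_prod_le (hν : ν ∈ oddSquarefreeTuples k x) (hsq : ¬IsSquare (∏ i, ν i))
    (J : ℕ) : ∑ j ∈ Finset.range J, (jacobiSym (∏ i, ν i : ℕ) (1 + 8 * j) : ℝ) ≤ 9 * x ^ k := by
  have hpos := prod_pos_of_mem_oddSquarefreeTuples hν
  have hodd := odd_prod_of_mem_oddSquarefreeTuples hν
  have hle : ((∏ i, ν i : ℕ) : ℝ) ≤ (x : ℝ) ^ k := by
    exact_mod_cast prod_le_pow_of_mem_oddSquarefreeTuples hν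
  have hcop := coprime_eight_of_odd hodd
  generalize ∏ i, ν i = N at *
  have : NeZero N := ⟨hpos.ne'⟩
  have hN1 : (1 : ℝ) ≤ N := by exact_mod_cast hpos
  calc _ = ∑ j ∈ Finset.range J, (jacobiSym (1 + 8 * j : ℕ) N : ℝ) := by
        refine Finset.sum_congr rfl fun j _ ↦ ?_
        rw [jacobiSym_eq_jacobiSym_ordCompl hpos.ne' (by lia),
          Nat.factorization_eq_zero_of_not_dvd hodd.not_two_dvd_nat, pow_zero, Nat.div_one]
    _ ≤ √N * (1 + Real.log N) := (le_abs_self _).trans (abs_sum_jacobiSym_le hodd hsq hcop J)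
    _ ≤ 9 * (N : ℝ) ^ (5 / 8 : ℝ) := sqrt_mul_one_add_log_le hN1
    _ ≤ 9 * (N : ℝ) := by
        gcongr
        exact Real.rpow_le_self_of_one_le hN1 (by norm_num)
    _ ≤ 9 * x ^ k := by gcongr

theorem sum_truncatedSum_pow_le (k x J : ℕ) :
    ∑ j ∈ Finset.range J, truncatedSum x (1 + 8 * j) ^ k ≤
      J * (2 ^ 2 ^ k * (1 + Real.log x) ^ k.choose 2) + 9 * (x : ℝ) ^ (2 * k) := by
  have hterm (ν : Fin k → ℕ) (hν : ν ∈ oddSquarefreeTuples k x) :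
      ((∏ i, ν i : ℕ) : ℝ) ^ (-(1 / 2) : ℝ) *
        ∑ j ∈ Finset.range J, (jacobiSym (∏ i, ν i : ℕ) (1 + 8 * j) : ℝ) ≤
      (if IsSquare (∏ i, ν i) then J * ((∏ i, ν i : ℕ) : ℝ) ^ (-(1 / 2) : ℝ) else 0) +
        9 * (x : ℝ) ^ k := by
    have hweight : 0 ≤ ((∏ i, ν i : ℕ) : ℝ) ^ (-(1 / 2) : ℝ) := by positivity
    split_ifs with hsq
    · refine le_add_of_le_of_nonneg ?_ (by positivity)
      rw [mul_comm]
      gcongr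
      refine (Finset.sum_le_card_nsmul _ _ 1 fun j _ ↦
        (le_abs_self _).trans (abs_jacobiSym_le_one _ _)).trans_eq (by simp)
    · rw [zero_add]
      exact (mul_le_mul_of_nonneg_left (sum_jacobiSym_prod_le hν hsq J) hweight).trans
        (mul_le_of_le_one_left (by positivity) (prod_rpow_le_one_of_mem_oddSquarefreeTuples hν))
  have hcard : ((oddSquarefreeTuples k x).card : ℝ) ≤ (x : ℝ) ^ k := by
    exact_mod_cast card_oddSquarefreeTuples_le k x
  simp_rw [truncatedSum_pow]
  rw [Finset.sum_comm]
  simp_rw [← Finset.mul_sum]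
  refine (Finset.sum_le_sum hterm).trans ?_
  rw [Finset.sum_add_distrib, ← Finset.sum_filter, ← Finset.mul_sum, Finset.sum_const,
    nsmul_eq_mul, two_mul k, pow_add, mul_left_comm]
  gcongr
  exact sum_oddSquarefreeTuples_isSquare_le k x

end TruncatedSums

section Counting

variable {q : ℕ}

theorem card_dvd_one_add_eight_mul_le (hq : 0 < q) (J : ℕ) :
    ({j ∈ Finset.range J | q ∣ 1 + 8 * j}.card : ℝ) ≤ J * (q : ℝ)⁻¹ + 1 := by
  by_cases hex : ∃ i, q ∣ 1 + 8 * i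
  · obtain ⟨i, hi⟩ := hex
    have hcop : q.gcd 8 = 1 := Nat.dvd_one.mp <|
      (Nat.dvd_add_left ((Nat.gcd_dvd_right q 8).mul_right i)).mp ((Nat.gcd_dvd_left q 8).trans hi)
    have hclass (j : ℕ) : q ∣ 1 + 8 * j ↔ j ≡ i [MOD q] := by
      rw [← Nat.modEq_zero_iff_dvd]
      have hi0 : 1 + 8 * i ≡ 0 [MOD q] := Nat.modEq_zero_iff_dvd.mpr hi
      exact ⟨fun h ↦ ((h.trans hi0.symm).add_left_cancel' 1).cancel_left_of_coprime hcop,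
        fun h ↦ ((h.mul_left 8).add_left 1).trans hi0⟩
    have hcard : {j ∈ Finset.range J | q ∣ 1 + 8 * j}.card ≤ J / q + 1 := by
      simp only [hclass]
      rw [← Nat.count_eq_card_filter_range, Nat.count_modEq_card _ hq]
      split_ifs <;> lia
    calc _ ≤ ((J / q : ℕ) : ℝ) + 1 := by exact_mod_cast hcard
      _ ≤ J * (q : ℝ)⁻¹ + 1 := by
          rw [← div_eq_mul_inv]
          gcongr
          exact Nat.cast_div_le
  · rw [Finset.filter_false_of_mem fun j _ h ↦ hex ⟨j, h⟩, Finset.card_empty, Nat.cast_zero]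
    positivity

theorem sum_Icc_inv_odd_sq_le (s : ℕ) :
    ∑ t ∈ Finset.Icc 1 s, (((2 * t + 1) ^ 2 : ℕ) : ℝ)⁻¹ ≤ 1 / 4 - 1 / (4 * (s + 1)) := by
  induction s with
  | zero => norm_num
  | succ n ih =>
    rw [Finset.sum_Icc_succ_top (by lia)]
    have htelescope : (1 : ℝ) / (4 * (n + 1)) - 1 / (4 * ((n + 1 : ℕ) + 1)) =
        (4 * (n + 1) * (n + 2) : ℝ)⁻¹ := by
      push_cast
      field_simp
      ring
    have : (((2 * (n + 1) + 1) ^ 2 : ℕ) : ℝ)⁻¹ ≤ (4 * (n + 1) * (n + 2) : ℝ)⁻¹ := by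
      refine inv_anti₀ (by positivity) ?_
      push_cast
      nlinarith
    linarith

theorem exists_odd_sq_dvd_of_not_squarefree {j J : ℕ} (hj : j < J) (h : ¬Squarefree (1 + 8 * j)) :
    ∃ t ∈ Finset.Icc 1 (Nat.sqrt (8 * J)), (2 * t + 1) ^ 2 ∣ 1 + 8 * j := by
  obtain ⟨q, hq, hunit⟩ : ∃ q, q * q ∣ 1 + 8 * j ∧ ¬IsUnit q := by
    simpa [Squarefree] using h
  have hodd : Odd q := Nat.Odd.of_mul_left
    (Odd.of_dvd_nat ⟨4 * j, by ring⟩ hq)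
  obtain ⟨t, rfl⟩ := hodd
  have hle := Nat.le_of_dvd (by lia) hq
  refine ⟨t, Finset.mem_Icc.mpr ⟨Nat.pos_of_ne_zero ?_, ?_⟩, by rwa [sq]⟩
  · rintro rfl
    simp at hunit
  · have : 2 * t + 1 ≤ Nat.sqrt (8 * J) := Nat.le_sqrt.mpr (by lia)
    lia

theorem card_not_squarefree_le (J : ℕ) :
    ({j ∈ Finset.range J | ¬Squarefree (1 + 8 * j)}.card : ℝ) ≤ J / 4 + Nat.sqrt (8 * J) := by
  set s := Nat.sqrt (8 * J)
  have hsub : {j ∈ Finset.range J | ¬Squarefree (1 + 8 * j)} ⊆ (Finset.Icc 1 s).biUnion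
      fun t ↦ {j ∈ Finset.range J | (2 * t + 1) ^ 2 ∣ 1 + 8 * j} := fun j hj ↦ by
    rw [Finset.mem_filter, Finset.mem_range] at hj
    obtain ⟨t, ht, hdvd⟩ := exists_odd_sq_dvd_of_not_squarefree hj.1 hj.2
    exact Finset.mem_biUnion.mpr ⟨t, ht, Finset.mem_filter.mpr ⟨Finset.mem_range.mpr hj.1, hdvd⟩⟩
  calc _ ≤ ∑ t ∈ Finset.Icc 1 s, ({j ∈ Finset.range J | (2 * t + 1) ^ 2 ∣ 1 + 8 * j}.card : ℝ) := by
        exact_mod_cast (Finset.card_le_card hsub).trans Finset.card_biUnion_le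
    _ ≤ ∑ t ∈ Finset.Icc 1 s, (J * (((2 * t + 1) ^ 2 : ℕ) : ℝ)⁻¹ + 1) :=
        Finset.sum_le_sum fun t _ ↦ card_dvd_one_add_eight_mul_le (by positivity) J
    _ = J * ∑ t ∈ Finset.Icc 1 s, (((2 * t + 1) ^ 2 : ℕ) : ℝ)⁻¹ + s := by
        rw [Finset.sum_add_distrib, Finset.mul_sum]
        simp
    _ ≤ J * (1 / 4) + s := by
        gcongr
        exact (sum_Icc_inv_odd_sq_le s).trans (sub_le_self _ (by positivity))
    _ = _ := by ring

theorem card_not_coprime_le {W : ℕ} (hW : W ≠ 0)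
    (hsum : ∑ p ∈ W.primeFactors, (p : ℝ)⁻¹ ≤ 1 / 4) (J : ℕ) :
    ({j ∈ Finset.range J | ¬W.Coprime (1 + 8 * j)}.card : ℝ) ≤ J / 4 + W := by
  have hsub : {j ∈ Finset.range J | ¬W.Coprime (1 + 8 * j)} ⊆
      W.primeFactors.biUnion fun p ↦ {j ∈ Finset.range J | p ∣ 1 + 8 * j} := fun j hj ↦ by
    rw [Finset.mem_filter, Nat.Prime.not_coprime_iff_dvd] at hj
    obtain ⟨hj, p, hp, hpW, hpj⟩ := hj
    exact Finset.mem_biUnion.mpr ⟨p, Nat.mem_primeFactors.mpr ⟨hp, hpW, hW⟩,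
      Finset.mem_filter.mpr ⟨hj, hpj⟩⟩
  have hcard : W.primeFactors.card ≤ W := by
    refine (Finset.card_le_card (t := Finset.Icc 1 W) fun p hp ↦ Finset.mem_Icc.mpr
      ⟨Nat.pos_of_mem_primeFactors hp, Nat.le_of_mem_primeFactors hp⟩).trans_eq (by simp)
  calc _ ≤ ∑ p ∈ W.primeFactors, ({j ∈ Finset.range J | p ∣ 1 + 8 * j}.card : ℝ) := by
        exact_mod_cast (Finset.card_le_card hsub).trans Finset.card_biUnion_le
    _ ≤ ∑ p ∈ W.primeFactors, (J * (p : ℝ)⁻¹ + 1) := Finset.sum_le_sum fun p hp ↦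
        card_dvd_one_add_eight_mul_le (Nat.pos_of_mem_primeFactors hp) J
    _ = J * ∑ p ∈ W.primeFactors, (p : ℝ)⁻¹ + W.primeFactors.card := by
        rw [Finset.sum_add_distrib, Finset.mul_sum]
        simp
    _ ≤ J * (1 / 4) + W := by gcongr
    _ = _ := by ring

theorem le_card_coprime_squarefreeIndices {W : ℕ} (hW : W ≠ 0)
    (hsum : ∑ p ∈ W.primeFactors, (p : ℝ)⁻¹ ≤ 1 / 4) (N J : ℕ) :
    (J : ℝ) / 2 - N - W - Nat.sqrt (8 * J) ≤
      {j ∈ squarefreeIndices J | N ≤ 1 + 8 * j ∧ W.Coprime (1 + 8 * j)}.card := by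
  have hsub : Finset.range J ⊆ {j ∈ squarefreeIndices J | N ≤ 1 + 8 * j ∧ W.Coprime (1 + 8 * j)} ∪
      (Finset.range N ∪ ({j ∈ Finset.range J | ¬Squarefree (1 + 8 * j)} ∪
        {j ∈ Finset.range J | ¬W.Coprime (1 + 8 * j)})) := fun j hj ↦ by
    simp only [squarefreeIndices, Finset.mem_union, Finset.mem_filter, hj, true_and,
      Finset.mem_range]
    by_cases hN : j < N
    · exact Or.inr (Or.inl hN)
    · have : N ≤ 1 + 8 * j := by lia
      tauto
  have hcard := (Finset.card_le_card hsub).trans <| (Finset.card_union_le _ _).trans <|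
    Nat.add_le_add_left ((Finset.card_union_le _ _).trans <|
      Nat.add_le_add_left (Finset.card_union_le _ _) _) _
  rw [Finset.card_range, Finset.card_range, ← Nat.cast_le (α := ℝ)] at hcard
  push_cast at hcard
  linarith [card_not_squarefree_le J, card_not_coprime_le hW hsum J]

end Counting

section FirstMoment

theorem jacobiSym_sq_nonneg (a b : ℕ) : (0 : ℝ) ≤ jacobiSym (a ^ 2 : ℕ) b := by
  push_cast
  rw [jacobiSym.pow_left]
  push_cast
  positivity

theorem neg_le_twistedSum : ∃ C : ℝ, 0 < C ∧ ∀ n m J : ℕ, 0 < m → 0 < J →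
    -(C * (J : ℝ) ^ (99 / 100 : ℝ) * (m : ℝ) ^ (1 / 4 : ℝ) * (n : ℝ) ^ (-(103 / 100) : ℝ)) ≤
      twistedSum J n m := by
  obtain ⟨C, hC, hnonsquare⟩ := abs_twistedSum_le
  refine ⟨C, hC, fun n m J hm hJ ↦ ?_⟩
  suffices hsquare : (n = 0 ∨ IsSquare (ordCompl[2] (n * m))) → 0 ≤ twistedSum J n m by
    by_cases h : n = 0 ∨ IsSquare (ordCompl[2] (n * m))
    · exact (neg_nonpos.mpr (by positivity)).trans (hsquare h)
    · push Not at h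
      exact (abs_le.mp (hnonsquare n m J (Nat.pos_of_ne_zero h.1) hm hJ h.2)).1
  refine fun h ↦ Finset.sum_nonneg fun j _ ↦
    mul_nonneg ?_ (centralWeight_nonneg (by positivity) _)
  rcases eq_or_ne n 0 with rfl | hn
  · simpa using jacobiSym_sq_nonneg 0 (1 + 8 * j)
  · obtain ⟨r, hr⟩ := h.resolve_left hn
    have hnm : n * m ≠ 0 := by positivity
    have : NeZero r := ⟨by rintro rfl; exact (Nat.ordCompl_pos 2 hnm).ne' hr⟩
    rw [jacobiSym_eq_jacobiSym_ordCompl hnm (by lia), hr, jacobiSym.mul_right]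
    push_cast
    exact mul_self_nonneg _

theorem le_twistedSum_of_mul_eq_sq : ∃ c : ℝ, 0 < c ∧ ∀ n m W J : ℕ, 0 < n → n * m = W ^ 2 →
    ∑ p ∈ W.primeFactors, (p : ℝ)⁻¹ ≤ 1 / 4 → W ≠ 0 →
    (n : ℝ) ^ 2 + W + Nat.sqrt (8 * J) ≤ J / 4 →
    c * J * (n : ℝ) ^ (-(1 / 2) : ℝ) ≤ twistedSum J n m := by
  obtain ⟨c, hc, hweight⟩ := le_centralWeight
  refine ⟨c / 4, by positivity, fun n m W J hn hnm hsum hW hsize ↦ ?_⟩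
  set G := {j ∈ squarefreeIndices J | n ^ 2 ≤ 1 + 8 * j ∧ W.Coprime (1 + 8 * j)}
  have hcard : (J : ℝ) / 4 ≤ G.card := by
    have := le_card_coprime_squarefreeIndices hW hsum (n ^ 2) J
    push_cast at this
    linarith
  have hterm (j : ℕ) (hj : j ∈ G) : c * (n : ℝ) ^ (-(1 / 2) : ℝ) ≤
      (jacobiSym (n * m : ℕ) (1 + 8 * j) : ℝ) * centralWeight ((1 + 8 * j : ℕ) : ℝ) n := by
    obtain ⟨-, hle, hcop⟩ := Finset.mem_filter.mp hj
    rw [hnm, Nat.cast_pow, jacobiSym.sq_one' (Int.gcd_natCast_natCast _ _ ▸ hcop),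
      Int.cast_one, one_mul]
    exact hweight _ n (by exact_mod_cast hn) (by exact_mod_cast hle)
  calc c / 4 * J * (n : ℝ) ^ (-(1 / 2) : ℝ) = J / 4 * (c * (n : ℝ) ^ (-(1 / 2) : ℝ)) := by ring
    _ ≤ G.card * (c * (n : ℝ) ^ (-(1 / 2) : ℝ)) := by gcongr
    _ ≤ ∑ j ∈ G, (jacobiSym (n * m : ℕ) (1 + 8 * j) : ℝ) *
          centralWeight ((1 + 8 * j : ℕ) : ℝ) n := by
        rw [← nsmul_eq_mul]
        exact Finset.card_nsmul_le_sum G _ _ hterm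
    _ ≤ twistedSum J n m := by
        refine Finset.sum_le_sum_of_subset_of_nonneg (Finset.filter_subset _ _) fun j _ _ ↦ ?_
        rw [hnm]
        exact mul_nonneg (jacobiSym_sq_nonneg _ _) (centralWeight_nonneg (by positivity) _)

/-- The series which, up to a constant factor, represents `L(1/2, χ_d)` when `d % 4 = 1`. -/
noncomputable def centralSeries (d : ℕ) : ℝ :=
  ∑' n : ℕ, (jacobiSym n d : ℝ) * centralWeight d n

theorem hasSum_centralSeries {d : ℕ} (hd : 0 < d) :
    HasSum (fun n : ℕ ↦ (jacobiSym n d : ℝ) * centralWeight d n) (centralSeries d) := by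
  have hd0 : (0 : ℝ) < d := by exact_mod_cast hd
  refine (Summable.of_norm_bounded (summable_centralWeight hd0) fun n ↦ ?_).hasSum
  have := centralWeight_nonneg hd0 n
  rw [norm_mul, Real.norm_of_nonneg this]
  exact mul_le_of_le_one_left this (abs_jacobiSym_le_one _ _)

theorem hasSum_sum_twistedSum (k x J : ℕ) :
    HasSum (fun n : ℕ ↦ ∑ ν ∈ oddSquarefreeTuples k x,
        ((∏ i, ν i : ℕ) : ℝ) ^ (-(1 / 2) : ℝ) * twistedSum J n (∏ i, ν i))
      (∑ j ∈ squarefreeIndices J, centralSeries (1 + 8 * j) * truncatedSum x (1 + 8 * j) ^ k) := by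
  refine (hasSum_sum fun j (_ : j ∈ squarefreeIndices J) ↦
    (hasSum_centralSeries (d := 1 + 8 * j) (by lia)).mul_right
      (truncatedSum x (1 + 8 * j) ^ k)).congr_fun fun n ↦ ?_
  simp only [truncatedSum_pow, twistedSum, Finset.mul_sum]
  rw [Finset.sum_comm]
  refine Finset.sum_congr rfl fun j _ ↦ Finset.sum_congr rfl fun ν _ ↦ ?_
  rw [Nat.cast_mul, jacobiSym.mul_left]
  push_cast
  ring

theorem sum_oddSquarefreeTuples_rpow_le (k x : ℕ) :
    ∑ ν ∈ oddSquarefreeTuples k x, ((∏ i, ν i : ℕ) : ℝ) ^ (-(1 / 2) : ℝ) *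
      ((∏ i, ν i : ℕ) : ℝ) ^ (1 / 4 : ℝ) ≤ (x : ℝ) ^ k := by
  have hcard : ((oddSquarefreeTuples k x).card : ℝ) ≤ (x : ℝ) ^ k := by
    exact_mod_cast card_oddSquarefreeTuples_le k x
  refine (Finset.sum_le_card_nsmul _ _ 1 fun ν hν ↦ ?_).trans (by simpa using hcard)
  have hpos : (1 : ℝ) ≤ (∏ i, ν i : ℕ) := by exact_mod_cast prod_pos_of_mem_oddSquarefreeTuples hν
  rw [← Real.rpow_add (by positivity)]
  exact Real.rpow_le_one_of_one_le_of_nonpos hpos (by norm_num)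

theorem sum_le_add_of_hasSum {α β : Type*} {s : Finset β} {f e : α → β → ℝ} {S E : ℝ}
    (hf : HasSum (fun a ↦ ∑ b ∈ s, f a b) S) (he : HasSum (fun a ↦ ∑ b ∈ s, e a b) E)
    (he0 : ∀ a, ∀ b ∈ s, 0 ≤ e a b) (hfe : ∀ a, ∀ b ∈ s, -e a b ≤ f a b)
    {G : Finset (α × β)} (hG : ∀ q ∈ G, q.2 ∈ s) : ∑ q ∈ G, f q.1 q.2 ≤ S + E := by
  have hnonneg (a : α) (b : β) (hb : b ∈ s) : 0 ≤ f a b + e a b := by linarith [hfe a b hb]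
  have htotal : HasSum (fun a ↦ ∑ b ∈ s, (f a b + e a b)) (S + E) := by
    simpa only [Finset.sum_add_distrib] using hf.add he
  calc _ ≤ ∑ q ∈ G, (f q.1 q.2 + e q.1 q.2) :=
        Finset.sum_le_sum fun q hq ↦ le_add_of_nonneg_right (he0 _ _ (hG q hq))
    _ ≤ ∑ q ∈ G.image Prod.fst ×ˢ s, (f q.1 q.2 + e q.1 q.2) :=
        Finset.sum_le_sum_of_subset_of_nonneg
          (fun q hq ↦ Finset.mem_product.mpr ⟨Finset.mem_image_of_mem _ hq, hG q hq⟩)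
          fun q hq _ ↦ hnonneg q.1 q.2 (Finset.mem_product.mp hq).2
    _ = ∑ a ∈ G.image Prod.fst, ∑ b ∈ s, (f a b + e a b) := Finset.sum_product _ _ _
    _ ≤ S + E := sum_le_hasSum _ (fun a _ ↦ Finset.sum_nonneg (hnonneg a)) htotal

theorem exists_sum_twistedSum_le : ∃ C : ℝ, 0 < C ∧ ∀ (k x J : ℕ), 0 < J →
    ∀ G : Finset (ℕ × (Fin k → ℕ)), (∀ q ∈ G, q.2 ∈ oddSquarefreeTuples k x) →
    ∑ q ∈ G, ((∏ i, q.2 i : ℕ) : ℝ) ^ (-(1 / 2) : ℝ) * twistedSum J q.1 (∏ i, q.2 i) ≤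
      ∑ j ∈ squarefreeIndices J, centralSeries (1 + 8 * j) * truncatedSum x (1 + 8 * j) ^ k +
        C * (J : ℝ) ^ (99 / 100 : ℝ) * (x : ℝ) ^ k := by
  obtain ⟨C, hC, hlower⟩ := neg_le_twistedSum
  have hZ : Summable fun n : ℕ ↦ (n : ℝ) ^ (-(103 / 100) : ℝ) :=
    Real.summable_nat_rpow.mpr (by norm_num)
  set Z := ∑' n : ℕ, (n : ℝ) ^ (-(103 / 100) : ℝ)
  have : 0 ≤ Z := tsum_nonneg fun n ↦ by positivity
  refine ⟨C * (Z + 1), by positivity, fun k x J hJ G hG ↦ ?_⟩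
  set e : ℕ → (Fin k → ℕ) → ℝ := fun n ν ↦ ((∏ i, ν i : ℕ) : ℝ) ^ (-(1 / 2) : ℝ) *
    (C * (J : ℝ) ^ (99 / 100 : ℝ) * ((∏ i, ν i : ℕ) : ℝ) ^ (1 / 4 : ℝ) *
      (n : ℝ) ^ (-(103 / 100) : ℝ))
  set B := ∑ ν ∈ oddSquarefreeTuples k x, ((∏ i, ν i : ℕ) : ℝ) ^ (-(1 / 2) : ℝ) *
    ((∏ i, ν i : ℕ) : ℝ) ^ (1 / 4 : ℝ)
  have herror : HasSum (fun n ↦ ∑ ν ∈ oddSquarefreeTuples k x, e n ν)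
      (C * (J : ℝ) ^ (99 / 100 : ℝ) * B * Z) := by
    refine (hZ.hasSum.mul_left (C * (J : ℝ) ^ (99 / 100 : ℝ) * B)).congr_fun fun n ↦ ?_
    simp only [B, e, Finset.mul_sum, Finset.sum_mul]
    exact Finset.sum_congr rfl fun ν _ ↦ by ring
  refine (sum_le_add_of_hasSum (hasSum_sum_twistedSum k x J) herror
    (fun n ν _ ↦ by positivity) (fun n ν hν ↦ ?_) hG).trans (add_le_add_right ?_ _)
  · rw [← mul_neg]
    exact mul_le_mul_of_nonneg_left
      (hlower n _ J (prod_pos_of_mem_oddSquarefreeTuples hν) hJ) (by positivity)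
  · calc _ ≤ C * (J : ℝ) ^ (99 / 100 : ℝ) * (x : ℝ) ^ k * (Z + 1) := by
          gcongr
          · exact sum_oddSquarefreeTuples_rpow_le k x
          · linarith
      _ = _ := by ring

end FirstMoment

section GoodTuples

variable {k P y : ℕ} {z : Finset (Fin k) → ℕ}

/-- The bound imposed on the region `T` of a Venn diagram: up to `y` for the regions with at most
two elements, which account for the main term, and `1` for the others. -/
def regionBound (y : ℕ) {k : ℕ} (T : Finset (Fin k)) : ℕ :=
  if T.card ≤ 2 then y else 1

/-- The Venn diagrams that parametrise the diagonal terms of the first moment. -/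
noncomputable def goodTuples (k P y : ℕ) : Finset (Finset (Fin k) → ℕ) :=
  {z ∈ Fintype.piFinset fun T ↦ coprimeUpTo P.factorial (regionBound y T) | IsGoodTuple z}

theorem isGoodTuple_of_mem_goodTuples (hz : z ∈ goodTuples k P y) : IsGoodTuple z :=
  (Finset.mem_filter.mp hz).2

theorem mem_coprimeUpTo_of_mem_goodTuples (hz : z ∈ goodTuples k P y) (T : Finset (Fin k)) :
    z T ∈ coprimeUpTo P.factorial (regionBound y T) :=
  Fintype.mem_piFinset.mp (Finset.mem_filter.mp hz).1 T

theorem regionBound_le (hy : 0 < y) (T : Finset (Fin k)) : regionBound y T ≤ y := by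
  unfold regionBound
  split_ifs <;> lia

theorem le_of_mem_goodTuples (hy : 0 < y) (hz : z ∈ goodTuples k P y) (T : Finset (Fin k)) :
    z T ≤ y :=
  (mem_coprimeUpTo.mp (mem_coprimeUpTo_of_mem_goodTuples hz T)).1.2.trans (regionBound_le hy T)

theorem pos_of_mem_goodTuples (hz : z ∈ goodTuples k P y) (T : Finset (Fin k)) : 0 < z T :=
  (mem_coprimeUpTo.mp (mem_coprimeUpTo_of_mem_goodTuples hz T)).1.1

theorem eq_one_of_mem_goodTuples (hz : z ∈ goodTuples k P y) (T : Finset (Fin k))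
    (hT : 2 < T.card) : z T = 1 := by
  have hle := (mem_coprimeUpTo.mp (mem_coprimeUpTo_of_mem_goodTuples hz T)).1.2
  rw [regionBound, if_neg hT.not_ge] at hle
  exact le_antisymm hle (pos_of_mem_goodTuples hz T)

theorem prod_le_of_mem_goodTuples (hy : 0 < y) (hz : z ∈ goodTuples k P y) :
    ∏ T, z T ≤ y ^ 2 ^ k := by
  simpa using Finset.prod_le_pow_card Finset.univ z y fun T _ ↦ le_of_mem_goodTuples hy hz T

theorem vennProduct_mem_oddSquarefreeTuples (hP : 2 ≤ P) (hy : 0 < y)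
    (hz : z ∈ goodTuples k P y) : vennProduct z ∈ oddSquarefreeTuples k (y ^ 2 ^ k) := by
  have hodd (T : Finset (Fin k)) : Odd (z T) :=
    Nat.coprime_two_right.mp <|
      (mem_coprimeUpTo.mp (mem_coprimeUpTo_of_mem_goodTuples hz T)).2.coprime_dvd_right <|
        Nat.dvd_factorial two_pos hP
  refine Fintype.mem_piFinset.mpr fun i ↦ mem_oddSquarefree.mpr ⟨⟨?_, ?_⟩, ?_, ?_⟩
  · exact Finset.prod_pos fun T _ ↦ pos_of_mem_goodTuples hz T
  · simpa using vennProduct_le hy (le_of_mem_goodTuples hy hz) i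
  · exact Finset.prod_induction _ Odd (fun _ _ ↦ Odd.mul) odd_one fun T _ ↦ hodd T
  · exact squarefree_vennProduct (isGoodTuple_of_mem_goodTuples hz) i

theorem rpow_mul_rpow_eq_prod_inv (hz : z ∈ goodTuples k P y) :
    ((∏ i, vennProduct z i : ℕ) : ℝ) ^ (-(1 / 2) : ℝ) * (vennCofactor z : ℝ) ^ (-(1 / 2) : ℝ) =
      ∏ T, (z T : ℝ)⁻¹ := by
  rw [← Real.mul_rpow (by positivity) (by positivity), mul_comm, ← Nat.cast_mul,
    vennCofactor_mul_prod_vennProduct (eq_one_of_mem_goodTuples hz), Nat.cast_pow,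
    ← Real.rpow_natCast, ← Real.rpow_mul (by positivity), Finset.prod_inv_distrib, ← Nat.cast_prod]
  norm_num [Real.rpow_neg_one]

theorem card_filter_card_le_two (k : ℕ) :
    {T : Finset (Fin k) | T.card ≤ 2}.toFinset.card = 1 + k + k.choose 2 := by
  have hunion : {T : Finset (Fin k) | T.card ≤ 2}.toFinset =
      (Finset.range 3).biUnion fun r ↦ Finset.univ.powersetCard r := by
    ext T
    simp
    lia
  rw [hunion, Finset.card_biUnion fun a _ b _ h ↦ Finset.pairwise_disjoint_powersetCard _ h]
  simp [Finset.sum_range_succ]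

theorem prod_sum_coprimeUpTo_inv (k M y : ℕ) :
    ∏ T : Finset (Fin k), ∑ a ∈ coprimeUpTo M (regionBound y T), (a : ℝ)⁻¹ =
      (∑ a ∈ coprimeUpTo M y, (a : ℝ)⁻¹) ^ (1 + k + k.choose 2) := by
  have hone : coprimeUpTo M 1 = {1} := by
    ext a
    rw [mem_coprimeUpTo, Finset.mem_singleton]
    exact ⟨fun h ↦ le_antisymm h.1.2 h.1.1, by rintro rfl; simp⟩
  have hregion (T : Finset (Fin k)) : ∑ a ∈ coprimeUpTo M (regionBound y T), (a : ℝ)⁻¹ =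
      if T.card ≤ 2 then ∑ a ∈ coprimeUpTo M y, (a : ℝ)⁻¹ else 1 := by
    unfold regionBound
    split_ifs <;> simp [hone]
  simp_rw [hregion]
  rw [← Finset.prod_filter, Finset.prod_const, ← card_filter_card_le_two]
  simp

theorem exists_le_sum_goodTuples (k : ℕ) : ∃ P : ℕ, 2 ≤ P ∧ ∃ c : ℝ, 0 < c ∧
    ∀ y : ℕ, P.factorial ^ 2 ≤ y →
    c * Real.log y ^ (1 + k + k.choose 2) ≤ ∑ z ∈ goodTuples k P y, ∏ T, (z T : ℝ)⁻¹ := by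
  set r := Fintype.card (Finset (Fin k))
  have hr : 0 < r := Fintype.card_pos
  set P := 2 * (r ^ 2 + 4 * r) with hP
  have hhalf : 1 - ((r : ℝ) ^ 2 + 4 * r) / P = 1 / 2 := by
    rw [hP]
    push_cast
    field_simp
    norm_num
  refine ⟨P, by nlinarith, 1 / 2 * (1 / (2 * P.factorial : ℝ)) ^ (1 + k + k.choose 2),
    by positivity, fun y hy ↦ ?_⟩
  have hy0 : 0 < y := (by positivity : 0 < P.factorial ^ 2).trans_le hy
  have hmass : 1 / 2 * (∑ a ∈ coprimeUpTo P.factorial y, (a : ℝ)⁻¹) ^ (1 + k + k.choose 2) ≤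
      ∑ z ∈ goodTuples k P y, ∏ T, (z T : ℝ)⁻¹ := by
    rw [← hhalf, ← prod_sum_coprimeUpTo_inv]
    unfold goodTuples
    convert le_sum_isGoodTuple_prod_inv (P := P) (by nlinarith) (regionBound_le hy0)
  refine le_trans ?_ hmass
  rw [mul_assoc, ← mul_pow]
  gcongr
  rw [one_div_mul_eq_div]
  exact log_div_le_sum_coprimeUpTo_inv P.factorial_pos hy

theorem le_mul_twistedSum_of_mem_goodTuples : ∃ c : ℝ, 0 < c ∧
    ∀ {k P y J : ℕ} {z : Finset (Fin k) → ℕ}, 0 < y → z ∈ goodTuples k P y →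
    ((y ^ 2 ^ k : ℕ) : ℝ) ^ 4 + (y ^ 2 ^ k : ℕ) + Nat.sqrt (8 * J) ≤ J / 4 →
    c * J * ∏ T, (z T : ℝ)⁻¹ ≤ ((∏ i, vennProduct z i : ℕ) : ℝ) ^ (-(1 / 2) : ℝ) *
      twistedSum J (vennCofactor z) (∏ i, vennProduct z i) := by
  obtain ⟨c, hc, hdiagonal⟩ := le_twistedSum_of_mul_eq_sq
  refine ⟨c, hc, fun {k P y J z} hy hz hsize ↦ ?_⟩
  have hcofactor : (vennCofactor z : ℝ) ≤ ((y ^ 2 ^ k : ℕ) : ℝ) ^ 2 := by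
    exact_mod_cast (vennCofactor_le hy (le_of_mem_goodTuples hy hz)).trans_eq (by simp)
  have hprod : ((∏ T, z T : ℕ) : ℝ) ≤ (y ^ 2 ^ k : ℕ) := by
    exact_mod_cast prod_le_of_mem_goodTuples hy hz
  have hpos : 0 < vennCofactor z :=
    Finset.prod_pos fun T _ ↦ pow_pos (pos_of_mem_goodTuples hz T) _
  have hcofactor_sq : (vennCofactor z : ℝ) ^ 2 ≤ ((y ^ 2 ^ k : ℕ) : ℝ) ^ 4 :=
    (pow_le_pow_left₀ (by positivity) hcofactor 2).trans_eq (by ring)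
  have hle := hdiagonal _ _ _ J hpos
    (vennCofactor_mul_prod_vennProduct (eq_one_of_mem_goodTuples hz))
    (isGoodTuple_of_mem_goodTuples hz).sum_inv_le
    (Finset.prod_ne_zero_iff.mpr fun T _ ↦ (pos_of_mem_goodTuples hz T).ne') (by linarith)
  rw [← rpow_mul_rpow_eq_prod_inv hz, mul_left_comm]
  exact mul_le_mul_of_nonneg_left hle (by positivity)

theorem exists_le_sum_centralSeries_mul_truncatedSum_pow (k : ℕ) :
    ∃ c C : ℝ, 0 < c ∧ 0 < C ∧ ∃ M : ℕ, 0 < M ∧ ∀ y J : ℕ, M ≤ y → 0 < J →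
    ((y ^ 2 ^ k : ℕ) : ℝ) ^ 4 + (y ^ 2 ^ k : ℕ) + Nat.sqrt (8 * J) ≤ J / 4 →
    c * J * Real.log y ^ (1 + k + k.choose 2) -
        C * (J : ℝ) ^ (99 / 100 : ℝ) * ((y ^ 2 ^ k : ℕ) : ℝ) ^ k ≤
      ∑ j ∈ squarefreeIndices J,
        centralSeries (1 + 8 * j) * truncatedSum (y ^ 2 ^ k) (1 + 8 * j) ^ k := by
  obtain ⟨c, hc, hterm⟩ := le_mul_twistedSum_of_mem_goodTuples
  obtain ⟨C, hC, hselect⟩ := exists_sum_twistedSum_le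
  obtain ⟨P, hP, c', hc', hmass⟩ := exists_le_sum_goodTuples k
  refine ⟨c * c', C, by positivity, hC, P.factorial ^ 2, by positivity,
    fun y J hy hJ hsize ↦ ?_⟩
  have hy0 : 0 < y := (by positivity : 0 < P.factorial ^ 2).trans_le hy
  set encode : (Finset (Fin k) → ℕ) → ℕ × (Fin k → ℕ) := fun z ↦ (vennCofactor z, vennProduct z)
  have hinj : Set.InjOn encode (goodTuples k P y) := fun z hz z' hz' h ↦
    eq_of_vennCofactor_eq_of_vennProduct_eq (isGoodTuple_of_mem_goodTuples hz)
      (isGoodTuple_of_mem_goodTuples hz') (Prod.ext_iff.mp h).1 (Prod.ext_iff.mp h).2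
  have hmem : ∀ q ∈ (goodTuples k P y).image encode, q.2 ∈ oddSquarefreeTuples k (y ^ 2 ^ k) := by
    intro q hq
    obtain ⟨z, hz, rfl⟩ := Finset.mem_image.mp hq
    exact vennProduct_mem_oddSquarefreeTuples hP hy0 hz
  have hupper := hselect k (y ^ 2 ^ k) J hJ _ hmem
  rw [Finset.sum_image hinj] at hupper
  rw [sub_le_iff_le_add]
  calc c * c' * J * Real.log y ^ (1 + k + k.choose 2)
      = c * J * (c' * Real.log y ^ (1 + k + k.choose 2)) := by ring
    _ ≤ c * J * ∑ z ∈ goodTuples k P y, ∏ T, (z T : ℝ)⁻¹ := by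
        gcongr
        exact hmass y hy
    _ ≤ _ := by
        rw [Finset.mul_sum]
        exact Finset.sum_le_sum fun z hz ↦ hterm hy0 hz hsize
    _ ≤ _ := hupper

end GoodTuples

section Holder

variable {k : ℕ}

theorem mul_pow_sub_mul_pow_le_pow (hk : Even (k + 1)) (a b : ℝ) :
    (k + 1) * (a * b ^ k) - k * b ^ (k + 1) ≤ a ^ (k + 1) := by
  rcases eq_or_ne b 0 with rfl | hb
  · have hk0 : k ≠ 0 := by
      rintro rfl
      simp at hk
    simpa [hk0] using hk.pow_nonneg a
  have hle : |a| ^ (k + 1) = a ^ (k + 1) ∧ |b| ^ (k + 1) = b ^ (k + 1) :=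
    ⟨hk.pow_abs a, hk.pow_abs b⟩
  have hb' : 0 < |b| := abs_pos.mpr hb
  have hbernoulli := one_add_mul_le_pow (a := |a| / |b| - 1)
    (by linarith [div_nonneg (abs_nonneg a) hb'.le]) (k + 1)
  rw [add_sub_cancel, div_pow, le_div_iff₀ (by positivity), hle.1] at hbernoulli
  calc (k + 1) * (a * b ^ k) - k * b ^ (k + 1)
      ≤ (k + 1) * (|a| * |b| ^ k) - k * |b| ^ (k + 1) := by
        rw [hle.2, ← abs_pow, ← abs_mul]
        gcongr
        exact le_abs_self _
    _ = (1 + ((k + 1 : ℕ) : ℝ) * (|a| / |b| - 1)) * |b| ^ (k + 1) := by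
        push_cast
        field_simp
        ring
    _ ≤ a ^ (k + 1) := hbernoulli

theorem mul_div_pow_le_sum_pow {ι : Type*} {s : Finset ι} {F A : ι → ℝ} {u v : ℝ}
    (hk : Even (k + 1)) (hu : 0 < u) (hv : 0 < v) (hFA : u ≤ ∑ j ∈ s, F j * A j ^ k)
    (hA : ∑ j ∈ s, A j ^ (k + 1) ≤ v) : u * (u / v) ^ k ≤ ∑ j ∈ s, F j ^ (k + 1) := by
  set t := u / v
  have : 0 < t := by positivity
  calc u * t ^ k
      = t ^ k * ((k + 1) * u - k * t * v) := by
        rw [mul_assoc, div_mul_cancel₀ u hv.ne']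
        ring
    _ ≤ t ^ k * ((k + 1) * ∑ j ∈ s, F j * A j ^ k - k * t * ∑ j ∈ s, A j ^ (k + 1)) := by
        gcongr
    _ = ∑ j ∈ s, ((k + 1) * (F j * (t * A j) ^ k) - k * (t * A j) ^ (k + 1)) := by
        rw [Finset.mul_sum, Finset.mul_sum, ← Finset.sum_sub_distrib, Finset.mul_sum]
        refine Finset.sum_congr rfl fun j _ ↦ ?_
        ring
    _ ≤ _ := Finset.sum_le_sum fun j _ ↦ mul_pow_sub_mul_pow_le_pow hk _ _

end Holder

section TruncationLength

variable {J x y Q : ℕ}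

theorem exists_pow_le_and_log_le {M : ℕ} (hQ : Q ≠ 0) (hM : 2 ≤ M) (hJ : M ^ Q ≤ J) :
    ∃ y, M ≤ y ∧ y ^ Q ≤ J ∧ Real.log J ≤ 2 * Q * Real.log y := by
  set y := Nat.findGreatest (fun y ↦ y ^ Q ≤ J) J
  have hMJ : M ≤ J := (Nat.le_self_pow hQ M).trans hJ
  have hMy : M ≤ y := Nat.le_findGreatest hMJ hJ
  have hyJ : y ^ Q ≤ J := Nat.findGreatest_spec (P := fun y ↦ y ^ Q ≤ J) hMJ hJ
  have hlt : J < (y + 1) ^ Q := by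
    by_contra! hle
    exact (Nat.le_findGreatest ((Nat.le_self_pow hQ _).trans hle) hle).not_gt y.lt_succ_self
  have hJy : J ≤ y ^ (2 * Q) := by
    rw [pow_mul]
    exact hlt.le.trans (Nat.pow_le_pow_left (by nlinarith) Q)
  refine ⟨y, hMy, hyJ, ?_⟩
  have hJ0 : 0 < J := by lia
  calc Real.log J ≤ Real.log ((y : ℝ) ^ (2 * Q)) :=
        Real.log_le_log (by exact_mod_cast hJ0) (by exact_mod_cast hJy)
    _ = 2 * Q * Real.log y := by
        rw [Real.log_pow]
        push_cast
        rfl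

theorem pow_le_rpow_of_pow_le {m : ℕ} {θ : ℝ} (hx : 0 < x) (hxJ : x ^ Q ≤ J)
    (hm : (m : ℝ) = θ * Q) (hθ : 0 ≤ θ) : (x : ℝ) ^ m ≤ (J : ℝ) ^ θ := by
  have hxJ' : (x : ℝ) ^ Q ≤ J := by exact_mod_cast hxJ
  calc (x : ℝ) ^ m = ((x : ℝ) ^ Q) ^ θ := by
        rw [← Real.rpow_natCast, hm, mul_comm, Real.rpow_mul (by positivity), Real.rpow_natCast]
    _ ≤ (J : ℝ) ^ θ := by gcongr

theorem pow_four_add_self_add_sqrt_le (hJ : 400 ≤ J) (hx : 0 < x) (hxJ : x ^ 8 ≤ J) :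
    (x : ℝ) ^ 4 + x + Nat.sqrt (8 * J) ≤ J / 4 := by
  have hJ' : (400 : ℝ) ≤ J := by exact_mod_cast hJ
  have hx' : (1 : ℝ) ≤ x := by exact_mod_cast hx
  have hx8 : ((x : ℝ) ^ 4) ^ 2 ≤ J := by exact_mod_cast (pow_mul x 4 2).symm.trans_le hxJ
  have hx4 : (x : ℝ) ^ 4 ≤ √J := Real.le_sqrt_of_sq_le hx8
  have hx1 : (x : ℝ) ≤ x ^ 4 := le_self_pow₀ hx' (by norm_num)
  have hsqrt : (Nat.sqrt (8 * J) : ℝ) ≤ 3 * √J := by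
    refine Real.nat_sqrt_le_real_sqrt.trans ?_
    rw [Real.sqrt_le_left (by positivity), mul_pow, Real.sq_sqrt (by positivity)]
    push_cast
    linarith
  have h20 : 20 ≤ √(J : ℝ) := Real.le_sqrt_of_sq_le (by linarith)
  nlinarith [Real.sq_sqrt (by positivity : (0 : ℝ) ≤ J)]

theorem eventually_rpow_mul_pow_le (C : ℝ) {ε : ℝ} (hε : 0 < ε) (k : ℕ) :
    ∀ᶠ J : ℕ in atTop, ∀ x : ℕ, 0 < x → x ^ (200 * (k + 1)) ≤ J →
      C * (J : ℝ) ^ (99 / 100 : ℝ) * (x : ℝ) ^ k ≤ ε * J := by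
  have hlarge : ∀ᶠ J : ℕ in atTop, |C| / ε ≤ (J : ℝ) ^ (1 / 200 : ℝ) :=
    ((tendsto_rpow_atTop (by norm_num)).comp tendsto_natCast_atTop_atTop).eventually_ge_atTop _
  filter_upwards [hlarge, eventually_gt_atTop 0] with J hC hJ x hx hxJ
  rw [div_le_iff₀' hε] at hC
  have hJ' : (0 : ℝ) < J := by exact_mod_cast hJ
  have hxk : (x : ℝ) ^ k ≤ (J : ℝ) ^ (1 / 200 : ℝ) := by
    have hx' : (1 : ℝ) ≤ x := by exact_mod_cast hx
    refine (pow_le_pow_right₀ hx' k.le_succ).trans ?_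
    refine pow_le_rpow_of_pow_le hx hxJ ?_ (by norm_num)
    push_cast
    ring
  calc C * (J : ℝ) ^ (99 / 100 : ℝ) * (x : ℝ) ^ k
      ≤ ε * (J : ℝ) ^ (1 / 200 : ℝ) * (J : ℝ) ^ (99 / 100 : ℝ) * (J : ℝ) ^ (1 / 200 : ℝ) := by
        gcongr
        exact (le_abs_self C).trans hC
    _ = ε * J := by
        rw [mul_assoc ε, mul_assoc ε, ← Real.rpow_add hJ', ← Real.rpow_add hJ']
        norm_num

end TruncationLength

section Moments

variable {k : ℕ}

theorem exists_mul_log_pow_le_sum_centralSeries_mul_truncatedSum_pow (k : ℕ) :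
    ∃ c : ℝ, 0 < c ∧ ∃ M : ℕ, ∀ᶠ J : ℕ in atTop, ∀ y : ℕ, M ≤ y → 1 ≤ Real.log y →
      (y ^ 2 ^ k) ^ (200 * (k + 1)) ≤ J →
      c * J * Real.log y ^ (1 + k + k.choose 2) ≤ ∑ j ∈ squarefreeIndices J,
        centralSeries (1 + 8 * j) * truncatedSum (y ^ 2 ^ k) (1 + 8 * j) ^ k := by
  obtain ⟨c, C, hc, -, M, hM, hlower⟩ := exists_le_sum_centralSeries_mul_truncatedSum_pow k
  refine ⟨c / 2, by positivity, M, ?_⟩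
  filter_upwards [eventually_rpow_mul_pow_le C (half_pos hc) k, eventually_ge_atTop 400]
    with J hC hJ y hy hlog hyJ
  have hx : 0 < y ^ 2 ^ k := pow_pos (hM.trans_le hy) _
  have hsize := pow_four_add_self_add_sqrt_le hJ hx
    ((Nat.pow_le_pow_right hx (by lia)).trans hyJ)
  have herror : C * (J : ℝ) ^ (99 / 100 : ℝ) * ((y ^ 2 ^ k : ℕ) : ℝ) ^ k ≤
      c / 2 * J * Real.log y ^ (1 + k + k.choose 2) :=
    (hC _ hx hyJ).trans (le_mul_of_one_le_right (by positivity) (one_le_pow₀ hlog))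
  linarith [hlower y J hy (by lia) hsize]

theorem exists_sum_truncatedSum_pow_le_mul_log_pow (hk : Even k) (N : ℕ) :
    ∃ C : ℝ, 0 < C ∧ ∀ y J : ℕ, 1 ≤ Real.log y → (y ^ N) ^ (2 * k) ≤ J →
      ∑ j ∈ squarefreeIndices J, truncatedSum (y ^ N) (1 + 8 * j) ^ k ≤
        C * J * Real.log y ^ k.choose 2 := by
  refine ⟨2 ^ 2 ^ k * (1 + N) ^ k.choose 2 + 9, by positivity, fun y J hlog hyJ ↦ ?_⟩
  have hlog_pow : 1 + Real.log (y ^ N : ℕ) ≤ (1 + N) * Real.log y := by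
    rw [Nat.cast_pow, Real.log_pow]
    linarith
  have : 0 ≤ 1 + Real.log (y ^ N : ℕ) := by
    linarith [Real.log_natCast_nonneg (y ^ N)]
  calc ∑ j ∈ squarefreeIndices J, truncatedSum (y ^ N) (1 + 8 * j) ^ k
      ≤ ∑ j ∈ Finset.range J, truncatedSum (y ^ N) (1 + 8 * j) ^ k :=
        Finset.sum_le_sum_of_subset_of_nonneg (Finset.filter_subset _ _)
          fun j _ _ ↦ hk.pow_nonneg _
    _ ≤ J * (2 ^ 2 ^ k * (1 + Real.log (y ^ N : ℕ)) ^ k.choose 2) +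
          9 * ((y ^ N : ℕ) : ℝ) ^ (2 * k) := sum_truncatedSum_pow_le k (y ^ N) J
    _ ≤ J * (2 ^ 2 ^ k * ((1 + N) * Real.log y) ^ k.choose 2) +
          9 * (J * Real.log y ^ k.choose 2) := by
        gcongr
        calc ((y ^ N : ℕ) : ℝ) ^ (2 * k) ≤ J := by exact_mod_cast hyJ
          _ ≤ J * Real.log y ^ k.choose 2 :=
            le_mul_of_one_le_right (by positivity) (one_le_pow₀ hlog)
    _ = (2 ^ 2 ^ k * (1 + N) ^ k.choose 2 + 9) * J * Real.log y ^ k.choose 2 := by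
        rw [mul_pow]
        ring

theorem one_add_add_choose_two (k : ℕ) : 1 + k + k.choose 2 = (k + 1).choose 2 + 1 := by
  rw [Nat.choose_succ_succ' k 1, Nat.choose_one_right]
  ring

theorem choose_two_add_one_add (k : ℕ) :
    (k + 1).choose 2 + 1 + k = (k + 1) * (k + 1 + 1) / 2 := by
  have hchoose := Nat.choose_two_right (k + 1 + 1)
  rw [Nat.choose_succ_succ' (k + 1) 1, Nat.choose_one_right, Nat.add_sub_cancel,
    mul_comm] at hchoose
  lia

theorem exists_mul_log_pow_le_sum_centralSeries_pow (hk : Even (k + 1)) :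
    ∃ c : ℝ, 0 < c ∧ ∀ᶠ J : ℕ in atTop, c * J * Real.log J ^ ((k + 1) * (k + 1 + 1) / 2) ≤
      ∑ j ∈ squarefreeIndices J, centralSeries (1 + 8 * j) ^ (k + 1) := by
  obtain ⟨c, hc, M, hlower⟩ := exists_mul_log_pow_le_sum_centralSeries_mul_truncatedSum_pow k
  obtain ⟨C, hC, hupper⟩ := exists_sum_truncatedSum_pow_le_mul_log_pow hk (2 ^ k)
  set e := (k + 1).choose 2
  set Q := 2 ^ k * (200 * (k + 1))
  refine ⟨c * (c / C) ^ k * (1 / (2 * Q)) ^ (e + 1 + k), by positivity, ?_⟩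
  filter_upwards [hlower, eventually_ge_atTop ((M + 3) ^ Q)] with J hlower hJ
  obtain ⟨y, hy, hyJ, hlogJ⟩ := exists_pow_le_and_log_le (by positivity) (by lia) hJ
  rw [pow_mul] at hyJ
  have hy3 : (3 : ℝ) ≤ y := by exact_mod_cast (by lia : 3 ≤ y)
  have hlog : 1 ≤ Real.log y := by
    rw [Real.le_log_iff_exp_le (by linarith)]
    linarith [Real.exp_one_lt_d9]
  have hJ0 : (0 : ℝ) < J := by
    exact_mod_cast (by positivity : 0 < (M + 3) ^ Q).trans_le hJ
  have hyJ' : (y ^ 2 ^ k) ^ (2 * (k + 1)) ≤ J :=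
    (Nat.pow_le_pow_right (pow_pos (by lia) _) (by lia)).trans hyJ
  have hlower_y := hlower y (by lia) hlog hyJ
  rw [one_add_add_choose_two] at hlower_y
  have hholder := mul_div_pow_le_sum_pow hk (by positivity) (by positivity) hlower_y
    (hupper y J hlog hyJ')
  have hratio : c * J * Real.log y ^ (e + 1) / (C * J * Real.log y ^ e) = c / C * Real.log y := by
    rw [pow_succ]
    field_simp
  rw [← choose_two_add_one_add]
  calc c * (c / C) ^ k * (1 / (2 * Q)) ^ (e + 1 + k) * J * Real.log J ^ (e + 1 + k)
      = c * (c / C) ^ k * J * (Real.log J / (2 * Q)) ^ (e + 1 + k) := by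
        rw [div_eq_mul_one_div (Real.log J), mul_pow]
        ring
    _ ≤ c * (c / C) ^ k * J * Real.log y ^ (e + 1 + k) := by
        gcongr
        rwa [div_le_iff₀' (by positivity)]
    _ = c * J * Real.log y ^ (e + 1) *
          (c * J * Real.log y ^ (e + 1) / (C * J * Real.log y ^ e)) ^ k := by
        rw [hratio]
        ring
    _ ≤ _ := hholder

end Moments

section CentralValues

open scoped ComplexConjugate

variable {N : ℕ} [NeZero N] {χ : DirichletCharacter ℂ N}

theorem conj_LFunction_of_one_lt_re (χ : DirichletCharacter ℂ N) {s : ℂ} (hs : 1 < s.re) :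
    conj (χ.LFunction (conj s)) = χ⁻¹.LFunction s := by
  rw [DirichletCharacter.LFunction_eq_LSeries _ (by simpa using hs),
    DirichletCharacter.LFunction_eq_LSeries _ hs, LSeries, LSeries, Complex.conj_tsum]
  refine tsum_congr fun n ↦ ?_
  rw [LSeries.term_def, LSeries.term_def]
  split_ifs with hn
  · simp
  · rw [map_div₀, Complex.cpow_conj _ _ (by simpa using Real.pi_pos.ne), ← MulChar.star_apply']
    simp

theorem conj_LFunction (hχ : χ ≠ 1) (s : ℂ) :
    conj (χ.LFunction (conj s)) = χ⁻¹.LFunction s := by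
  have hdiff : Differentiable ℂ fun s ↦ conj (χ.LFunction (conj s)) := fun s ↦ by
    rw [← Complex.conj_conj s]
    exact (DirichletCharacter.differentiable_LFunction hχ _).conj_conj
  have hdiff_inv : Differentiable ℂ χ⁻¹.LFunction :=
    DirichletCharacter.differentiable_LFunction (inv_ne_one.mpr hχ)
  have heventually : (fun s ↦ conj (χ.LFunction (conj s))) =ᶠ[nhds 2] χ⁻¹.LFunction := by
    filter_upwards [(isOpen_lt continuous_const Complex.continuous_re).mem_nhds
      (by norm_num : (1 : ℝ) < (2 : ℂ).re)] with s hs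
    exact conj_LFunction_of_one_lt_re χ hs
  exact congrFun (AnalyticOnNhd.eq_of_eventuallyEq
    (Complex.analyticOnNhd_univ_iff_differentiable.mpr hdiff)
    (Complex.analyticOnNhd_univ_iff_differentiable.mpr hdiff_inv) heventually) s

theorem exists_LFunction_ofReal_eq_ofReal (hχ : χ ≠ 1) (hχ2 : χ ^ 2 = 1) (x : ℝ) :
    ∃ v : ℝ, χ.LFunction x = v := by
  refine Complex.conj_eq_iff_real.mp ?_
  have hinv : χ⁻¹ = χ := by rw [inv_eq_iff_mul_eq_one, ← sq, hχ2]
  simpa [hinv] using conj_LFunction hχ x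

theorem re_LFunction_one_half_pow_nonneg {k : ℕ} (hχ : χ ≠ 1) (hχ2 : χ ^ 2 = 1) (hk : Even k) :
    0 ≤ (χ.LFunction (1 / 2) ^ k).re := by
  obtain ⟨v, hv⟩ := exists_LFunction_ofReal_eq_ofReal hχ hχ2 (1 / 2)
  have hv' : χ.LFunction (1 / 2) = v := by simpa using hv
  rw [hv', ← Complex.ofReal_pow, Complex.ofReal_re]
  exact hk.pow_nonneg v

theorem exists_LFunction_one_half_eq_mul_centralSeries : ∃ b : ℝ, 0 < b ∧
    ∀ (N : ℕ) [NeZero N] (χ : DirichletCharacter ℂ N), N % 4 = 1 → Squarefree N → 1 < N →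
      χ.IsPrimitive → χ ^ 2 = 1 → χ.LFunction (1 / 2) = ((b * centralSeries N : ℝ) : ℂ) := by
  refine ⟨2 / (Real.pi ^ (-(1 / 4) : ℝ) * Real.Gamma (1 / 4)), ?_,
    fun N _ χ hN4 hN hN1 hχ hχ2 ↦ ?_⟩
  · have := Real.Gamma_pos_of_pos (by norm_num : (0 : ℝ) < 1 / 4)
    positivity
  · have hodd : Odd N := Nat.odd_iff.mpr (by lia)
    rw [eq_of_isPrimitive_of_sq_eq_one hN hχ (jacobiChar_isPrimitive hodd hN) hχ2
      (jacobiChar_sq N), LFunction_jacobiChar_one_half hN4 hN hN1, centralSeries]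

end CentralValues

section FundamentalDiscriminants

theorem one_lt_natAbs_of_isFundamentalDiscriminant {d : ℤ} (hd : IsFundamentalDiscriminant d) :
    1 < d.natAbs := by
  obtain ⟨hne, ⟨hmod, -⟩ | ⟨hmod, -, hmod'⟩⟩ := hd <;> lia

theorem mem_squarefreeIndices_erase_zero {J j : ℕ} :
    j ∈ (squarefreeIndices J).erase 0 ↔ 0 < j ∧ j < J ∧ Squarefree (1 + 8 * j) := by
  simp [squarefreeIndices, Nat.pos_iff_ne_zero]

theorem isFundamentalDiscriminant_one_add_eight_mul {j : ℕ} (hj : 0 < j)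
    (hsq : Squarefree (1 + 8 * j)) : IsFundamentalDiscriminant (1 + 8 * j : ℕ) :=
  ⟨by lia, Or.inl ⟨by lia, Int.squarefree_natCast.mpr hsq⟩⟩

theorem sum_squarefreeIndices_erase_zero_le_sum_Icc {f : ℤ → ℝ} (hf : ∀ d, 0 ≤ f d) (X : ℕ) :
    ∑ j ∈ (squarefreeIndices (X / 8)).erase 0, f (1 + 8 * j : ℕ) ≤
      ∑ d ∈ Finset.Icc (-(X : ℤ)) X, f d := by
  have hinj : Set.InjOn (fun j : ℕ ↦ ((1 + 8 * j : ℕ) : ℤ))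
      ((squarefreeIndices (X / 8)).erase 0) := fun a _ b _ hab ↦ by
    simp only at hab
    lia
  rw [← Finset.sum_image hinj]
  refine Finset.sum_le_sum_of_subset_of_nonneg (Finset.image_subset_iff.mpr fun j hj ↦ ?_)
    fun d _ _ ↦ hf d
  rw [Finset.mem_Icc]
  have := (mem_squarefreeIndices_erase_zero.mp hj).2.1
  lia

end FundamentalDiscriminants

section Asymptotics

variable {c : ℝ}

theorem eventually_le_mul_log_pow (hc : 0 < c) (e : ℕ) (B : ℝ) :
    ∀ᶠ J : ℕ in atTop, B ≤ c * J * Real.log J ^ e := by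
  have hlinear : Tendsto (fun J : ℕ ↦ c * J) atTop atTop :=
    tendsto_natCast_atTop_atTop.const_mul_atTop hc
  have hlog : Tendsto (fun J : ℕ ↦ Real.log J) atTop atTop :=
    Real.tendsto_log_atTop.comp tendsto_natCast_atTop_atTop
  filter_upwards [hlinear.eventually_ge_atTop B, hlog.eventually_ge_atTop 1] with J hB hJ
  exact hB.trans (le_mul_of_one_le_right (by positivity) (one_le_pow₀ hJ))

theorem exists_mul_log_pow_le_comp_div {f : ℕ → ℝ} {e m : ℕ} (hc : 0 < c) (hm : 0 < m)
    (hf : ∀ᶠ J : ℕ in atTop, c * J * Real.log J ^ e ≤ f J) :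
    ∃ c' : ℝ, 0 < c' ∧ ∀ᶠ X : ℕ in atTop, c' * X * Real.log X ^ e ≤ f (X / m) := by
  refine ⟨c / (2 * m) * (1 / 2) ^ e, by positivity, ?_⟩
  filter_upwards [(Nat.tendsto_div_const_atTop hm.ne').eventually hf,
    eventually_ge_atTop (4 * m ^ 2)] with X hX hmX
  have hX0 : 0 < X := (by positivity : 0 < 4 * m ^ 2).trans_le hmX
  have hdiv : (X : ℝ) / (2 * m) ≤ (X / m : ℕ) := by
    rw [div_le_iff₀ (by positivity)]
    have hlt : X < m * (X / m + 1) := Nat.lt_mul_div_succ X hm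
    have : 1 ≤ X / m := (Nat.one_le_div_iff hm).mpr (by nlinarith)
    exact_mod_cast (by nlinarith : X ≤ X / m * (2 * m))
  have hlog : 1 / 2 * Real.log X ≤ Real.log (X / m : ℕ) := by
    rw [← Real.log_rpow (by positivity), ← Real.sqrt_eq_rpow]
    refine Real.log_le_log (by positivity) (le_trans ?_ hdiv)
    have hmX' : (4 : ℝ) * m ^ 2 ≤ X := by exact_mod_cast hmX
    rw [Real.sqrt_le_left (by positivity), div_pow, le_div_iff₀ (by positivity)]
    nlinarith [(by positivity : (0 : ℝ) < X)]
  calc c / (2 * m) * (1 / 2) ^ e * X * Real.log X ^ e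
      = c * (X / (2 * m)) * (1 / 2 * Real.log X) ^ e := by
        rw [mul_pow]
        ring
    _ ≤ c * (X / m : ℕ) * Real.log (X / m : ℕ) ^ e := by
        gcongr
    _ ≤ f (X / m) := hX

theorem exists_mul_log_pow_le_sum_erase_centralSeries_pow {k : ℕ} (hk : Even k) (hk0 : 0 < k) :
    ∃ c : ℝ, 0 < c ∧ ∀ᶠ X : ℕ in atTop, c * X * Real.log X ^ (k * (k + 1) / 2) ≤
      ∑ j ∈ (squarefreeIndices (X / 8)).erase 0, centralSeries (1 + 8 * j) ^ k := by
  obtain ⟨k, rfl⟩ := Nat.exists_eq_add_one_of_ne_zero hk0.ne'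
  obtain ⟨c, hc, hmoment⟩ := exists_mul_log_pow_le_sum_centralSeries_pow hk
  refine exists_mul_log_pow_le_comp_div (half_pos hc) (m := 8) (by norm_num)
    (f := fun J ↦ ∑ j ∈ (squarefreeIndices J).erase 0, centralSeries (1 + 8 * j) ^ (k + 1)) ?_
  filter_upwards [hmoment, eventually_le_mul_log_pow (half_pos hc)
    ((k + 1) * (k + 1 + 1) / 2) (centralSeries (1 + 8 * 0) ^ (k + 1)), eventually_gt_atTop 0]
    with J hmoment hone hJ
  have hzero : 0 ∈ squarefreeIndices J := by simp [squarefreeIndices, hJ]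
  rw [← Finset.add_sum_erase _ _ hzero] at hmoment
  linarith

end Asymptotics

end SymplecticMoments

open SymplecticMoments

/-- Theorem 2: for every even natural number `k`,
`∑'_{|d| ≤ X} L(1/2, χ_d)^k ≫_k X (log X)^{k(k+1)/2}`, the sum being over fundamental
discriminants `d` with `|d| ≤ X`, where `χ_d` is the real primitive quadratic
character modulo `|d|` attached to `d` (the unique primitive quadratic character
modulo `|d|` with `χ_d(-1) = sign d`). -/
theorem lower_bound_symplectic_moments
    (k : ℕ) (hk : Even k) (hk0 : 0 < k)
    (χ : (d : ℤ) → DirichletCharacter ℂ d.natAbs)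
    (hχ : ∀ d : ℤ, IsFundamentalDiscriminant d →
      (χ d).IsPrimitive ∧ (χ d) ^ 2 = 1 ∧
        (χ d) (-1) = (if 0 < d then 1 else -1)) :
    ∃ c : ℝ, 0 < c ∧ ∃ X₀ : ℕ, ∀ X : ℕ, X₀ ≤ X →
      c * X * Real.log X ^ (k * (k + 1) / 2) ≤
        (∑ d ∈ Finset.Icc (-(X : ℤ)) (X : ℤ),
          if h : IsFundamentalDiscriminant d then
            (@DirichletCharacter.LFunction d.natAbs h.natAbs_ne_zero
              (χ d) (1 / 2)) ^ k
          else 0).re := by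
  obtain ⟨b, hb, hcentral⟩ := exists_LFunction_one_half_eq_mul_centralSeries
  obtain ⟨c, hc, hmoment⟩ := exists_mul_log_pow_le_sum_erase_centralSeries_pow hk hk0
  obtain ⟨X₀, hX₀⟩ := eventually_atTop.mp hmoment
  refine ⟨b ^ k * c, by positivity, X₀, fun X hX ↦ ?_⟩
  rw [Complex.re_sum, mul_assoc, mul_assoc, ← mul_assoc c]
  refine (mul_le_mul_of_nonneg_left (hX₀ X hX) (by positivity)).trans ?_
  rw [Finset.mul_sum]
  refine le_trans (Finset.sum_le_sum fun j hj ↦ ?_)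
    (sum_squarefreeIndices_erase_zero_le_sum_Icc (fun d ↦ ?_) X)
  · obtain ⟨hj0, -, hsq⟩ := mem_squarefreeIndices_erase_zero.mp hj
    have hfund := isFundamentalDiscriminant_one_add_eight_mul hj0 hsq
    obtain ⟨hprim, hquad, -⟩ := hχ _ hfund
    have := hfund.natAbs_ne_zero
    rw [dif_pos hfund, hcentral (1 + 8 * j : ℕ) (χ (1 + 8 * j : ℕ)) (by lia) hsq (by lia) hprim
      hquad, ← Complex.ofReal_pow, Complex.ofReal_re, mul_pow]
  · split_ifs with hd
    · have := hd.natAbs_ne_zero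
      exact re_LFunction_one_half_pow_nonneg (ne_one_of_isPrimitive (hχ d hd).1
        (one_lt_natAbs_of_isFundamentalDiscriminant hd)) (hχ d hd).2.1 hk
    · simp
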